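/- Let ρ be a quasi-periodic labelling and let G_ρ be the associated group. Then G_ρ has vanishing second bounded cohomology with trivial integral coefficients: every bounded 2-cocycle ω : G_ρ × G_ρ → ℤ is the coboundary of a bounded function φ : G_ρ → ℤ. -/

import Mathlib

/-! ### Letters, labellings and quasi-periodicity -/

/-- The four letters `a, b, a⁻¹, b⁻¹`. -/
inductive Letter : Type
  | a : Letter
  | b : Letter
  | A : Letter  -- `a⁻¹`
  | B : Letter  -- `b⁻¹`
  deriving DecidableEq

/-- The formal inverse of a letter. -/
def Letter.inv : Letter → Letter
  | .a => .A
  | .A => .a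
  | .b => .B
  | .B => .b

/-- We encode the set of half-integers `½ℤ` by `ℤ` via `m ↦ m / 2`; integer points
correspond to even indices and proper half-integer points to odd indices.
A labelling assigns `a^{±1}` to integer points and `b^{±1}` to half-integer points. -/
def IsLabelling (ρ : ℤ → Letter) : Prop :=
  ∀ m : ℤ, (Even m → ρ m = Letter.a ∨ ρ m = Letter.A) ∧
    (Odd m → ρ m = Letter.b ∨ ρ m = Letter.B)

/-- The word of the labelling `ρ` along the block `{k, k+1, …, k+n}` (in the
half-integer encoding, the block of size `n+1` starting at `k/2`). -/
def blockWord (ρ : ℤ → Letter) (k : ℤ) (n : ℕ) : List Letter :=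
  (List.range (n + 1)).map fun i => ρ (k + i)

/-- The formal inverse of a word: reverse the word and invert each letter. -/
def wordInv (w : List Letter) : List Letter :=
  (w.map Letter.inv).reverse

/-- A labelling is quasi-periodic if (1) every subword of the labelling appears as a
subword (string of consecutive letters) of every sufficiently large block, and (2) the
formal inverse of every subword of the labelling is again a subword of the labelling. -/
def IsQuasiPeriodic (ρ : ℤ → Letter) : Prop :=
  IsLabelling ρ ∧
    (∀ (k : ℤ) (n : ℕ), ∃ N : ℕ, ∀ (k' : ℤ) (n' : ℕ), N ≤ n' + 1 →
      (blockWord ρ k n) <:+: (blockWord ρ k' n')) ∧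
    (∀ (k : ℤ) (n : ℕ), ∃ k' : ℤ, blockWord ρ k' n = wordInv (blockWord ρ k n))

/-! ### Thompson's group `F` and the subgroup `H`

Orientation-preserving homeomorphisms of `[0,1]` are realised as order-automorphisms
of `ℝ` that are the identity outside `[0,1]`; orientation-preserving homeomorphisms of
the line are order-automorphisms of `ℝ`. -/

/-- A dyadic rational real number, i.e. an element of `ℤ[1/2]`. -/
def IsDyadic (x : ℝ) : Prop :=
  ∃ (a : ℤ) (b : ℕ), x = (a : ℝ) / 2 ^ b

/-- Membership in Thompson's group `F`: the identity outside `[0,1]`, and on `[0,1]`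
piecewise linear with breakpoints in `ℤ[1/2]` and slopes integer powers of `2`. -/
def InThompsonF (f : ℝ ≃o ℝ) : Prop :=
  (∀ x : ℝ, x ∉ Set.Icc (0 : ℝ) 1 → f x = x) ∧
    ∃ (m : ℕ) (x : Fin (m + 1) → ℝ), x 0 = 0 ∧ x (Fin.last m) = 1 ∧ StrictMono x ∧
      (∀ i, IsDyadic (x i)) ∧
      ∀ i : Fin m, ∃ (k : ℤ) (c : ℝ),
        ∀ t ∈ Set.Icc (x i.castSucc) (x i.succ), f t = 2 ^ k * t + c

/-- Membership in the subgroup `H ≤ F` of elements whose slopes at `0` and `1`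
coincide. -/
def InH (f : ℝ ≃o ℝ) : Prop :=
  InThompsonF f ∧
    ∃ (k : ℤ) (ε : ℝ), 0 < ε ∧ (∀ t ∈ Set.Icc (0 : ℝ) ε, f t = 2 ^ k * t) ∧
      ∀ t ∈ Set.Icc (1 - ε) (1 : ℝ), f t = 1 + 2 ^ k * (t - 1)

/-! ### The generators of `G_ρ` -/

/-- `ζ` is the homeomorphism of `ℝ` which on each `[n, n+1]` is the conjugate of `ν`
(a homeomorphism of `[0,1]`) by the orientation-preserving isometry `[n,n+1] → [0,1]`
if `ρ(n + ½) = b`, and by the orientation-reversing isometry if `ρ(n + ½) = b⁻¹`.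
(In the encoding of `½ℤ` by `ℤ`, the point `n + ½` has index `2n + 1`.) -/
def IsZeta (ρ : ℤ → Letter) (ν ζ : ℝ ≃o ℝ) : Prop :=
  ∀ n : ℤ, ∀ x ∈ Set.Icc (n : ℝ) (n + 1),
    (ρ (2 * n + 1) = Letter.b → ζ x = n + ν (x - n)) ∧
    (ρ (2 * n + 1) = Letter.B → ζ x = (n + 1) - ν ((n + 1) - x))

/-- `χ` is the homeomorphism of `ℝ` which on each `[n-½, n+½]` is the conjugate of `ν`
by the orientation-preserving isometry `[n-½, n+½] → [0,1]` if `ρ(n) = a`, and by the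
orientation-reversing isometry if `ρ(n) = a⁻¹`. -/
def IsChi (ρ : ℤ → Letter) (ν χ : ℝ ≃o ℝ) : Prop :=
  ∀ n : ℤ, ∀ x ∈ Set.Icc ((n : ℝ) - 1/2) ((n : ℝ) + 1/2),
    (ρ (2 * n) = Letter.a → χ x = ((n : ℝ) - 1/2) + ν (x - ((n : ℝ) - 1/2))) ∧
    (ρ (2 * n) = Letter.A → χ x = ((n : ℝ) + 1/2) - ν (((n : ℝ) + 1/2) - x))

/-! ### Bounded cohomology in degree two -/

/-- A bounded 2-cocycle on `G` with trivial real coefficients. -/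
def IsBounded2Cocycle {G : Type*} [Group G] (ω : G → G → ℝ) : Prop :=
  (∃ C : ℝ, ∀ g h : G, |ω g h| ≤ C) ∧
    ∀ g₁ g₂ g₃ : G, ω g₂ g₃ - ω (g₁ * g₂) g₃ + ω g₁ (g₂ * g₃) - ω g₁ g₂ = 0

/-- `ω` is the coboundary of a bounded real-valued function. -/
def IsCoboundaryOfBounded {G : Type*} [Group G] (ω : G → G → ℝ) : Prop :=
  ∃ φ : G → ℝ, (∃ C : ℝ, ∀ g : G, |φ g| ≤ C) ∧
    ∀ g h : G, ω g h = φ h - φ (g * h) + φ g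

/-- A group is 2-boundedly acyclic if `H²_b(G; ℝ) = 0`, i.e. every bounded 2-cocycle is
the coboundary of a bounded function. -/
def Is2BoundedlyAcyclic (G : Type*) [Group G] : Prop :=
  ∀ ω : G → G → ℝ, IsBounded2Cocycle ω → IsCoboundaryOfBounded ω

/-- A 2-cocycle is homogeneous if it vanishes on powers of a single element. -/
def IsHomogeneous {G : Type*} [Group G] (ω : G → G → ℝ) : Prop :=
  ∀ (g : G) (i j : ℤ), ω (g ^ i) (g ^ j) = 0

/-- A bounded 2-cocycle on `G` with trivial integral coefficients. -/
def IsBounded2CocycleInt {G : Type*} [Group G] (ω : G → G → ℤ) : Prop :=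
  (∃ C : ℤ, ∀ g h : G, |ω g h| ≤ C) ∧
    ∀ g₁ g₂ g₃ : G, ω g₂ g₃ - ω (g₁ * g₂) g₃ + ω g₁ (g₂ * g₃) - ω g₁ g₂ = 0

/-- `ω` is the coboundary of a bounded integer-valued function. -/
def IsCoboundaryOfBoundedInt {G : Type*} [Group G] (ω : G → G → ℤ) : Prop :=
  ∃ φ : G → ℤ, (∃ C : ℤ, ∀ g : G, |φ g| ≤ C) ∧
    ∀ g h : G, ω g h = φ h - φ (g * h) + φ g

/-!
A bounded real cocycle on `G_ρ` yields a homogeneous quasimorphism `τ` on the central extension by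
`ℝ` that it defines, and the cocycle is the coboundary of a bounded function as soon as `τ` is
additive. If any two elements `a, b` of a subgroup `N` have conjugates `t a t⁻¹, t b t⁻¹` in `N`
commuting with both `a` and `b`, then `τ` is additive on `N`, because replacing `a` and `b` by
`a (t a t⁻¹)` and `b (t b t⁻¹)` doubles the defect; it follows that `τ` is also additive between `N`
and its normaliser.

This applies to the group `N` of the elements of `G_ρ` with trivial germ at a point `x`, which is
normalised by the stabiliser of `x`. Two elements of `N` are the identity on `ε`-neighbourhoods of
all points that see the same labels as `x` in a sufficiently large window. These points cut the line
into intervals of bounded length, and some element of `G_ρ` fixes them and moves the rest of each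
interval into the `ε`-neighbourhoods; conjugation by it makes the supports disjoint. As `ρ` is
invariant under inversion, an element of `G_ρ` cannot move all points near infinity in the same
direction, so it has arbitrarily large fixed points. This allows one to factor an element with
trivial germ somewhere into elements that share fixed points with a given element of `G_ρ`, and to
conclude that `τ` is additive on that pair. Elements with trivial germ somewhere generate `G_ρ`.

The bounded real primitive of an integral cocycle is modulo `ℤ` a homomorphism to `ℝ / ℤ`, so the
integral case follows if the homomorphisms from `G_ρ` to abelian groups are trivial. On a fine grid
of dyadic points consider the bump maps that start at a grid point with slope `2`, continue as the
translation by one cell, and all end in the same way. They are conjugate, hence have the same image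
`q` in an abelian group, and a product of them that stretches `n` cells to a total length of `m`
cells has image `q ^ (m - n)`. If `f` is the identity near `0` and `1` and `g` stretches fine cells
uniformly onto the coarse cells on which `f` is affine, then `g` and `f g` stretch the same number
of cells to the same total length, and so `f` has trivial image.
-/

open Filter Topology Set
open scoped commutatorElement

/-! ### Homogeneous quasimorphisms and central extensions -/

/-- A homogeneous quasimorphism on a group, the asymptotic form of a quasimorphism. -/
structure IsHomogeneousQuasimorphism {E : Type*} [Group E] (τ : E → ℝ) : Prop where
  bounded_defect : ∃ D : ℝ, ∀ e f, |τ (e * f) - τ e - τ f| ≤ D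
  map_pow : ∀ e (n : ℕ), τ (e ^ n) = n * τ e

theorem eq_zero_of_forall_natCast_mul_abs_le {x C : ℝ} (h : ∀ n : ℕ, n * |x| ≤ C) : x = 0 := by
  by_contra hx
  have hpos : 0 < |x| := abs_pos.mpr hx
  obtain ⟨n, hn⟩ := exists_nat_gt (C / |x|)
  rw [div_lt_iff₀ hpos] at hn
  linarith [h n]

namespace IsHomogeneousQuasimorphism

variable {E : Type*} [Group E] {τ : E → ℝ}

theorem map_one (hτ : IsHomogeneousQuasimorphism τ) : τ 1 = 0 := by simpa using hτ.map_pow 1 0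

theorem map_conj (hτ : IsHomogeneousQuasimorphism τ) (f e : E) : τ (f * e * f⁻¹) = τ e := by
  obtain ⟨D, hD⟩ := hτ.bounded_defect
  refine sub_eq_zero.mp <|
    eq_zero_of_forall_natCast_mul_abs_le (C := 2 * D + |τ f + τ f⁻¹|) fun n ↦ ?_
  have hscale : (n : ℝ) * |τ (f * e * f⁻¹) - τ e| = |τ (f * e ^ n * f⁻¹) - τ (e ^ n)| := by
    rw [← conj_pow, hτ.map_pow, hτ.map_pow, ← mul_sub, abs_mul, Nat.abs_cast]
  have houter := abs_le.mp (hD (f * e ^ n) f⁻¹)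
  have hinner := abs_le.mp (hD f (e ^ n))
  have hconst := abs_le.mp (le_refl |τ f + τ f⁻¹|)
  rw [hscale, abs_le]
  constructor <;> linarith

theorem map_mul_of_forall_pow (hτ : IsHomogeneousQuasimorphism τ) {e f : E}
    (h : ∀ n : ℕ, ∃ w, (e * f) ^ n = e ^ n * w ∧ τ w = n * τ f) : τ (e * f) = τ e + τ f := by
  obtain ⟨D, hD⟩ := hτ.bounded_defect
  suffices τ (e * f) - τ e - τ f = 0 by linarith
  refine eq_zero_of_forall_natCast_mul_abs_le (C := D) fun n ↦ ?_
  obtain ⟨w, hpow, hw⟩ := h n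
  calc (n : ℝ) * |τ (e * f) - τ e - τ f| = |n * τ (e * f) - n * τ e - n * τ f| := by
        rw [← mul_sub, ← mul_sub, abs_mul, Nat.abs_cast]
    _ = |τ (e ^ n * w) - τ (e ^ n) - τ w| := by rw [← hτ.map_pow, ← hτ.map_pow, hw, hpow]
    _ ≤ D := hD _ _

theorem map_mul_of_commute (hτ : IsHomogeneousQuasimorphism τ) {e f : E} (h : Commute e f) :
    τ (e * f) = τ e + τ f :=
  hτ.map_mul_of_forall_pow fun n ↦ ⟨f ^ n, h.mul_pow n, hτ.map_pow f n⟩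

theorem map_inv (hτ : IsHomogeneousQuasimorphism τ) (e : E) : τ e⁻¹ = -τ e := by
  have hadd := hτ.map_mul_of_commute (Commute.inv_right (Commute.refl e))
  rw [mul_inv_cancel, hτ.map_one] at hadd
  linarith

end IsHomogeneousQuasimorphism

theorem tendsto_div_of_bounded_defect {u : ℕ → ℝ} {C : ℝ}
    (hu : ∀ m n, |u (m + n) - u m - u n| ≤ C) : ∃ t, Tendsto (fun n : ℕ ↦ u n / n) atTop (𝓝 t) ∧
      |t - u 1| ≤ C := by
  have hC : 0 ≤ C := (abs_nonneg _).trans (hu 0 0)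
  have hlin : ∀ n : ℕ, 1 ≤ n → |u n - n * u 1| ≤ n * C := by
    intro n hn
    induction n, hn using Nat.le_induction with
    | base => simpa using hC
    | succ n _ ih =>
      have hstep := abs_le.mp (hu n 1)
      have hprev := abs_le.mp ih
      push_cast
      rw [abs_le]
      constructor <;> linarith
  have hdev : ∀ n : ℕ, 1 ≤ n → |u n / n - u 1| ≤ C := by
    intro n hn
    have hpos : (0 : ℝ) < n := by exact_mod_cast hn
    have hquot : u n / n - u 1 = (u n - n * u 1) / n := by field_simp
    rw [hquot, abs_div, Nat.abs_cast, div_le_iff₀ hpos]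
    linarith [hlin n hn]
  have hsub : Subadditive fun n ↦ u n + C := fun m n ↦ by linarith [(abs_le.mp (hu m n)).2]
  have hbelow : BddBelow (range fun n : ℕ ↦ (u n + C) / n) := by
    refine ⟨min 0 (u 1 - C), ?_⟩
    rintro _ ⟨n, rfl⟩
    rcases Nat.eq_zero_or_pos n with rfl | hn
    · simp
    · have hquot : u n / n ≤ (u n + C) / n := by gcongr; linarith
      exact (min_le_right _ _).trans (by linarith [(abs_le.mp (hdev n hn)).1])
  have hlim : Tendsto (fun n : ℕ ↦ u n / n) atTop (𝓝 hsub.lim) := by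
    have h := (hsub.tendsto_lim hbelow).sub (tendsto_const_div_atTop_nhds_zero_nat C)
    rw [sub_zero] at h
    exact h.congr fun n ↦ by rw [← sub_div]; ring
  refine ⟨hsub.lim, hlim, le_of_tendsto (hlim.sub_const _).abs ?_⟩
  filter_upwards [eventually_ge_atTop 1] with n hn using hdev n hn

theorem exists_homogenization {E : Type*} [Group E] {s : E → ℝ} {C : ℝ}
    (hs : ∀ e f, |s (e * f) - s e - s f| ≤ C) :
    ∃ τ : E → ℝ, IsHomogeneousQuasimorphism τ ∧ ∀ e, |τ e - s e| ≤ C := by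
  have hlim (e : E) := tendsto_div_of_bounded_defect (u := fun n ↦ s (e ^ n)) (C := C)
    fun m n ↦ by simpa only [pow_add] using hs (e ^ m) (e ^ n)
  simp only [pow_one] at hlim
  choose τ hτ hclose using hlim
  refine ⟨τ, ⟨⟨4 * C, fun e f ↦ ?_⟩, fun e k ↦ ?_⟩, hclose⟩
  · have he := abs_le.mp (hclose e)
    have hf := abs_le.mp (hclose f)
    have hef := abs_le.mp (hclose (e * f))
    have hdefect := abs_le.mp (hs e f)
    rw [abs_le]
    constructor <;> linarith
  · rcases Nat.eq_zero_or_pos k with rfl | hk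
    · simpa using tendsto_nhds_unique (hτ 1)
        (by simpa using tendsto_const_div_atTop_nhds_zero_nat (s 1))
    have hk₀ : (k : ℝ) ≠ 0 := by positivity
    have hsubseq := ((hτ e).comp (tendsto_id.const_mul_atTop' hk)).const_mul (k : ℝ)
    refine tendsto_nhds_unique (hτ (e ^ k)) (hsubseq.congr fun m ↦ ?_)
    simp only [Function.comp_apply, id_eq, pow_mul, Nat.cast_mul]
    field_simp

/-- A homogeneous quasimorphism `τ` on a central extension `π : E → G` that does not vanish on
any nontrivial element of the kernel. A bounded real `2`-cocycle on `G` gives rise to one, and it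
is the coboundary of a bounded function as soon as `τ` is additive. -/
structure IsCentralQuasimorphism {E G : Type*} [Group E] [Group G] (π : E →* G) (τ : E → ℝ) : Prop
    extends IsHomogeneousQuasimorphism τ where
  surjective : Function.Surjective π
  central : ∀ z, π z = 1 → ∀ e, Commute z e
  eq_one_of_ker : ∀ z, π z = 1 → τ z = 0 → z = 1

/-- Additivity of a function `τ` on an extension of `G` along two elements of `G`, in terms of
arbitrary lifts. -/
def IsAdditivePair {E G : Type*} [Group E] [Group G] (π : E →* G) (τ : E → ℝ) (g h : G) : Prop :=
  ∀ e f, π e = g → π f = h → τ (e * f) = τ e + τ f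

/-- Any two elements of `N` can be conjugated inside `N` so as to commute with both of them. -/
def HasCommutingConjugates {G : Type*} [Group G] (N : Subgroup G) : Prop :=
  ∀ a ∈ N, ∀ b ∈ N, ∃ t : G, ∀ y, (y = a ∨ y = b) → t * y * t⁻¹ ∈ N ∧
    ∀ x, (x = a ∨ x = b) → Commute x (t * y * t⁻¹)

namespace IsCentralQuasimorphism

variable {E G : Type*} [Group E] [Group G] {π : E →* G} {τ : E → ℝ}

theorem commute_of_commute_map (hτ : IsCentralQuasimorphism π τ) {e f : E}
    (h : Commute (π e) (π f)) : Commute e f := by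
  rw [commute_iff_eq, ← commutatorElement_eq_one_iff_mul_comm]
  have hker : π ⁅e, f⁆ = 1 := by
    rw [map_commutatorElement, commutatorElement_eq_one_iff_commute]
    exact h
  refine hτ.eq_one_of_ker _ hker ?_
  have hadd := hτ.map_mul_of_commute (hτ.central _ hker f)
  rw [commutatorElement_def, inv_mul_cancel_right, hτ.map_conj] at hadd
  rw [commutatorElement_def]
  linarith

theorem isAdditivePair_mul_left (hτ : IsCentralQuasimorphism π τ) {g₁ g₂ k : G}
    (h₁₂ : IsAdditivePair π τ g₁ g₂) (h₁ : IsAdditivePair π τ g₁ (g₂ * k))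
    (h₂ : IsAdditivePair π τ g₂ k) : IsAdditivePair π τ (g₁ * g₂) k := by
  intro e f he hf
  obtain ⟨e₁, rfl⟩ := hτ.surjective g₁
  obtain ⟨e₂, rfl⟩ : ∃ e₂, e = e₁ * e₂ := ⟨e₁⁻¹ * e, by group⟩
  rw [map_mul, mul_right_inj] at he
  rw [mul_assoc, h₁ e₁ (e₂ * f) rfl (by rw [map_mul, he, hf]), h₂ e₂ f he hf, h₁₂ e₁ e₂ rfl he,
    add_assoc]

/-- The elements of `G` along which `τ` is additive against everything. -/
def additiveSubgroup (hτ : IsCentralQuasimorphism π τ) : Subgroup G where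
  carrier := {g | ∀ k, IsAdditivePair π τ g k}
  mul_mem' ha hb k := hτ.isAdditivePair_mul_left (ha _) (ha _) (hb k)
  one_mem' := fun _ e f he _ ↦ hτ.map_mul_of_commute (hτ.central e he f)
  inv_mem' := by
    intro a ha k e f he _
    have hadd := ha _ e⁻¹ (e * f) (by simp [he]) rfl
    rw [inv_mul_cancel_left, hτ.map_inv] at hadd
    linarith

theorem mem_additiveSubgroup (hτ : IsCentralQuasimorphism π τ) {g : G} :
    g ∈ hτ.additiveSubgroup ↔ ∀ k, IsAdditivePair π τ g k := Iff.rfl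

theorem isAdditivePair_swap (hτ : IsCentralQuasimorphism π τ) {g h : G}
    (hgh : IsAdditivePair π τ g h) : IsAdditivePair π τ h g := by
  intro e f he hf
  have hconj : e * (f * e) * e⁻¹ = e * f := by group
  rw [← hconj, hτ.map_conj, hgh f e hf he, add_comm]

theorem exists_doubling (hτ : IsCentralQuasimorphism π τ) {N : Subgroup G}
    (hN : HasCommutingConjugates N) {e f : E} (he : π e ∈ N) (hf : π f ∈ N) :
    ∃ e' f', π e' ∈ N ∧ π f' ∈ N ∧ τ e' = 2 * τ e ∧ τ f' = 2 * τ f ∧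
      τ (e' * f') = 2 * τ (e * f) := by
  obtain ⟨t, ht⟩ := hN _ he _ hf
  obtain ⟨s, rfl⟩ := hτ.surjective t
  obtain ⟨heN, hcomm_e⟩ := ht _ (Or.inl rfl)
  obtain ⟨hfN, hcomm_f⟩ := ht _ (Or.inr rfl)
  have hlift {x y : E} (h : Commute (π x) (π s * π y * (π s)⁻¹)) : Commute x (s * y * s⁻¹) :=
    hτ.commute_of_commute_map (by simpa using h)
  have hee := hlift (hcomm_e _ (Or.inl rfl))
  have hfe := hlift (hcomm_e _ (Or.inr rfl))
  have hef := hlift (hcomm_f _ (Or.inl rfl))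
  have hff := hlift (hcomm_f _ (Or.inr rfl))
  refine ⟨e * (s * e * s⁻¹), f * (s * f * s⁻¹), ?_, ?_, ?_, ?_, ?_⟩
  · simpa using N.mul_mem he heN
  · simpa using N.mul_mem hf hfN
  · rw [hτ.map_mul_of_commute hee, hτ.map_conj]; ring
  · rw [hτ.map_mul_of_commute hff, hτ.map_conj]; ring
  · have hconj : s * (e * f) * s⁻¹ = s * e * s⁻¹ * (s * f * s⁻¹) := by group
    have hcomm : Commute (e * f) (s * (e * f) * s⁻¹) := by
      rw [hconj]
      exact (hee.mul_right hef).mul_left (hfe.mul_right hff)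
    calc τ (e * (s * e * s⁻¹) * (f * (s * f * s⁻¹)))
        = τ (e * f * (s * (e * f) * s⁻¹)) := by
          rw [mul_assoc e, ← mul_assoc _ f, ← hfe.eq, hconj]; simp only [mul_assoc]
      _ = 2 * τ (e * f) := by rw [hτ.map_mul_of_commute hcomm, hτ.map_conj]; ring

-- Doubling doubles the defect of `τ` at `(e, f)`, which is bounded, so the defect vanishes.
theorem map_mul_of_hasCommutingConjugates (hτ : IsCentralQuasimorphism π τ) {N : Subgroup G}
    (hN : HasCommutingConjugates N) {e f : E} (he : π e ∈ N) (hf : π f ∈ N) :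
    τ (e * f) = τ e + τ f := by
  obtain ⟨D, hD⟩ := hτ.bounded_defect
  have hdouble : ∀ (k : ℕ) (e f : E), π e ∈ N → π f ∈ N →
      2 ^ k * |τ (e * f) - τ e - τ f| ≤ D := by
    intro k
    induction k with
    | zero => intro e f _ _; simpa using hD e f
    | succ k ih =>
      intro e f he hf
      obtain ⟨e', f', he', hf', hτe, hτf, hτef⟩ := hτ.exists_doubling hN he hf
      have hdefect : τ (e' * f') - τ e' - τ f' = 2 * (τ (e * f) - τ e - τ f) := by
        rw [hτe, hτf, hτef]; ring
      have hbound := ih e' f' he' hf'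
      rw [hdefect, abs_mul, abs_two] at hbound
      rw [pow_succ]
      linarith
  suffices τ (e * f) - τ e - τ f = 0 by linarith
  refine eq_zero_of_forall_natCast_mul_abs_le (C := D) fun n ↦ ?_
  refine le_trans ?_ (hdouble n e f he hf)
  gcongr
  exact_mod_cast n.lt_two_pow_self.le

theorem isAdditivePair_of_mem_normalizer (hτ : IsCentralQuasimorphism π τ) {N : Subgroup G}
    (hN : HasCommutingConjugates N) {n k : G} (hn : n ∈ N)
    (hk : k ∈ Subgroup.normalizer (N : Set G)) : IsAdditivePair π τ n k := by
  refine hτ.isAdditivePair_swap fun f e hf he ↦ hτ.map_mul_of_forall_pow fun m ↦ ?_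
  suffices ∃ w, (f * e) ^ m = f ^ m * w ∧ π w ∈ N ∧ τ w = m * τ e by
    obtain ⟨w, hpow, -, hw⟩ := this
    exact ⟨w, hpow, hw⟩
  have heN : π e ∈ N := he ▸ hn
  induction m with
  | zero => exact ⟨1, by simp, by simp, by simp [hτ.map_one]⟩
  | succ m ih =>
    obtain ⟨w, hpow, hwN, hw⟩ := ih
    have hconjN : π (f⁻¹ * w * f) ∈ N := by
      simpa [hf] using (Subgroup.mem_normalizer_iff''.mp hk _).mp hwN
    refine ⟨f⁻¹ * w * f * e, ?_, ?_, ?_⟩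
    · rw [pow_succ, hpow, pow_succ]; group
    · simpa using N.mul_mem hconjN heN
    · have hconj := hτ.map_conj f⁻¹ w
      rw [inv_inv] at hconj
      rw [hτ.map_mul_of_hasCommutingConjugates hN hconjN heN, hconj, hw]
      push_cast
      ring

end IsCentralQuasimorphism

/-! ### From quasimorphisms to bounded cohomology -/

/-- The cocycle identity for a `2`-cochain with trivial real coefficients. -/
def IsTwoCocycle {G : Type*} [Group G] (ω : G → G → ℝ) : Prop :=
  ∀ g₁ g₂ g₃ : G, ω g₂ g₃ - ω (g₁ * g₂) g₃ + ω g₁ (g₂ * g₃) - ω g₁ g₂ = 0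

theorem IsTwoCocycle.one_left {G : Type*} [Group G] {ω : G → G → ℝ} (hω : IsTwoCocycle ω) (g : G) :
    ω 1 g = ω 1 1 := by
  have h := hω 1 1 g
  simp only [one_mul] at h
  linarith

theorem IsTwoCocycle.one_right {G : Type*} [Group G] {ω : G → G → ℝ} (hω : IsTwoCocycle ω)
    (g : G) : ω g 1 = ω 1 1 := by
  have h := hω g 1 1
  simp only [mul_one] at h
  linarith

/-- The central extension of `G` by `ℝ` defined by a `2`-cocycle `ω`, with underlying set `G × ℝ`
and product `(g, s) * (h, t) = (g * h, s + t + ω g h)`. As `ω` need not be normalised, the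
identity element is `(1, -ω 1 1)`. -/
@[ext] structure TwistedProduct {G : Type*} [Group G] {ω : G → G → ℝ} (hω : IsTwoCocycle ω) where
  base : G
  fiber : ℝ

namespace TwistedProduct

variable {G : Type*} [Group G] {ω : G → G → ℝ} {hω : IsTwoCocycle ω}

instance : Mul (TwistedProduct hω) :=
  ⟨fun x y ↦ ⟨x.base * y.base, x.fiber + y.fiber + ω x.base y.base⟩⟩

instance : One (TwistedProduct hω) := ⟨⟨1, -ω 1 1⟩⟩

instance : Inv (TwistedProduct hω) :=
  ⟨fun x ↦ ⟨x.base⁻¹, -x.fiber - ω 1 1 - ω x.base⁻¹ x.base⟩⟩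

@[simp] theorem base_mul (x y : TwistedProduct hω) : (x * y).base = x.base * y.base := rfl

@[simp] theorem fiber_mul (x y : TwistedProduct hω) :
    (x * y).fiber = x.fiber + y.fiber + ω x.base y.base := rfl

@[simp] theorem base_one : (1 : TwistedProduct hω).base = 1 := rfl

@[simp] theorem fiber_one : (1 : TwistedProduct hω).fiber = -ω 1 1 := rfl

@[simp] theorem base_inv (x : TwistedProduct hω) : x⁻¹.base = x.base⁻¹ := rfl

@[simp] theorem fiber_inv (x : TwistedProduct hω) :
    x⁻¹.fiber = -x.fiber - ω 1 1 - ω x.base⁻¹ x.base := rfl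

instance : Group (TwistedProduct hω) := Group.ofLeftAxioms
  (fun x y z ↦ TwistedProduct.ext (mul_assoc _ _ _) (by
    simp only [fiber_mul, base_mul]
    linarith [hω x.base y.base z.base]))
  (fun x ↦ TwistedProduct.ext (one_mul _) (by simp [hω.one_left x.base]))
  (fun x ↦ TwistedProduct.ext (inv_mul_cancel _) (by
    simp only [fiber_mul, fiber_inv, base_inv, fiber_one]
    ring))

/-- The projection of the twisted product onto `G`. -/
def proj : TwistedProduct hω →* G where
  toFun := base
  map_one' := rfl
  map_mul' _ _ := rfl

theorem commute_of_base_eq_one {z : TwistedProduct hω} (hz : z.base = 1) (e : TwistedProduct hω) :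
    Commute z e := by
  refine TwistedProduct.ext (by simp [hz]) ?_
  simp only [fiber_mul, hz, hω.one_left e.base, hω.one_right e.base]
  ring

theorem pow_of_base_eq_one {z : TwistedProduct hω} (hz : z.base = 1) (n : ℕ) :
    z ^ n = ⟨1, n * (z.fiber + ω 1 1) - ω 1 1⟩ := by
  induction n with
  | zero => exact TwistedProduct.ext rfl (by simp)
  | succ n ih =>
    rw [pow_succ, ih]
    refine TwistedProduct.ext (by simp [hz]) ?_
    simp only [fiber_mul, hz]
    push_cast
    ring

theorem exists_isCentralQuasimorphism {C : ℝ} (hC : ∀ g h, |ω g h| ≤ C) :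
    ∃ τ : TwistedProduct hω → ℝ, IsCentralQuasimorphism proj τ ∧ (∀ e, |τ e - e.fiber| ≤ C) ∧
      ∀ z, z.base = 1 → τ z = z.fiber + ω 1 1 := by
  obtain ⟨τ, hτ, hclose⟩ := exists_homogenization (s := fiber (hω := hω)) (C := C) fun e f ↦ by
    rw [fiber_mul]
    convert hC e.base f.base using 2
    ring
  have hker (z : TwistedProduct hω) (hz : z.base = 1) : τ z = z.fiber + ω 1 1 := by
    refine sub_eq_zero.mp <| eq_zero_of_forall_natCast_mul_abs_le (C := 2 * C) fun n ↦ ?_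
    have hpow := hclose (z ^ n)
    rw [hτ.map_pow, pow_of_base_eq_one hz] at hpow
    calc (n : ℝ) * |τ z - (z.fiber + ω 1 1)|
        = |n * τ z - (n * (z.fiber + ω 1 1) - ω 1 1) - ω 1 1| := by
          rw [← Nat.abs_cast n, ← abs_mul, Nat.abs_cast]; ring_nf
      _ ≤ 2 * C := (abs_sub _ _).trans (by linarith [hC 1 1])
  refine ⟨τ, ⟨hτ, fun g ↦ ⟨⟨g, 0⟩, rfl⟩, fun z hz e ↦ commute_of_base_eq_one hz e,
    fun z hz hτz ↦ TwistedProduct.ext hz ?_⟩, hclose, hker⟩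
  rw [hker z hz] at hτz
  rw [fiber_one]
  linarith

end TwistedProduct

theorem is2BoundedlyAcyclic_of_forall_isAdditivePair {G : Type*} [Group G]
    (hadd : ∀ (ω : G → G → ℝ) (hω : IsTwoCocycle ω) (τ : TwistedProduct hω → ℝ),
      IsCentralQuasimorphism TwistedProduct.proj τ →
        ∀ g h, IsAdditivePair TwistedProduct.proj τ g h) :
    Is2BoundedlyAcyclic G := by
  rintro ω ⟨⟨C, hC⟩, hω : IsTwoCocycle ω⟩
  obtain ⟨τ, hτ, hclose, hker⟩ := TwistedProduct.exists_isCentralQuasimorphism (hω := hω) hC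
  refine ⟨fun g ↦ τ ⟨g, 0⟩, ⟨C, fun g ↦ by simpa using hclose ⟨g, 0⟩⟩, fun g h ↦ ?_⟩
  have hprod : (⟨g, 0⟩ * ⟨h, 0⟩ : TwistedProduct hω) = ⟨1, ω g h - ω 1 1⟩ * ⟨g * h, 0⟩ :=
    TwistedProduct.ext (by simp) (by simp [hω.one_left (g * h)])
  have hmul := hadd ω hω τ hτ g h ⟨g, 0⟩ ⟨h, 0⟩ rfl rfl
  rw [hprod, hτ.map_mul_of_commute (TwistedProduct.commute_of_base_eq_one rfl _), hker _ rfl]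
    at hmul
  linarith

-- The bounded real primitive of an integral cocycle reduces modulo `ℤ` to a homomorphism.
theorem Is2BoundedlyAcyclic.isCoboundaryOfBoundedInt {G : Type*} [Group G]
    (hG : Is2BoundedlyAcyclic G)
    (htriv : ∀ (ψ : G →* Multiplicative (AddCircle (1 : ℝ))) (g : G), ψ g = 1)
    {ω : G → G → ℤ} (hω : IsBounded2CocycleInt ω) : IsCoboundaryOfBoundedInt ω := by
  obtain ⟨⟨C, hC⟩, hcocycle⟩ := hω
  obtain ⟨φ, ⟨D, hD⟩, hφ⟩ := hG (fun g h ↦ (ω g h : ℝ))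
    ⟨⟨C, fun g h ↦ by beta_reduce; exact_mod_cast hC g h⟩,
      fun g₁ g₂ g₃ ↦ by beta_reduce; exact_mod_cast hcocycle g₁ g₂ g₃⟩
  beta_reduce at hφ
  let ψ : G →* Multiplicative (AddCircle (1 : ℝ)) :=
    MonoidHom.mk' (fun g ↦ Multiplicative.ofAdd ((φ g : ℝ) : AddCircle (1 : ℝ))) fun g h ↦ by
      rw [← ofAdd_add, ← AddCircle.coe_add]
      congr 1
      rw [← sub_eq_zero, ← AddCircle.coe_sub, AddCircle.coe_eq_zero_iff]
      refine ⟨-ω g h, ?_⟩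
      rw [zsmul_eq_mul, mul_one, Int.cast_neg, hφ g h]
      ring
  have hintegral (g : G) : ∃ n : ℤ, (n : ℝ) = φ g := by
    have hzero : ((φ g : ℝ) : AddCircle (1 : ℝ)) = 0 := htriv ψ g
    obtain ⟨n, hn⟩ := (AddCircle.coe_eq_zero_iff _).mp hzero
    exact ⟨n, by simpa using hn⟩
  choose φℤ hφℤ using hintegral
  simp only [← hφℤ] at hD hφ
  refine ⟨φℤ, ⟨⌈D⌉, fun g ↦ ?_⟩, fun g h ↦ by exact_mod_cast hφ g h⟩
  have hbound : ((|φℤ g| : ℤ) : ℝ) ≤ ⌈D⌉ := by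
    rw [Int.cast_abs]
    exact (hD g).trans (Int.le_ceil D)
  exact_mod_cast hbound

/-! ### Frames on the line -/

/-- A frame on the line: an element `x ↦ shift + sign * x` of the infinite dihedral group of
isometries of `ℝ` preserving `ℤ`. -/
@[ext] structure Frame where
  shift : ℤ
  sign : ℤˣ

namespace Frame

instance : Mul Frame := ⟨fun d f ↦ ⟨d.shift + d.sign * f.shift, d.sign * f.sign⟩⟩

instance : One Frame := ⟨⟨0, 1⟩⟩

instance : Inv Frame := ⟨fun d ↦ ⟨-(d.sign * d.shift), d.sign⟩⟩

@[simp] theorem shift_mul (d f : Frame) : (d * f).shift = d.shift + d.sign * f.shift := rfl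

@[simp] theorem sign_mul (d f : Frame) : (d * f).sign = d.sign * f.sign := rfl

@[simp] theorem shift_one : (1 : Frame).shift = 0 := rfl

@[simp] theorem sign_one : (1 : Frame).sign = 1 := rfl

@[simp] theorem shift_inv (d : Frame) : d⁻¹.shift = -(d.sign * d.shift) := rfl

@[simp] theorem sign_inv (d : Frame) : d⁻¹.sign = d.sign := rfl

instance : Group Frame := Group.ofLeftAxioms
  (fun _ _ _ ↦ by ext <;> simp [mul_assoc]; ring)
  (fun _ ↦ by ext <;> simp)
  (fun _ ↦ by ext <;> simp)

/-- The isometric action of frames on the line. -/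
instance : MulAction Frame ℝ where
  smul d x := d.shift + (d.sign : ℤ) * x
  one_smul x := show ((0 : ℤ) : ℝ) + ((1 : ℤˣ) : ℤ) * x = x by simp
  mul_smul d f x :=
    show ((d * f).shift : ℝ) + ((d * f).sign : ℤ) * x =
      d.shift + (d.sign : ℤ) * (f.shift + (f.sign : ℤ) * x) by simp; ring

/-- The action of frames on indices of half-integers, where `m` is the index of `m / 2`. -/
instance : MulAction Frame ℤ where
  smul d m := 2 * d.shift + d.sign * m
  one_smul m := show 2 * (0 : ℤ) + (1 : ℤˣ) * m = m by simp
  mul_smul d f m :=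
    show 2 * (d * f).shift + (d * f).sign * m =
      2 * d.shift + d.sign * (2 * f.shift + f.sign * m) by simp; ring

theorem smul_real_def (d : Frame) (x : ℝ) : d • x = d.shift + (d.sign : ℤ) * x := rfl

theorem smul_int_def (d : Frame) (m : ℤ) : d • m = 2 * d.shift + d.sign * m := rfl

theorem translation_or_reflection (d : Frame) :
    (d.sign = 1 ∧ (∀ x : ℝ, d • x = d.shift + x) ∧ ∀ m : ℤ, d • m = 2 * d.shift + m) ∨
      (d.sign = -1 ∧ (∀ x : ℝ, d • x = d.shift - x) ∧ ∀ m : ℤ, d • m = 2 * d.shift - m) := by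
  rcases Int.units_eq_one_or d.sign with h | h
  · exact .inl ⟨h, fun x ↦ by simp [smul_real_def, h], fun m ↦ by simp [smul_int_def, h]⟩
  · exact .inr ⟨h, fun x ↦ by simp [smul_real_def, h]; ring,
      fun m ↦ by simp [smul_int_def, h]; ring⟩

theorem abs_smul_sub_smul (d : Frame) (x y : ℝ) : |d • x - d • y| = |x - y| := by
  rcases d.translation_or_reflection with ⟨-, h, -⟩ | ⟨-, h, -⟩ <;> rw [h, h]
  · rw [add_sub_add_left_eq_sub]
  · rw [sub_sub_sub_cancel_left, abs_sub_comm]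

theorem abs_smul_sub_smul_int (d : Frame) (m n : ℤ) : |d • m - d • n| = |m - n| := by
  rcases d.translation_or_reflection with ⟨-, -, h⟩ | ⟨-, -, h⟩ <;> rw [h, h]
  · rw [add_sub_add_left_eq_sub]
  · rw [sub_sub_sub_cancel_left, abs_sub_comm]

theorem abs_smul_sub_two_mul_smul (d : Frame) (m : ℤ) (x : ℝ) :
    |((d • m : ℤ) : ℝ) - 2 * d • x| = |(m : ℝ) - 2 * x| := by
  rcases d.translation_or_reflection with ⟨-, h, h'⟩ | ⟨-, h, h'⟩ <;> rw [h, h'] <;> push_cast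
  · congr 1; ring
  · rw [abs_sub_comm]; congr 1; ring

theorem continuous_smul (d : Frame) : Continuous fun x : ℝ ↦ d • x := by
  simp only [smul_real_def]; fun_prop

theorem exists_mem_Icc_smul_eq (x : ℝ) : ∃ d : Frame, ∃ y ∈ Icc (0 : ℝ) (1 / 2), x = d • y := by
  have hfloor := Int.floor_le x
  have hlt := Int.lt_floor_add_one x
  rcases le_total (x - ⌊x⌋) (1 / 2) with h | h
  · exact ⟨⟨⌊x⌋, 1⟩, x - ⌊x⌋, ⟨by linarith, h⟩, by simp [smul_real_def]⟩
  · exact ⟨⟨⌊x⌋ + 1, -1⟩, ⌊x⌋ + 1 - x, ⟨by linarith, by linarith⟩, by simp [smul_real_def]⟩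

theorem eq_of_smul_mem_Ioo_eq {d d' : Frame} {y y' : ℝ} (hy : y ∈ Ioo (0 : ℝ) (1 / 2))
    (hy' : y' ∈ Ioo (0 : ℝ) (1 / 2)) (h : d • y = d' • y') : d = d' := by
  obtain ⟨hy₀, hy₁⟩ := hy
  obtain ⟨hy₀', hy₁'⟩ := hy'
  rcases d.translation_or_reflection with ⟨he, hd, -⟩ | ⟨he, hd, -⟩ <;>
    rcases d'.translation_or_reflection with ⟨he', hd', -⟩ | ⟨he', hd', -⟩ <;> rw [hd, hd'] at h
  · have hlt : (d.shift : ℝ) < d'.shift + 1 := by linarith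
    have hgt : (d'.shift : ℝ) < d.shift + 1 := by linarith
    norm_cast at hlt hgt
    exact Frame.ext (by omega) (he.trans he'.symm)
  · have hlt : (d.shift : ℝ) < d'.shift := by linarith
    have hgt : (d'.shift : ℝ) < d.shift + 1 := by linarith
    norm_cast at hlt hgt
    omega
  · have hlt : (d'.shift : ℝ) < d.shift := by linarith
    have hgt : (d.shift : ℝ) < d'.shift + 1 := by linarith
    norm_cast at hlt hgt
    omega
  · have hlt : (d.shift : ℝ) < d'.shift + 1 := by linarith
    have hgt : (d'.shift : ℝ) < d.shift + 1 := by linarith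
    norm_cast at hlt hgt
    exact Frame.ext (by omega) (he.trans he'.symm)

theorem inv_smul_apply_smul_le_iff (d : Frame) (u : ℝ ≃o ℝ) {x y : ℝ} :
    d⁻¹ • u (d • x) ≤ d⁻¹ • u (d • y) ↔ x ≤ y := by
  have hinv (z : ℝ) : d⁻¹ • z = (d.sign : ℤ) * (z - d.shift) := by
    rw [smul_real_def]; simp; ring
  rw [hinv, hinv]
  rcases d.translation_or_reflection with ⟨he, hd, -⟩ | ⟨he, hd, -⟩ <;>
    simp only [hd, he]
  · simp
  · rw [Units.val_neg, Units.val_one, Int.cast_neg, Int.cast_one, neg_one_mul, neg_one_mul,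
      neg_le_neg_iff, sub_le_sub_iff_right, u.le_iff_le, sub_le_sub_iff_left]

/-- Conjugation by a frame, that is the expression of an automorphism of the line in the
coordinate given by the frame. -/
def conj (d : Frame) : (ℝ ≃o ℝ) →* (ℝ ≃o ℝ) where
  toFun u :=
    { toFun := fun x ↦ d⁻¹ • u (d • x)
      invFun := fun x ↦ d⁻¹ • u.symm (d • x)
      left_inv := fun x ↦ by simp
      right_inv := fun x ↦ by simp
      map_rel_iff' := d.inv_smul_apply_smul_le_iff u }
  map_one' := by ext x; exact inv_smul_smul d x
  map_mul' u v := by ext x; exact congrArg (fun z ↦ d⁻¹ • u z) (smul_inv_smul d _).symm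

theorem conj_apply (d : Frame) (u : ℝ ≃o ℝ) (x : ℝ) : conj d u x = d⁻¹ • u (d • x) := rfl

theorem smul_conj_apply (d : Frame) (u : ℝ ≃o ℝ) (x : ℝ) : d • conj d u x = u (d • x) := by
  rw [conj_apply, smul_inv_smul]

/-- The reflection of the line whose centre `j / 2` has index `j`. -/
def reflection (j : ℤ) : Frame := ⟨j, -1⟩

@[simp] theorem reflection_inv (j : ℤ) : (reflection j)⁻¹ = reflection j := by
  ext <;> simp [reflection]

theorem reflection_smul (j : ℤ) (x : ℝ) : reflection j • x = j - x := by
  simp [smul_real_def, reflection]; ring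

theorem reflection_smul_int (j m : ℤ) : reflection j • m = 2 * j - m := by
  simp [smul_int_def, reflection]; ring

/-- The label of the half-integer of index `j` in the coordinate given by the frame `d`, where `r`
records the exponents of a labelling. An orientation-reversing frame inverts labels. -/
def label (r : ℤ → ℤˣ) (d : Frame) (j : ℤ) : ℤˣ := d.sign * r (d • j)

theorem label_mul (r : ℤ → ℤˣ) (d f : Frame) (j : ℤ) :
    label r (d * f) j = f.sign * label r d (f • j) := by
  simp only [label, sign_mul, mul_smul]
  rw [mul_comm d.sign, mul_assoc]

@[simp] theorem label_one (r : ℤ → ℤˣ) (j : ℤ) : label r 1 j = r j := by simp [label]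

theorem label_mul_reflection (r : ℤ → ℤˣ) (d : Frame) (j : ℤ) :
    label r (d * reflection j) j = -label r d j := by
  rw [label_mul, reflection_smul_int, two_mul, add_sub_cancel_right]
  simp [reflection]

/-- Two frames see the same labels at all indices in `A`. -/
def SameLabels (r : ℤ → ℤˣ) (A : Set ℤ) (d d' : Frame) : Prop :=
  ∀ j ∈ A, label r d j = label r d' j

namespace SameLabels

variable {r : ℤ → ℤˣ} {A B : Set ℤ} {d d' d'' : Frame}

theorem refl (r : ℤ → ℤˣ) (A : Set ℤ) (d : Frame) : SameLabels r A d d := fun _ _ ↦ rfl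

theorem symm (h : SameLabels r A d d') : SameLabels r A d' d := fun j hj ↦ (h j hj).symm

theorem trans (h : SameLabels r A d d') (h' : SameLabels r A d' d'') : SameLabels r A d d'' :=
  fun j hj ↦ (h j hj).trans (h' j hj)

theorem mono (h : SameLabels r A d d') (hBA : B ⊆ A) : SameLabels r B d d' :=
  fun j hj ↦ h j (hBA hj)

end SameLabels

theorem sameLabels_mul_right {r : ℤ → ℤˣ} {A : Set ℤ} {d d' : Frame} (f : Frame) :
    SameLabels r A (d * f) (d' * f) ↔ SameLabels r {m | f⁻¹ • m ∈ A} d d' := by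
  refine ⟨fun h m hm ↦ ?_, fun h m hm ↦ ?_⟩
  · simpa [label_mul] using h _ hm
  · rw [label_mul, label_mul, h _ (by simpa using hm)]

end Frame

/-! ### Recurrence and aperiodicity of quasi-periodic labellings -/

open Frame

/-- The recurrence properties of a labelling with exponents `r` on which the argument rests: every
window of labels reappears, in both orientations, within bounded distance of every point, and a
window that is long enough determines its frame among those at bounded distance. -/
structure IsAperiodicRecurrent (r : ℤ → ℤˣ) : Prop where
  recurrent : ∀ (N : ℕ) (d : Frame) (η : ℤˣ), ∃ M : ℕ, ∀ m : ℤ, ∃ d' : Frame, d'.sign = η ∧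
    m ≤ d'.shift ∧ d'.shift ≤ m + M ∧ SameLabels r (Icc (-N) N) d' d
  aperiodic : ∀ B : ℕ, ∃ N : ℕ, ∀ d : Frame, SameLabels r (Icc (-N) N) d 1 →
    d = 1 ∨ (B : ℤ) < |d.shift|

/-- The exponent of a letter. -/
def Letter.sign : Letter → ℤˣ
  | .a => 1
  | .A => -1
  | .b => 1
  | .B => -1

theorem Letter.sign_inv (x : Letter) : x.inv.sign = -x.sign := by
  cases x <;> simp [Letter.inv, Letter.sign]

theorem Frame.label_periodic {r : ℤ → ℤˣ} {c : ℤ} (hr : Function.Periodic r c) (d : Frame) :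
    Function.Periodic (label r d) c := by
  intro j
  rcases d.translation_or_reflection with ⟨-, -, hd⟩ | ⟨-, -, hd⟩ <;> simp only [label, hd]
  · rw [← add_assoc, hr]
  · rw [← sub_sub, hr.sub_eq]

theorem Frame.SameLabels.univ_of_periodic {r : ℤ → ℤˣ} {c : ℤ} {N : ℕ} (hr : Function.Periodic r c)
    (hc : c ≠ 0) (hcN : |c| ≤ N) {d d' : Frame} (h : SameLabels r (Icc (-N) N) d d') :
    SameLabels r Set.univ d d' := by
  intro j _
  have hmod (e : Frame) : label r e (j % c) = label r e j := by
    have hj : j % c = j - (j / c) * c := by linarith [Int.emod_add_mul_ediv j c]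
    rw [hj]
    exact (label_periodic hr e).sub_int_mul_eq (j / c)
  have hnonneg := Int.emod_nonneg j hc
  have hlt := Int.emod_lt_abs j hc
  rw [← hmod d, ← hmod d', h _ ⟨by omega, by omega⟩]

theorem Frame.not_sameLabels_univ_one {r : ℤ → ℤˣ} {d : Frame} (hd : d.sign = -1) :
    ¬ SameLabels r Set.univ d 1 := by
  intro h
  have hcentre := h d.shift (mem_univ _)
  rw [label_one, label, smul_int_def, hd, Units.val_neg, Units.val_one, neg_one_mul, neg_one_mul,
    two_mul, add_neg_cancel_right] at hcentre
  rcases Int.units_eq_one_or (r d.shift) with hr | hr <;> rw [hr] at hcentre <;>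
    exact absurd hcentre (by decide)

theorem Frame.finite_setOf_abs_shift_le (B : ℕ) : {d : Frame | |d.shift| ≤ B}.Finite := by
  refine ((Set.finite_Icc (-B : ℤ) B).prod (Set.finite_univ (α := ℤˣ))).preimage
    (f := fun d : Frame ↦ (d.shift, d.sign)) (fun d _ d' _ h ↦ ?_) |>.subset fun d hd ↦ ?_
  · exact Frame.ext (congrArg Prod.fst h) (congrArg Prod.snd h)
  · exact ⟨abs_le.mp hd, mem_univ _⟩

variable {ρ : ℤ → Letter}

theorem IsLabelling.even_of_eq (h : IsLabelling ρ) {m m' : ℤ} (hm : ρ m = ρ m') (he : Even m) :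
    Even m' := by
  by_contra ho
  rw [Int.not_even_iff_odd] at ho
  rcases (h m).1 he with h₁ | h₁ <;> rcases (h m').2 ho with h₂ | h₂ <;>
    rw [h₁, h₂] at hm <;> cases hm

theorem IsLabelling.even_of_eq_inv (h : IsLabelling ρ) {m m' : ℤ} (hm : ρ m = (ρ m').inv)
    (he : Even m') : Even m := by
  by_contra ho
  rw [Int.not_even_iff_odd] at ho
  rcases (h m').1 he with h₁ | h₁ <;> rcases (h m).2 ho with h₂ | h₂ <;>
    rw [h₁, h₂] at hm <;> cases hm

theorem blockWord_eq_map (ρ : ℤ → Letter) (k : ℤ) (n : ℕ) :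
    blockWord ρ k n = (List.range (n + 1)).map fun i : ℕ ↦ ρ (k + i) := by
  simp only [blockWord, List.bind_eq_flatMap, List.pure_def, List.map_flatMap, List.map_cons,
    List.map_nil]
  exact List.flatMap_pure_eq_map (fun i : ℕ ↦ ρ (k + i)) _

theorem length_blockWord (ρ : ℤ → Letter) (k : ℤ) (n : ℕ) : (blockWord ρ k n).length = n + 1 := by
  simp [blockWord_eq_map]

theorem getElem_blockWord (ρ : ℤ → Letter) (k : ℤ) (n i : ℕ) (hi : i < (blockWord ρ k n).length) :
    (blockWord ρ k n)[i] = ρ (k + i) := by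
  simp [blockWord_eq_map]

theorem exists_eq_add_of_blockWord_isInfix {k k' : ℤ} {n n' : ℕ}
    (h : blockWord ρ k n <:+: blockWord ρ k' n') :
    ∃ s : ℕ, s + n ≤ n' ∧ ∀ i ≤ n, ρ (k' + s + i) = ρ (k + i) := by
  obtain ⟨s, t, hst⟩ := h
  have hlen := congrArg List.length hst
  simp only [List.length_append, length_blockWord] at hlen
  refine ⟨s.length, by omega, fun i hi ↦ ?_⟩
  have hin : s.length + i < (blockWord ρ k' n').length := by rw [length_blockWord]; omega
  have hin' : i < (blockWord ρ k n).length := by rw [length_blockWord]; omega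
  have hget := getElem_blockWord ρ k' n' (s.length + i) hin
  simp only [← hst] at hget
  rw [List.getElem_append_left (by simp [length_blockWord]; omega),
    List.getElem_append_right (by omega)] at hget
  rw [← getElem_blockWord ρ k n i hin', add_assoc, ← Nat.cast_add, ← hget]
  simp

namespace IsQuasiPeriodic

theorem exists_translate_eq (h : IsQuasiPeriodic ρ) (n : ℤ) (N : ℕ) : ∃ M : ℕ, ∀ m : ℤ,
    ∃ n' : ℤ, m ≤ n' ∧ n' ≤ m + M ∧ ∀ j ∈ Icc (-N : ℤ) N, ρ (2 * n' + j) = ρ (2 * n + j) := by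
  obtain ⟨M, hM⟩ := h.2.1 (2 * n - N) (2 * N)
  refine ⟨M, fun m ↦ ?_⟩
  obtain ⟨s, hs, heq⟩ := exists_eq_add_of_blockWord_isInfix (hM (2 * m - N) M (by omega))
  have hcentre := heq N (by omega)
  obtain ⟨n', hn'⟩ : Even (2 * m - N + s + N : ℤ) := h.1.even_of_eq hcentre.symm ⟨n, by ring⟩
  refine ⟨n', by omega, by omega, fun j ⟨hj, hj'⟩ ↦ ?_⟩
  convert heq (j + N).toNat (by omega) using 2 <;> omega

theorem exists_reflect_eq (h : IsQuasiPeriodic ρ) (n : ℤ) (N : ℕ) : ∃ n' : ℤ,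
    ∀ j ∈ Icc (-N : ℤ) N, ρ (2 * n' + j) = (ρ (2 * n - j)).inv := by
  obtain ⟨k, hk⟩ := h.2.2 (2 * n - N) (2 * N)
  have heq : ∀ i ≤ 2 * N, ρ (k + i) = (ρ (2 * n - N + (2 * N - i : ℕ))).inv := by
    intro i hi
    rw [← getElem_blockWord ρ k (2 * N) i (by rw [length_blockWord]; omega)]
    simp only [hk, wordInv]
    rw [List.getElem_reverse, List.getElem_map, getElem_blockWord]
    congr 2
    simp [length_blockWord]
  obtain ⟨n', hn'⟩ : Even (k + N) := h.1.even_of_eq_inv (heq N (by omega)) ⟨n, by omega⟩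
  refine ⟨n', fun j ⟨hj, hj'⟩ ↦ ?_⟩
  convert heq (j + N).toNat (by omega) using 2
  · omega
  · congr 1; omega

theorem exists_sameLabels_sign_eq (h : IsQuasiPeriodic ρ) (N : ℕ) (d : Frame) : ∃ M : ℕ, ∀ m : ℤ,
    ∃ d' : Frame, d'.sign = d.sign ∧ m ≤ d'.shift ∧ d'.shift ≤ m + M ∧
      SameLabels (fun m ↦ (ρ m).sign) (Icc (-N) N) d' d := by
  obtain ⟨M, hM⟩ := h.exists_translate_eq d.shift N
  refine ⟨M, fun m ↦ ?_⟩
  obtain ⟨n', hm, hM', heq⟩ := hM m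
  refine ⟨⟨n', d.sign⟩, rfl, hm, hM', fun j hj ↦ ?_⟩
  simp only [label, smul_int_def]
  rw [heq]
  rcases Int.units_eq_one_or d.sign with hd | hd
  · simpa [hd] using hj
  · simpa [hd, and_comm, neg_le] using hj

theorem exists_sameLabels_sign_neg (h : IsQuasiPeriodic ρ) (N : ℕ) (d : Frame) : ∃ d' : Frame,
    d'.sign = -d.sign ∧ SameLabels (fun m ↦ (ρ m).sign) (Icc (-N) N) d' d := by
  obtain ⟨n', heq⟩ := h.exists_reflect_eq d.shift N
  refine ⟨⟨n', -d.sign⟩, rfl, fun j hj ↦ ?_⟩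
  simp only [label, smul_int_def]
  rcases Int.units_eq_one_or d.sign with hd | hd
  · have hneg := heq (-j) (by simpa [and_comm, neg_le] using hj)
    simp [hd, hneg, Letter.sign_inv]
  · simp [hd, heq j hj, Letter.sign_inv, sub_eq_add_neg]

theorem exists_sameLabels (h : IsQuasiPeriodic ρ) (N : ℕ) (d : Frame) (η : ℤˣ) : ∃ M : ℕ,
    ∀ m : ℤ, ∃ d' : Frame, d'.sign = η ∧ m ≤ d'.shift ∧ d'.shift ≤ m + M ∧
      SameLabels (fun m ↦ (ρ m).sign) (Icc (-N) N) d' d := by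
  obtain ⟨d₀, hd₀, hsame⟩ : ∃ d₀ : Frame, d₀.sign = η ∧
      SameLabels (fun m ↦ (ρ m).sign) (Icc (-N) N) d₀ d := by
    rcases eq_or_ne d.sign η with hη | hη
    · exact ⟨d, hη, SameLabels.refl _ _ d⟩
    · obtain ⟨d', hd', hsame⟩ := h.exists_sameLabels_sign_neg N d
      exact ⟨d', by rw [hd', Int.units_ne_iff_eq_neg.mp hη, neg_neg], hsame⟩
  obtain ⟨M, hM⟩ := h.exists_sameLabels_sign_eq N d₀
  refine ⟨M, fun m ↦ ?_⟩
  obtain ⟨d', hd', hm, hM', hsame'⟩ := hM m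
  exact ⟨d', hd'.trans hd₀, hm, hM', hsame'.trans hsame⟩

-- A period would propagate a reflected copy of one period to a symmetry of the whole labelling
-- reversing the orientation, and the centre of that symmetry would be labelled by its own inverse.
theorem eq_one_of_sameLabels_univ (h : IsQuasiPeriodic ρ) {d : Frame}
    (hd : SameLabels (fun m ↦ (ρ m).sign) Set.univ d 1) : d = 1 := by
  rcases d.translation_or_reflection with ⟨he, -, hi⟩ | ⟨he, -, -⟩
  · by_contra hne
    have hshift : 2 * d.shift ≠ 0 := fun h₀ ↦ hne (Frame.ext (by simpa using h₀) he)
    have hper : Function.Periodic (fun m ↦ (ρ m).sign) (2 * d.shift) := by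
      intro j
      have hj := hd j (mem_univ _)
      rwa [label_one, label, he, hi, one_mul, add_comm] at hj
    obtain ⟨d', hd', hsame⟩ := h.exists_sameLabels_sign_neg (2 * d.shift).natAbs 1
    exact not_sameLabels_univ_one hd' (hsame.univ_of_periodic hper hshift (Int.abs_eq_natAbs _).le)
  · exact absurd hd (not_sameLabels_univ_one he)

theorem isAperiodicRecurrent (h : IsQuasiPeriodic ρ) :
    IsAperiodicRecurrent fun m ↦ (ρ m).sign where
  recurrent := h.exists_sameLabels
  aperiodic B := by
    have hdistinct (d : Frame) : ∃ j : ℤ, d ≠ 1 →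
        label (fun m ↦ (ρ m).sign) d j ≠ label (fun m ↦ (ρ m).sign) 1 j := by
      by_contra! hcon
      exact (hcon 0).1 (h.eq_one_of_sameLabels_univ fun j _ ↦ (hcon j).2)
    choose f hf using hdistinct
    obtain ⟨N, hN⟩ := ((finite_setOf_abs_shift_le B).image fun d ↦ (f d).natAbs).bddAbove
    refine ⟨N, fun d hd ↦ ?_⟩
    by_contra! hcon
    have hle : (f d).natAbs ≤ N := hN ⟨d, hcon.2, rfl⟩
    exact hf d hcon.1 (hd _ ⟨by omega, by omega⟩)

end IsQuasiPeriodic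

/-! ### Labelled copies of homeomorphisms of the unit interval -/

/-- `g` acts as `ν` on each interval of length one centred at a half-integer of index congruent to
`j` modulo `2`, in the orientation prescribed by the labels `r`. For `j = 1` and `j = 0` these are
the homeomorphisms `ζ` and `χ` associated with `ν`. -/
def IsLabelledCopy (r : ℤ → ℤˣ) (j : ℤ) (ν g : ℝ ≃o ℝ) : Prop :=
  ∀ d : Frame, label r d j = 1 → ∀ w ∈ Icc (0 : ℝ) 1,
    g (d • (w + ((j : ℝ) - 1) / 2)) = d • (ν w + ((j : ℝ) - 1) / 2)

/-- `G` is generated by the labelled copies of the elements of `H`, the subgroup of Thompson's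
group, along an aperiodic recurrent labelling `r`. -/
structure IsLabelledGroup (r : ℤ → ℤˣ) (H G : Subgroup (ℝ ≃o ℝ)) : Prop where
  labels : IsAperiodicRecurrent r
  mem_iff : ∀ f : ℝ ≃o ℝ, f ∈ H ↔ InH f
  exists_copy : ∀ j : ℤ, j = 0 ∨ j = 1 → ∀ ν ∈ H, ∃ g ∈ G, IsLabelledCopy r j ν g
  le_closure : G ≤ Subgroup.closure
    {g | ∃ j : ℤ, (j = 0 ∨ j = 1) ∧ ∃ ν ∈ H, IsLabelledCopy r j ν g}

theorem InH.map_zero {f : ℝ ≃o ℝ} (h : InH f) : f 0 = 0 := by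
  obtain ⟨-, k, ε, hε, hzero, -⟩ := h
  simpa using hzero 0 ⟨le_rfl, hε.le⟩

theorem InH.map_one {f : ℝ ≃o ℝ} (h : InH f) : f 1 = 1 := by
  obtain ⟨-, k, ε, hε, -, hone⟩ := h
  simpa using hone 1 ⟨by linarith, le_rfl⟩

theorem InH.mapsTo_Icc {f : ℝ ≃o ℝ} (h : InH f) : MapsTo f (Icc 0 1) (Icc 0 1) := fun _ hw ↦
  ⟨h.map_zero ▸ f.monotone hw.1, (f.monotone hw.2).trans h.map_one.le⟩

theorem Frame.exists_smul_mem_cell (r : ℤ → ℤˣ) (d : Frame) {j : ℤ} (hj : j = 0 ∨ j = 1) (y : ℝ) :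
    ∃ (f : Frame) (w : ℝ), w ∈ Icc 0 1 ∧ label r (d * f) j = 1 ∧ y = f • (w + ((j : ℝ) - 1) / 2) ∧
      |((f • j : ℤ) : ℝ) - 2 * y| ≤ 1 := by
  obtain ⟨f, y, ⟨hy₀, hy₁⟩, rfl⟩ := exists_mem_Icc_smul_eq y
  have hclose : |((f • j : ℤ) : ℝ) - 2 * f • y| ≤ 1 := by
    rw [abs_smul_sub_two_mul_smul, abs_le]
    rcases hj with rfl | rfl <;> push_cast <;> constructor <;> linarith
  rcases Int.units_eq_one_or (label r (d * f) j) with h | h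
  · refine ⟨f, y - (j - 1) / 2, ⟨?_, ?_⟩, h, by rw [sub_add_cancel], hclose⟩ <;>
      rcases hj with rfl | rfl <;> push_cast <;> linarith
  · refine ⟨f * reflection j, (j + 1) / 2 - y, ⟨?_, ?_⟩, ?_, ?_, ?_⟩
    · rcases hj with rfl | rfl <;> push_cast <;> linarith
    · rcases hj with rfl | rfl <;> push_cast <;> linarith
    · rw [← mul_assoc, label_mul_reflection, h, neg_neg]
    · rw [mul_smul, reflection_smul]; congr 1; ring
    · rwa [mul_smul, reflection_smul_int, two_mul, add_sub_cancel_right]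

namespace IsLabelledCopy

variable {r : ℤ → ℤˣ} {j : ℤ} {ν ν' g g' : ℝ ≃o ℝ}

theorem unique (hj : j = 0 ∨ j = 1) (h : IsLabelledCopy r j ν g) (h' : IsLabelledCopy r j ν g') :
    g = g' := by
  ext x
  obtain ⟨f, w, hw, hlabel, rfl, -⟩ := exists_smul_mem_cell r 1 hj x
  rw [one_mul] at hlabel
  rw [h f hlabel w hw, h' f hlabel w hw]

theorem one (r : ℤ → ℤˣ) (j : ℤ) : IsLabelledCopy r j 1 1 := fun _ _ _ _ ↦ rfl

theorem mul (h : IsLabelledCopy r j ν g) (h' : IsLabelledCopy r j ν' g')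
    (hν' : MapsTo ν' (Icc 0 1) (Icc 0 1)) : IsLabelledCopy r j (ν * ν') (g * g') := by
  intro d hd w hw
  rw [RelIso.mul_apply, h' d hd w hw, h d hd _ (hν' hw), RelIso.mul_apply]

theorem inv (h : IsLabelledCopy r j ν g) (hν : MapsTo (ν⁻¹ : ℝ ≃o ℝ) (Icc 0 1) (Icc 0 1)) :
    IsLabelledCopy r j ν⁻¹ g⁻¹ := by
  intro d hd w hw
  have hg := h d hd _ (hν hw)
  rw [RelIso.apply_inv_self] at hg
  rw [← hg, RelIso.inv_apply_self]

end IsLabelledCopy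

theorem IsLabelledGroup.mem_of_isLabelledCopy {r : ℤ → ℤˣ} {H G : Subgroup (ℝ ≃o ℝ)}
    (hG : IsLabelledGroup r H G) {j : ℤ} (hj : j = 0 ∨ j = 1) {ν g : ℝ ≃o ℝ} (hν : ν ∈ H)
    (h : IsLabelledCopy r j ν g) : g ∈ G := by
  obtain ⟨g', hg', h'⟩ := hG.exists_copy j hj ν hν
  rwa [h.unique hj h']

section Generators

variable {ρ : ℤ → Letter}

theorem IsLabelling.sign_eq_of_even (hρ : IsLabelling ρ) {m : ℤ} (hm : Even m) :
    (ρ m).sign = 1 ∧ ρ m = .a ∨ (ρ m).sign = -1 ∧ ρ m = .A := by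
  rcases (hρ m).1 hm with h | h <;> simp [h, Letter.sign]

theorem IsLabelling.sign_eq_of_odd (hρ : IsLabelling ρ) {m : ℤ} (hm : Odd m) :
    (ρ m).sign = 1 ∧ ρ m = .b ∨ (ρ m).sign = -1 ∧ ρ m = .B := by
  rcases (hρ m).2 hm with h | h <;> simp [h, Letter.sign]

theorem IsZeta.isLabelledCopy (hρ : IsLabelling ρ) {ν ζ : ℝ ≃o ℝ} (h : IsZeta ρ ν ζ) :
    IsLabelledCopy (fun m ↦ (ρ m).sign) 1 ν ζ := by
  rintro d hd w ⟨hw₀, hw₁⟩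
  rw [Int.cast_one, sub_self, zero_div, add_zero, add_zero]
  rcases d.translation_or_reflection with ⟨he, hp, hi⟩ | ⟨he, hp, hi⟩ <;>
    rw [label, he, hi] at hd <;> rw [hp, hp]
  · rcases hρ.sign_eq_of_odd ⟨d.shift, rfl⟩ with ⟨-, hb⟩ | ⟨hsign, -⟩
    · rw [(h d.shift _ ⟨by linarith, by linarith⟩).1 hb, add_sub_cancel_left]
    · rw [hsign] at hd
      exact absurd hd (by decide)
  · rw [show 2 * d.shift - 1 = 2 * (d.shift - 1) + 1 by ring] at hd
    rcases hρ.sign_eq_of_odd ⟨d.shift - 1, rfl⟩ with ⟨hsign, -⟩ | ⟨-, hB⟩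
    · rw [hsign] at hd
      exact absurd hd (by decide)
    · rw [(h (d.shift - 1) _ ⟨by push_cast; linarith, by push_cast; linarith⟩).2 hB]
      push_cast
      ring_nf

theorem IsChi.isLabelledCopy (hρ : IsLabelling ρ) {ν χ : ℝ ≃o ℝ} (h : IsChi ρ ν χ) :
    IsLabelledCopy (fun m ↦ (ρ m).sign) 0 ν χ := by
  rintro d hd w ⟨hw₀, hw₁⟩
  rw [Int.cast_zero]
  rcases d.translation_or_reflection with ⟨he, hp, hi⟩ | ⟨he, hp, hi⟩ <;>
    rw [label, he, hi] at hd <;> rw [hp, hp] <;>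
    simp only [add_zero, sub_zero] at hd
  · rcases hρ.sign_eq_of_even (even_two_mul d.shift) with ⟨-, ha⟩ | ⟨hsign, -⟩
    · rw [(h d.shift _ ⟨by linarith, by linarith⟩).1 ha]
      ring_nf
    · rw [hsign] at hd
      exact absurd hd (by decide)
  · rcases hρ.sign_eq_of_even (even_two_mul d.shift) with ⟨hsign, -⟩ | ⟨-, hA⟩
    · rw [hsign] at hd
      exact absurd hd (by decide)
    · rw [(h d.shift _ ⟨by linarith, by linarith⟩).2 hA]
      ring_nf

theorem IsQuasiPeriodic.isLabelledGroup (hρ : IsQuasiPeriodic ρ) {ι : Type*}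
    {H G : Subgroup (ℝ ≃o ℝ)} (hH : ∀ f : ℝ ≃o ℝ, f ∈ H ↔ InH f) {ν ζ χ : ι → ℝ ≃o ℝ}
    (hgen : Subgroup.closure (range ν) = H) (hζ : ∀ i, IsZeta ρ (ν i) (ζ i))
    (hχ : ∀ i, IsChi ρ (ν i) (χ i)) (hG : G = Subgroup.closure (range ζ ∪ range χ)) :
    IsLabelledGroup (fun m ↦ (ρ m).sign) H G where
  labels := hρ.isAperiodicRecurrent
  mem_iff := hH
  exists_copy j hj ν' hν' := by
    have hmapsTo {f : ℝ ≃o ℝ} (hf : f ∈ H) : MapsTo f (Icc 0 1) (Icc 0 1) :=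
      ((hH f).mp hf).mapsTo_Icc
    rw [← hgen] at hν'
    induction hν' using Subgroup.closure_induction with
    | mem x hx =>
      obtain ⟨i, rfl⟩ := hx
      rcases hj with rfl | rfl
      · exact ⟨χ i, hG ▸ Subgroup.subset_closure (.inr ⟨i, rfl⟩), (hχ i).isLabelledCopy hρ.1⟩
      · exact ⟨ζ i, hG ▸ Subgroup.subset_closure (.inl ⟨i, rfl⟩), (hζ i).isLabelledCopy hρ.1⟩
    | one => exact ⟨1, G.one_mem, .one _ j⟩
    | mul x y _ hy ihx ihy =>
      obtain ⟨g, hg, hcopy⟩ := ihx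
      obtain ⟨g', hg', hcopy'⟩ := ihy
      exact ⟨g * g', G.mul_mem hg hg', hcopy.mul hcopy' (hmapsTo (hgen ▸ hy))⟩
    | inv x hx ihx =>
      obtain ⟨g, hg, hcopy⟩ := ihx
      exact ⟨g⁻¹, G.inv_mem hg, hcopy.inv (hmapsTo (H.inv_mem (hgen ▸ hx)))⟩
  le_closure := by
    have hν (i : ι) : ν i ∈ H := hgen ▸ Subgroup.subset_closure ⟨i, rfl⟩
    rw [hG]
    apply Subgroup.closure_mono
    rintro _ (⟨i, rfl⟩ | ⟨i, rfl⟩)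
    · exact ⟨1, .inr rfl, ν i, hν i, (hζ i).isLabelledCopy hρ.1⟩
    · exact ⟨0, .inl rfl, ν i, hν i, (hχ i).isLabelledCopy hρ.1⟩

end Generators

/-! ### Locality -/

/-- `g` has bounded displacement and its germ at a point depends only on the labels in a
neighbourhood of that point. -/
structure IsLabelLocal (r : ℤ → ℤˣ) (g : ℝ ≃o ℝ) : Prop where
  bounded : ∃ B : ℝ, ∀ x, |g x - x| ≤ B
  conj_eq : ∀ K : ℝ, ∃ R : ℕ, ∀ d d' : Frame, SameLabels r (Icc (-R) R) d d' →
    ∀ y : ℝ, |y| ≤ K → conj d g y = conj d' g y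

theorem Frame.SameLabels.mono_radius {r : ℤ → ℤˣ} {R R' : ℕ} {d d' : Frame}
    (h : SameLabels r (Icc (-R) R) d d') (hR : R' ≤ R) : SameLabels r (Icc (-R') R') d d' :=
  h.mono (Icc_subset_Icc (by simpa using hR) (by exact_mod_cast hR))

theorem Frame.abs_conj_sub_le (d : Frame) {g : ℝ ≃o ℝ} {B : ℝ} (hB : ∀ x, |g x - x| ≤ B) (y : ℝ) :
    |conj d g y - y| ≤ B := by
  rw [conj_apply, ← d.abs_smul_sub_smul, smul_inv_smul]
  exact hB _

theorem abs_inv_sub_le {g : ℝ ≃o ℝ} {B : ℝ} (hB : ∀ x, |g x - x| ≤ B) (x : ℝ) :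
    |g⁻¹ x - x| ≤ B := by
  simpa [abs_sub_comm] using hB (g⁻¹ x)

theorem abs_le_add_of_abs_sub_le {x y K B : ℝ} (hxy : |x - y| ≤ B) (hy : |y| ≤ K) :
    |x| ≤ K + B := by
  linarith [abs_sub_abs_le_abs_sub x y]

theorem IsLabelledCopy.conj_apply_eq {r : ℤ → ℤˣ} {j : ℤ} {ν g : ℝ ≃o ℝ}
    (h : IsLabelledCopy r j ν g) (hj : j = 0 ∨ j = 1) (d : Frame) (y : ℝ) :
    ∃ (f : Frame) (w : ℝ), w ∈ Icc 0 1 ∧ y = f • (w + ((j : ℝ) - 1) / 2) ∧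
      |((f • j : ℤ) : ℝ) - 2 * y| ≤ 1 ∧ ∀ d' : Frame, label r d' (f • j) = label r d (f • j) →
        conj d' g y = f • (ν w + ((j : ℝ) - 1) / 2) := by
  obtain ⟨f, w, hw, hlabel, hy, hclose⟩ := exists_smul_mem_cell r d hj y
  refine ⟨f, w, hw, hy, hclose, fun d' hd' ↦ ?_⟩
  have hlabel' : label r (d' * f) j = 1 := by rw [label_mul, hd', ← label_mul, hlabel]
  rw [conj_apply, hy, ← mul_smul, h _ hlabel' w hw, mul_smul, inv_smul_smul]

theorem IsLabelledCopy.isLabelLocal {r : ℤ → ℤˣ} {j : ℤ} {ν g : ℝ ≃o ℝ}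
    (h : IsLabelledCopy r j ν g) (hj : j = 0 ∨ j = 1) (hν : MapsTo ν (Icc 0 1) (Icc 0 1)) :
    IsLabelLocal r g where
  bounded := by
    refine ⟨1, fun x ↦ ?_⟩
    obtain ⟨f, w, hw, hx, -, hconj⟩ := h.conj_apply_eq hj 1 x
    have hg := hconj 1 rfl
    rw [conj_apply, inv_one, one_smul, one_smul] at hg
    rw [hg, hx, f.abs_smul_sub_smul, add_sub_add_right_eq_sub, abs_le]
    have hνw := hν hw
    constructor <;> linarith [hw.1, hw.2, hνw.1, hνw.2]
  conj_eq K := by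
    refine ⟨⌈2 * K + 1⌉₊, fun d d' hsame y hy ↦ ?_⟩
    obtain ⟨f, w, -, -, hclose, hconj⟩ := h.conj_apply_eq hj d y
    have hindex : |((f • j : ℤ) : ℝ)| ≤ ⌈2 * K + 1⌉₊ := by
      refine (abs_le_add_of_abs_sub_le hclose ?_).trans (Nat.le_ceil _)
      rw [abs_mul, abs_two]
      linarith
    rw [hconj d rfl, hconj d' (hsame _ (abs_le.mp (by exact_mod_cast hindex))).symm]

namespace IsLabelLocal

variable {r : ℤ → ℤˣ} {g h : ℝ ≃o ℝ}

theorem one (r : ℤ → ℤˣ) : IsLabelLocal r 1 where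
  bounded := ⟨0, by simp⟩
  conj_eq _ := ⟨0, fun _ _ _ _ _ ↦ by simp⟩

theorem mul (hg : IsLabelLocal r g) (hh : IsLabelLocal r h) : IsLabelLocal r (g * h) := by
  obtain ⟨B, hB⟩ := hg.bounded
  obtain ⟨B', hB'⟩ := hh.bounded
  refine ⟨⟨B + B', fun x ↦ ?_⟩, fun K ↦ ?_⟩
  · exact (abs_sub_le _ (h x) _).trans (add_le_add (hB _) (hB' _))
  · obtain ⟨R, hR⟩ := hg.conj_eq (K + B')
    obtain ⟨R', hR'⟩ := hh.conj_eq K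
    refine ⟨max R R', fun d d' hsame y hy ↦ ?_⟩
    rw [map_mul, map_mul, RelIso.mul_apply, RelIso.mul_apply,
      hR' d d' (hsame.mono_radius (le_max_right _ _)) y hy]
    exact hR d d' (hsame.mono_radius (le_max_left _ _)) _
      (abs_le_add_of_abs_sub_le (d'.abs_conj_sub_le hB' y) hy)

theorem inv (hg : IsLabelLocal r g) : IsLabelLocal r g⁻¹ := by
  obtain ⟨B, hB⟩ := hg.bounded
  refine ⟨⟨B, abs_inv_sub_le hB⟩, fun K ↦ ?_⟩
  obtain ⟨R, hR⟩ := hg.conj_eq (K + B)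
  refine ⟨R, fun d d' hsame y hy ↦ (conj d' g).injective ?_⟩
  rw [← hR d d' hsame _ (abs_le_add_of_abs_sub_le (d.abs_conj_sub_le (abs_inv_sub_le hB) y) hy),
    map_inv, map_inv, RelIso.apply_inv_self, RelIso.apply_inv_self]

end IsLabelLocal

theorem IsLabelledGroup.isLabelLocal {r : ℤ → ℤˣ} {H G : Subgroup (ℝ ≃o ℝ)}
    (hG : IsLabelledGroup r H G) {g : ℝ ≃o ℝ} (hg : g ∈ G) : IsLabelLocal r g := by
  replace hg := hG.le_closure hg
  induction hg using Subgroup.closure_induction with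
  | mem x hx =>
    obtain ⟨j, hj, ν, hν, h⟩ := hx
    exact h.isLabelLocal hj ((hG.mem_iff ν).mp hν).mapsTo_Icc
  | one => exact .one r
  | mul x y _ _ ihx ihy => exact ihx.mul ihy
  | inv x _ ihx => exact ihx.inv

-- The displacements of `g` at two recurrences of the origin, one in each orientation, have opposite
-- signs.
theorem IsLabelLocal.exists_fixed {r : ℤ → ℤˣ} (hr : IsAperiodicRecurrent r) {g : ℝ ≃o ℝ}
    (hg : IsLabelLocal r g) (B : ℝ) : ∃ x, B < x ∧ g x = x := by
  obtain ⟨R, hR⟩ := hg.conj_eq 0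
  have hdisplacement (η : ℤˣ) :
      ∃ n : ℤ, ⌊B⌋ + 1 ≤ n ∧ g (n : ℝ) - (n : ℝ) = (η : ℤ) * g 0 := by
    obtain ⟨M, hM⟩ := hr.recurrent R 1 η
    obtain ⟨d, rfl, hd, -, hsame⟩ := hM (⌊B⌋ + 1)
    have hzero : g (d • (0 : ℝ)) = d • g 0 := by
      rw [← smul_conj_apply, hR d 1 hsame 0 (by simp), conj_apply, inv_one, one_smul, one_smul]
    refine ⟨d.shift, hd, ?_⟩
    rw [smul_real_def, smul_real_def, mul_zero, add_zero] at hzero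
    rw [hzero, add_sub_cancel_left]
  obtain ⟨m, hm, hgm⟩ := hdisplacement 1
  obtain ⟨n, hn, hgn⟩ := hdisplacement (-1)
  have hcont : Continuous fun x ↦ g x - x := g.continuous.sub continuous_id
  have hzero : (0 : ℝ) ∈ uIcc (g (m : ℝ) - m) (g (n : ℝ) - n) := by
    rw [hgm, hgn, Set.mem_uIcc]
    simp [le_total]
  obtain ⟨x, hx, hgx⟩ := intermediate_value_uIcc hcont.continuousOn hzero
  refine ⟨x, (Int.lt_floor_add_one B).trans_le ?_, sub_eq_zero.mp hgx⟩
  calc (⌊B⌋ : ℝ) + 1 ≤ min (m : ℝ) n := le_min (by exact_mod_cast hm) (by exact_mod_cast hn)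
    _ ≤ x := hx.1

/-! ### Explicit piecewise linear homeomorphisms -/

/-- The pointwise maximum of two order isomorphisms. -/
def supIso {α β : Type*} [LinearOrder α] [LinearOrder β] (f g : α ≃o β) : α ≃o β where
  toFun x := max (f x) (g x)
  invFun y := min (f.symm y) (g.symm y)
  left_inv x := by
    rcases le_total (f x) (g x) with h | h
    · simp [h, (f.le_symm_apply).mpr h]
    · simp [h, (g.le_symm_apply).mpr h]
  right_inv y := by
    rcases le_total (f.symm y) (g.symm y) with h | h
    · simp [h, (g.le_symm_apply).mp h]
    · simp [h, (f.le_symm_apply).mp h]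
  map_rel_iff' {_ _} := StrictMono.le_iff_le (f := fun x ↦ max (f x) (g x)) fun _ _ h ↦
    max_lt_max (f.strictMono h) (g.strictMono h)

/-- The pointwise minimum of two order isomorphisms. -/
def infIso {α β : Type*} [LinearOrder α] [LinearOrder β] (f g : α ≃o β) : α ≃o β :=
  (supIso f.symm g.symm).symm

@[simp] theorem supIso_apply {α β : Type*} [LinearOrder α] [LinearOrder β] (f g : α ≃o β) (x : α) :
    supIso f g x = max (f x) (g x) := rfl

@[simp] theorem infIso_apply {α β : Type*} [LinearOrder α] [LinearOrder β] (f g : α ≃o β) (x : α) :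
    infIso f g x = min (f x) (g x) := rfl

/-- The increasing affine map `x ↦ a * x + b`. -/
noncomputable def affineIso (a : ℝ) (ha : 0 < a) (b : ℝ) : ℝ ≃o ℝ :=
  (OrderIso.mulLeft₀ a ha).trans (OrderIso.addRight b)

@[simp] theorem affineIso_apply {a : ℝ} (ha : 0 < a) (b x : ℝ) :
    affineIso a ha b x = a * x + b := rfl

/-- The piecewise linear map supported on `[p, c]` that has slope `2` on `[p, p + ε]`, is the
translation by `ε` on `[p + ε, c - 2 * ε]`, and has slope `1 / 2` on `[c - 2 * ε, c]`. -/
noncomputable def bump (p ε c : ℝ) : ℝ ≃o ℝ :=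
  supIso 1 (infIso (infIso (affineIso 2 (by norm_num) (-p)) (affineIso 1 (by norm_num) ε))
    (affineIso (1 / 2) (by norm_num) (c / 2)))

section Bump

variable {p ε c t : ℝ}

theorem bump_apply (p ε c t : ℝ) :
    bump p ε c t = max t (min (min (2 * t - p) (t + ε)) ((t + c) / 2)) := by
  simp only [bump, supIso_apply, infIso_apply, affineIso_apply, RelIso.one_apply]
  ring_nf

theorem bump_eq_self_of_le (h : t ≤ p) : bump p ε c t = t := by
  rw [bump_apply, max_eq_left (min_le_of_left_le (min_le_of_left_le (by linarith)))]

theorem bump_eq_self_of_ge (h : c ≤ t) : bump p ε c t = t := by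
  rw [bump_apply, max_eq_left (min_le_of_right_le (by linarith))]

theorem bump_eq_expand (hc : p + 3 * ε ≤ c) (ht : t ∈ Icc p (p + ε)) :
    bump p ε c t = 2 * t - p := by
  obtain ⟨h, h'⟩ := ht
  rw [bump_apply, min_eq_left (a := 2 * t - p) (by linarith), min_eq_left (by linarith),
    max_eq_right (by linarith)]

theorem bump_eq_translate (hε : 0 ≤ ε) (ht : t ∈ Icc (p + ε) (c - 2 * ε)) :
    bump p ε c t = t + ε := by
  obtain ⟨h, h'⟩ := ht
  rw [bump_apply, min_eq_right (a := 2 * t - p) (by linarith), min_eq_left (by linarith),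
    max_eq_right (le_add_of_nonneg_right hε)]

theorem bump_eq_contract (hc : p + 3 * ε ≤ c) (ht : t ∈ Icc (c - 2 * ε) c) :
    bump p ε c t = (t + c) / 2 := by
  obtain ⟨h, h'⟩ := ht
  rw [bump_apply, min_eq_right (a := 2 * t - p) (by linarith), min_eq_right (by linarith),
    max_eq_right (by linarith)]

theorem lt_bump (hε : 0 < ε) (ht : t ∈ Ioo p c) : t < bump p ε c t := by
  obtain ⟨h, h'⟩ := ht
  rw [bump_apply]
  refine lt_max_of_lt_right (lt_min (lt_min ?_ ?_) ?_) <;> linarith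

end Bump

/-! ### Dyadic rationals and elements of Thompson's group -/

theorem isDyadic_intCast (a : ℤ) : IsDyadic a := ⟨a, 0, by simp⟩

theorem isDyadic_half_pow (k : ℕ) : IsDyadic ((1 / 2 : ℝ) ^ k) := ⟨1, k, by simp⟩

theorem isDyadic_half : IsDyadic (1 / 2 : ℝ) := by simpa using isDyadic_half_pow 1

theorem IsDyadic.add {x y : ℝ} (hx : IsDyadic x) (hy : IsDyadic y) : IsDyadic (x + y) := by
  obtain ⟨a, b, rfl⟩ := hx
  obtain ⟨a', b', rfl⟩ := hy
  refine ⟨a * 2 ^ b' + a' * 2 ^ b, b + b', ?_⟩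
  push_cast
  field_simp
  ring

theorem IsDyadic.mul {x y : ℝ} (hx : IsDyadic x) (hy : IsDyadic y) : IsDyadic (x * y) := by
  obtain ⟨a, b, rfl⟩ := hx
  obtain ⟨a', b', rfl⟩ := hy
  refine ⟨a * a', b + b', ?_⟩
  push_cast
  field_simp
  ring

theorem IsDyadic.neg {x : ℝ} (hx : IsDyadic x) : IsDyadic (-x) := by
  simpa using (isDyadic_intCast (-1)).mul hx

theorem IsDyadic.sub {x y : ℝ} (hx : IsDyadic x) (hy : IsDyadic y) : IsDyadic (x - y) :=
  sub_eq_add_neg x y ▸ hx.add hy.neg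

theorem exists_half_pow_lt {δ : ℝ} (hδ : 0 < δ) : ∃ k : ℕ, (1 / 2 : ℝ) ^ k < δ :=
  exists_pow_lt_of_lt_one hδ (by norm_num)

theorem exists_isDyadic_btwn {x y : ℝ} (h : x < y) : ∃ q, IsDyadic q ∧ x < q ∧ q < y := by
  obtain ⟨n, hn⟩ := exists_half_pow_lt (sub_pos.mpr h)
  have hp : (0 : ℝ) < 2 ^ n := by positivity
  rw [div_pow, one_pow, div_lt_iff₀ hp] at hn
  refine ⟨((⌊x * 2 ^ n⌋ + 1 : ℤ) : ℝ) / 2 ^ n, ⟨_, n, rfl⟩, ?_, ?_⟩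
  · rw [lt_div_iff₀ hp]
    push_cast
    exact Int.lt_floor_add_one _
  · rw [div_lt_iff₀ hp]
    push_cast
    linarith [Int.floor_le (x * 2 ^ n)]

/-- `f` is affine on `s` with slope an integer power of `2`, as required on each piece of an element
of Thompson's group. -/
def IsPowTwoAffineOn (f : ℝ → ℝ) (s : Set ℝ) : Prop :=
  ∃ (k : ℤ) (c : ℝ), ∀ t ∈ s, f t = 2 ^ k * t + c

theorem isPowTwoAffineOn_of_eq_self {f : ℝ → ℝ} {s : Set ℝ} (h : ∀ t ∈ s, f t = t) :
    IsPowTwoAffineOn f s :=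
  ⟨0, 0, fun t ht ↦ by simp [h t ht]⟩

theorem IsPowTwoAffineOn.reflect {f : ℝ → ℝ} (hf : ∀ t, f (1 - t) = 1 - f t) {a b : ℝ}
    (h : IsPowTwoAffineOn f (Icc a b)) : IsPowTwoAffineOn f (Icc (1 - b) (1 - a)) := by
  obtain ⟨k, c, h⟩ := h
  refine ⟨k, 1 - 2 ^ k - c, fun t ht ↦ ?_⟩
  have ht' := h (1 - t) ⟨by linarith [ht.2], by linarith [ht.1]⟩
  rw [hf] at ht'
  linarith

theorem eq_self_of_notMem_Icc {f : ℝ → ℝ} {a b : ℝ} (ha : ∀ t ≤ a, f t = t)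
    (hb : ∀ t, b ≤ t → f t = t) : ∀ t ∉ Icc a b, f t = t := by
  intro t ht
  rw [Set.mem_Icc, not_and_or, not_le, not_le] at ht
  exact ht.elim (fun h ↦ ha t h.le) fun h ↦ hb t h.le

theorem bump_inThompsonF {p c : ℝ} {k : ℕ} (hp : IsDyadic p) (hc : IsDyadic c) (h0 : 0 < p)
    (h1 : c < 1) (h : p + 3 * (1 / 2 : ℝ) ^ k < c) : InThompsonF (bump p ((1 / 2) ^ k) c) := by
  have hε : (0 : ℝ) < (1 / 2) ^ k := by positivity
  set ε : ℝ := (1 / 2) ^ k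
  have hεd : IsDyadic ε := isDyadic_half_pow k
  refine ⟨eq_self_of_notMem_Icc (fun t ht ↦ bump_eq_self_of_le (ht.trans h0.le))
    fun t ht ↦ bump_eq_self_of_ge (h1.le.trans ht), 5, ![0, p, p + ε, c - 2 * ε, c, 1], rfl, rfl,
    Fin.strictMono_iff_lt_succ.mpr fun i ↦ ?_, fun i ↦ ?_, fun i ↦ ?_⟩
  · fin_cases i <;> simp <;> linarith
  · fin_cases i
    exacts [by simpa using isDyadic_intCast 0, hp, hp.add hεd,
      hc.sub (by simpa using (isDyadic_intCast 2).mul hεd), hc, by simpa using isDyadic_intCast 1]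
  · fin_cases i
    · exact isPowTwoAffineOn_of_eq_self fun t ht ↦ bump_eq_self_of_le ht.2
    · exact ⟨1, -p, fun t ht ↦ by rw [bump_eq_expand h.le ht, zpow_one, sub_eq_add_neg]⟩
    · exact ⟨0, ε, fun t ht ↦ by rw [bump_eq_translate hε.le ht, zpow_zero, one_mul]⟩
    · exact ⟨-1, c / 2, fun t ht ↦ by rw [bump_eq_contract h.le ht]; norm_num; ring⟩
    · exact isPowTwoAffineOn_of_eq_self fun t ht ↦ bump_eq_self_of_ge ht.1

theorem bump_inH {p c : ℝ} {k : ℕ} (hp : IsDyadic p) (hc : IsDyadic c) (h0 : 0 < p) (h1 : c < 1)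
    (h : p + 3 * (1 / 2 : ℝ) ^ k < c) : InH (bump p ((1 / 2) ^ k) c) := by
  refine ⟨bump_inThompsonF hp hc h0 h1 h, 0, min p (1 - c), lt_min h0 (by linarith),
    fun t ht ↦ ?_, fun t ht ↦ ?_⟩
  · rw [bump_eq_self_of_le (ht.2.trans (min_le_left _ _)), zpow_zero, one_mul]
  · rw [bump_eq_self_of_ge (by linarith [ht.1, min_le_right p (1 - c)])]
    simp

theorem exists_inH_lt_apply {a s b : ℝ} (h0 : 0 ≤ a) (h1 : b ≤ 1) (ha : a < s) (hb : s < b) :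
    ∃ ν : ℝ ≃o ℝ, InH ν ∧ (∀ t ≤ a, ν t = t) ∧ (∀ t, b ≤ t → ν t = t) ∧ s < ν s := by
  obtain ⟨p, hp, hap, hps⟩ := exists_isDyadic_btwn ha
  obtain ⟨c, hc, hsc, hcb⟩ := exists_isDyadic_btwn hb
  obtain ⟨k, hk⟩ := exists_half_pow_lt (show 0 < (c - p) / 3 by linarith)
  exact ⟨bump p ((1 / 2) ^ k) c, bump_inH hp hc (by linarith) (by linarith) (by linarith),
    fun t ht ↦ bump_eq_self_of_le (ht.trans hap.le),
    fun t ht ↦ bump_eq_self_of_ge (hcb.le.trans ht), lt_bump (by positivity) ⟨hps, hsc⟩⟩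

/-! ### Symmetric elements -/

/-- The product of `f` with its mirror image under `t ↦ 1 - t`, used when `f` fixes `[1 / 2, ∞)`. -/
def symmetrize (f : ℝ ≃o ℝ) : ℝ ≃o ℝ := f * conj (reflection 1) f

theorem conj_reflection_one_apply (f : ℝ ≃o ℝ) (t : ℝ) :
    conj (reflection 1) f t = 1 - f (1 - t) := by
  simp [conj_apply, reflection_smul]

section Symmetrize

variable {f : ℝ ≃o ℝ} {t : ℝ}

theorem symmetrize_of_le (hf : ∀ t, 1 / 2 ≤ t → f t = t) (ht : t ≤ 1 / 2) :
    symmetrize f t = f t := by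
  rw [symmetrize, RelIso.mul_apply, conj_reflection_one_apply, hf (1 - t) (by linarith),
    sub_sub_cancel]

theorem symmetrize_of_ge (hf : ∀ t, 1 / 2 ≤ t → f t = t) (ht : 1 / 2 ≤ t) :
    symmetrize f t = 1 - f (1 - t) := by
  have hmono : f (1 - t) ≤ f (1 / 2) := f.monotone (by linarith)
  rw [symmetrize, RelIso.mul_apply, conj_reflection_one_apply]
  exact hf _ (by linarith [hf (1 / 2) le_rfl])

theorem symmetrize_one_sub (hf : ∀ t, 1 / 2 ≤ t → f t = t) (t : ℝ) :
    symmetrize f (1 - t) = 1 - symmetrize f t := by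
  rcases le_total t (1 / 2) with ht | ht
  · rw [symmetrize_of_le hf ht, symmetrize_of_ge hf (by linarith), sub_sub_cancel]
  · rw [symmetrize_of_ge hf ht, symmetrize_of_le hf (by linarith), sub_sub_cancel]

end Symmetrize

theorem InThompsonF.of_symmetric {f : ℝ ≃o ℝ} (hf : ∀ t, f (1 - t) = 1 - f t) {a b : ℝ}
    (ha : IsDyadic a) (hb : IsDyadic b) (h0 : 0 < a) (hab : a < b) (hb' : b < 1 / 2)
    (hneg : ∀ t ≤ 0, f t = t) (h₁ : IsPowTwoAffineOn f (Icc 0 a))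
    (h₂ : IsPowTwoAffineOn f (Icc a b)) (h₃ : IsPowTwoAffineOn f (Icc b (1 / 2))) :
    InThompsonF f := by
  have hpos (t : ℝ) (ht : 1 ≤ t) : f t = t := by
    have h := hf (1 - t)
    rwa [hneg (1 - t) (by linarith), sub_sub_cancel] at h
  have h1 : IsDyadic 1 := by simpa using isDyadic_intCast 1
  refine ⟨eq_self_of_notMem_Icc hneg hpos, 6, ![0, a, b, 1 / 2, 1 - b, 1 - a, 1], rfl, rfl,
    Fin.strictMono_iff_lt_succ.mpr fun i ↦ ?_, fun i ↦ ?_, fun i ↦ ?_⟩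
  · fin_cases i <;> simp <;> linarith
  · fin_cases i
    exacts [by simpa using isDyadic_intCast 0, ha, hb, isDyadic_half, h1.sub hb, h1.sub ha, h1]
  · fin_cases i
    · exact h₁
    · exact h₂
    · exact h₃
    · have h := h₃.reflect hf
      rwa [show (1 : ℝ) - 1 / 2 = 1 / 2 by norm_num] at h
    · exact h₂.reflect hf
    · have h := h₁.reflect hf
      rwa [sub_zero] at h

/-- The symmetric element of `H` of slope `2` at both end points that is the identity in the middle:
it is `t ↦ 2 * t` on `[0, 1 / 8]`, has slope `1 / 2` on `[1 / 8, 3 / 8]` and is the identity on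
`[3 / 8, 1 / 2]`. -/
noncomputable def endStretch : ℝ ≃o ℝ := symmetrize (bump 0 (1 / 8) (3 / 8))

/-- The symmetric element of `H` that is the identity near the end points, with slope `2` in the
middle: the restrictions of `endStretch` to the two halves of `[0, 1]` are exchanged. -/
noncomputable def midStretch : ℝ ≃o ℝ :=
  symmetrize (conj (reflection 1) (bump (1 / 2) (1 / 8) (7 / 8)))

section Stretch

variable {t : ℝ}

theorem endStretch_of_le (ht : t ≤ 1 / 2) : endStretch t = bump 0 (1 / 8) (3 / 8) t :=
  symmetrize_of_le (fun _ h ↦ bump_eq_self_of_ge (by linarith)) ht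

theorem endStretch_one_sub (t : ℝ) : endStretch (1 - t) = 1 - endStretch t :=
  symmetrize_one_sub (fun _ h ↦ bump_eq_self_of_ge (by linarith)) t

theorem midStretch_base_eq_self (t : ℝ) (ht : 1 / 2 ≤ t) :
    conj (reflection 1) (bump (1 / 2) (1 / 8) (7 / 8)) t = t := by
  rw [conj_reflection_one_apply, bump_eq_self_of_le (by linarith), sub_sub_cancel]

theorem midStretch_of_le (ht : t ≤ 1 / 2) :
    midStretch t = 1 - bump (1 / 2) (1 / 8) (7 / 8) (1 - t) := by
  rw [midStretch, symmetrize_of_le midStretch_base_eq_self ht, conj_reflection_one_apply]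

theorem midStretch_one_sub (t : ℝ) : midStretch (1 - t) = 1 - midStretch t :=
  symmetrize_one_sub midStretch_base_eq_self t

theorem endStretch_eq_two_mul (ht : t ∈ Icc 0 (1 / 8)) : endStretch t = 2 * t := by
  rw [endStretch_of_le (by linarith [ht.2]), bump_eq_expand (by norm_num) (by simpa using ht),
    sub_zero]

theorem midStretch_eq_self_of_le (ht : t ≤ 1 / 8) : midStretch t = t := by
  rw [midStretch_of_le (by linarith), bump_eq_self_of_ge (by linarith), sub_sub_cancel]

theorem midStretch_eq_self_of_ge (ht : 7 / 8 ≤ t) : midStretch t = t := by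
  have h := midStretch_one_sub (1 - t)
  rwa [midStretch_eq_self_of_le (t := 1 - t) (by linarith), sub_sub_cancel] at h

theorem midStretch_add_half (ht : t ∈ Icc 0 (1 / 2)) :
    midStretch (t + 1 / 2) = endStretch t + 1 / 2 := by
  have h := midStretch_one_sub (1 / 2 - t)
  rw [midStretch_of_le (t := 1 / 2 - t) (by linarith [ht.1])] at h
  rw [endStretch_of_le ht.2, show t + 1 / 2 = 1 - (1 / 2 - t) by ring, h, sub_sub_cancel,
    show 1 - (1 / 2 - t) = t + 1 / 2 by ring, bump_apply, bump_apply, ← max_add_add_right,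
    ← min_add_add_right, ← min_add_add_right]
  ring_nf

theorem endStretch_add_half (ht : t ∈ Icc 0 (1 / 2)) :
    endStretch (t + 1 / 2) = midStretch t + 1 / 2 := by
  have h := midStretch_add_half (t := 1 / 2 - t) ⟨by linarith [ht.2], by linarith [ht.1]⟩
  have h' := endStretch_one_sub (1 / 2 - t)
  rw [show 1 / 2 - t + 1 / 2 = 1 - t by ring, midStretch_one_sub] at h
  rw [show 1 - (1 / 2 - t) = t + 1 / 2 by ring] at h'
  linarith

theorem isDyadic_div_eight (a : ℤ) : IsDyadic ((a : ℝ) / 8) := ⟨a, 3, by norm_num⟩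

theorem endStretch_inThompsonF : InThompsonF endStretch := by
  refine .of_symmetric endStretch_one_sub (a := 1 / 8) (b := 3 / 8)
    (by simpa using isDyadic_div_eight 1) (by simpa using isDyadic_div_eight 3)
    (by norm_num) (by norm_num) (by norm_num) (fun t ht ↦ ?_)
    ⟨1, 0, fun t ht ↦ by rw [endStretch_eq_two_mul ht]; simp⟩ ⟨-1, 3 / 16, fun t ht ↦ ?_⟩
    (isPowTwoAffineOn_of_eq_self fun t ht ↦ ?_)
  · rw [endStretch_of_le (by linarith), bump_eq_self_of_le ht]
  · rw [endStretch_of_le (by linarith [ht.2]), bump_eq_contract (by norm_num)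
      ⟨by linarith [ht.1], ht.2⟩]
    norm_num
    ring
  · rw [endStretch_of_le ht.2, bump_eq_self_of_ge ht.1]

theorem midStretch_inThompsonF : InThompsonF midStretch := by
  refine .of_symmetric midStretch_one_sub (a := 1 / 8) (b := 3 / 8)
    (by simpa using isDyadic_div_eight 1) (by simpa using isDyadic_div_eight 3)
    (by norm_num) (by norm_num) (by norm_num)
    (fun t ht ↦ midStretch_eq_self_of_le (by linarith))
    (isPowTwoAffineOn_of_eq_self fun t ht ↦ midStretch_eq_self_of_le ht.2)
    ⟨-1, 1 / 16, fun t ht ↦ ?_⟩ ⟨1, -1 / 2, fun t ht ↦ ?_⟩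
  · rw [midStretch_of_le (by linarith [ht.2]), bump_eq_contract (by norm_num)
      ⟨by linarith [ht.2], by linarith [ht.1]⟩]
    norm_num
    ring
  · rw [midStretch_of_le ht.2, bump_eq_expand (by norm_num)
      ⟨by linarith [ht.2], by linarith [ht.1]⟩]
    norm_num
    ring

end Stretch

section LabelledCopy

variable {r : ℤ → ℤˣ} {j : ℤ} {ν ν' g : ℝ ≃o ℝ}

theorem IsLabelledCopy.apply_of_symmetric (h : IsLabelledCopy r j ν g)
    (hν : ∀ t, ν (1 - t) = 1 - ν t) (d : Frame) {w : ℝ} (hw : w ∈ Icc (0 : ℝ) 1) :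
    g (d • (w + ((j : ℝ) - 1) / 2)) = d • (ν w + ((j : ℝ) - 1) / 2) := by
  rcases Int.units_eq_one_or (label r d j) with hlabel | hlabel
  · exact h d hlabel w hw
  · have hrefl := h (d * reflection j) (by rw [label_mul_reflection, hlabel, neg_neg]) (1 - w)
      ⟨by linarith [hw.2], by linarith [hw.1]⟩
    rw [hν, mul_smul, mul_smul, reflection_smul, reflection_smul] at hrefl
    convert hrefl using 3 <;> ring

theorem IsLabelledCopy.half_shift (h : IsLabelledCopy r j ν g) (hν : ∀ t, ν (1 - t) = 1 - ν t)
    (hνν' : ∀ z ∈ Icc (0 : ℝ) (1 / 2), ν (z + 1 / 2) = ν' z + 1 / 2)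
    (hν'ν : ∀ z ∈ Icc (0 : ℝ) (1 / 2), ν' (z + 1 / 2) = ν z + 1 / 2) :
    IsLabelledCopy r (1 - j) ν' g := by
  intro d _ w hw
  have htranslate (n : ℤ) {v x y : ℝ} (hv : v ∈ Icc (0 : ℝ) 1)
      (hx : x = n + (v + ((j : ℝ) - 1) / 2)) (hy : y = n + (ν v + ((j : ℝ) - 1) / 2)) :
      g (d • x) = d • y := by
    rw [hx, hy]
    simpa [mul_smul, smul_real_def ⟨n, 1⟩] using h.apply_of_symmetric hν (d * ⟨n, 1⟩) hv
  rcases le_total w (1 / 2) with hw' | hw'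
  · refine htranslate (-j) (v := w + 1 / 2) ⟨by linarith [hw.1], by linarith⟩ ?_ ?_
    · push_cast
      ring
    · rw [hνν' w ⟨hw.1, hw'⟩]
      push_cast
      ring
  · have hν'w := hν'ν (w - 1 / 2) ⟨by linarith, by linarith [hw.2]⟩
    rw [sub_add_cancel] at hν'w
    refine htranslate (1 - j) (v := w - 1 / 2) ⟨by linarith, by linarith [hw.2]⟩ ?_ ?_
    · push_cast
      ring
    · rw [hν'w]
      push_cast
      ring

theorem IsLabelledCopy.midStretch_of_endStretch (h : IsLabelledCopy r j endStretch g) :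
    IsLabelledCopy r (1 - j) midStretch g :=
  h.half_shift endStretch_one_sub (fun _ ↦ endStretch_add_half) fun _ ↦ midStretch_add_half

end LabelledCopy

/-! ### Slopes at the end points -/

/-- Near the end points of `[0, 1]`, the map `f` fixes the end point and has slope `2 ^ k`. -/
def HasEndSlope (f : ℝ ≃o ℝ) (k : ℤ) : Prop :=
  ∃ ε : ℝ, 0 < ε ∧ (∀ t ∈ Icc (0 : ℝ) ε, f t = 2 ^ k * t) ∧
    ∀ t ∈ Icc (1 - ε) (1 : ℝ), f t = 1 + 2 ^ k * (t - 1)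

namespace HasEndSlope

variable {f g : ℝ ≃o ℝ} {k l : ℤ}

theorem one : HasEndSlope 1 0 := ⟨1, by norm_num, by simp, by simp⟩

theorem mul (hf : HasEndSlope f k) (hg : HasEndSlope g l) : HasEndSlope (f * g) (k + l) := by
  obtain ⟨ε, hε, hf0, hf1⟩ := hf
  obtain ⟨ε', hε', hg0, hg1⟩ := hg
  have hl : (0 : ℝ) < 2 ^ l := by positivity
  refine ⟨min ε' (ε / 2 ^ l), by positivity, fun t ht ↦ ?_, fun t ht ↦ ?_⟩
  · obtain ⟨hε't, hεt⟩ := le_min_iff.mp ht.2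
    rw [le_div_iff₀ hl] at hεt
    rw [RelIso.mul_apply, hg0 t ⟨ht.1, hε't⟩, hf0 _ ⟨mul_nonneg hl.le ht.1, by linarith⟩,
      zpow_add₀ two_ne_zero, mul_assoc]
  · obtain ⟨hε't, hεt⟩ := le_min_iff.mp (sub_le_comm.mp ht.1)
    rw [le_div_iff₀ hl] at hεt
    have hnonneg : 0 ≤ (1 - t) * 2 ^ l := mul_nonneg (sub_nonneg.mpr ht.2) hl.le
    rw [RelIso.mul_apply, hg1 t ⟨by linarith, ht.2⟩, hf1 _ ⟨by linarith, by linarith⟩,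
      zpow_add₀ two_ne_zero]
    ring

theorem inv (hf : HasEndSlope f k) : HasEndSlope f⁻¹ (-k) := by
  obtain ⟨ε, hε, h0, h1⟩ := hf
  have hk : (0 : ℝ) < 2 ^ k := by positivity
  have hinv (s t : ℝ) (h : f s = t) : f⁻¹ t = s := by rw [← h, RelIso.inv_apply_self]
  refine ⟨ε * 2 ^ k, by positivity, fun t ht ↦ hinv _ _ ?_, fun t ht ↦ hinv _ _ ?_⟩ <;>
    rw [zpow_neg, inv_mul_eq_div]
  · rw [h0 _ ⟨div_nonneg ht.1 hk.le, (div_le_iff₀ hk).mpr ht.2⟩]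
    field_simp
  · have hle : (1 - t) / 2 ^ k ≤ ε := (div_le_iff₀ hk).mpr (by linarith [ht.1])
    have hnonneg : 0 ≤ (1 - t) / 2 ^ k := div_nonneg (sub_nonneg.mpr ht.2) hk.le
    rw [← neg_sub 1 t, neg_div, h1 _ ⟨by linarith, by linarith⟩]
    field_simp
    ring

end HasEndSlope

theorem hasEndSlope_endStretch : HasEndSlope endStretch 1 := by
  refine ⟨1 / 8, by norm_num, fun t ht ↦ by rw [endStretch_eq_two_mul ht, zpow_one], fun t ht ↦ ?_⟩
  have h := endStretch_one_sub (1 - t)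
  rw [endStretch_eq_two_mul (t := 1 - t) ⟨by linarith [ht.2], by linarith [ht.1]⟩,
    sub_sub_cancel] at h
  rw [h, zpow_one]
  ring

theorem hasEndSlope_midStretch : HasEndSlope midStretch 0 :=
  ⟨1 / 8, by norm_num, fun t ht ↦ by rw [midStretch_eq_self_of_le ht.2, zpow_zero, one_mul],
    fun t ht ↦ by rw [midStretch_eq_self_of_ge (by linarith [ht.1])]; simp⟩

theorem hasEndSlope_endStretch_zpow (k : ℤ) : HasEndSlope (endStretch ^ k) k := by
  induction k using Int.induction_on with
  | zero => exact .one
  | succ i ih => exact zpow_add_one endStretch i ▸ ih.mul hasEndSlope_endStretch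
  | pred i ih => exact zpow_sub_one endStretch (-i) ▸ ih.mul hasEndSlope_endStretch.inv

theorem endStretch_inH : InH endStretch := ⟨endStretch_inThompsonF, 1, hasEndSlope_endStretch⟩

theorem midStretch_inH : InH midStretch := ⟨midStretch_inThompsonF, 0, hasEndSlope_midStretch⟩

theorem InH.exists_eq_mul_endStretch_zpow {ν : ℝ ≃o ℝ} (hν : InH ν) :
    ∃ (k : ℤ) (ν' : ℝ ≃o ℝ), ν = ν' * endStretch ^ k ∧ HasEndSlope ν' 0 := by
  obtain ⟨-, k, hk⟩ := hν
  exact ⟨k, ν * (endStretch ^ k)⁻¹, by group,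
    add_neg_cancel k ▸ HasEndSlope.mul hk (hasEndSlope_endStretch_zpow k).inv⟩

/-! ### Local elements -/

section FixedPoints

variable {α : Type*}

theorem inv_apply_eq_self [LE α] {t : α ≃o α} {x : α} (h : t x = x) : t⁻¹ x = x :=
  t.symm_apply_eq.2 h.symm

theorem apply_mem_of_forall_notMem [LE α] {f : α ≃o α} {O : Set α} (h : ∀ y ∉ O, f y = y) {y : α}
    (hy : y ∈ O) : f y ∈ O :=
  by_contra fun hn ↦ hn (by rwa [f.injective (h _ hn)])

theorem commutator_apply_eq_self [LE α] {f g : α ≃o α} {S : Set α} (hf : MapsTo (f⁻¹ : α ≃o α) S S)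
    (hg : ∀ y ∈ S, g y = y) {x : α} (hx : x ∈ S) : ⁅f, g⁆ x = x := by
  simp only [commutatorElement_def, RelIso.mul_apply]
  rw [inv_apply_eq_self (hg x hx), hg _ (hf hx), RelIso.apply_inv_self]

-- Otherwise the supremum of the orbit of `y` would be a global fixed point in `[y, u]`.
theorem exists_lt_apply_of_forall_moves [ConditionallyCompleteLinearOrder α]
    {K : Subgroup (α ≃o α)} {y u : α} (hK : ∀ s ∈ Icc y u, ∃ f ∈ K, f s ≠ s) :
    ∃ f ∈ K, u < f y := by
  by_contra! hbound
  set S : Set α := {z | ∃ f ∈ K, f y = z}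
  have hy : y ∈ S := ⟨1, K.one_mem, rfl⟩
  have hub : u ∈ upperBounds S := by
    rintro _ ⟨f, hf, rfl⟩
    exact hbound f hf
  have hle : ∀ f ∈ K, f (sSup S) ≤ sSup S := by
    intro f hf
    rw [f.map_csSup' ⟨y, hy⟩ ⟨u, hub⟩]
    refine csSup_le ⟨f y, y, hy, rfl⟩ ?_
    rintro _ ⟨_, ⟨g, hg, rfl⟩, rfl⟩
    exact le_csSup ⟨u, hub⟩ ⟨f * g, K.mul_mem hf hg, rfl⟩
  obtain ⟨f, hf, hmoves⟩ := hK (sSup S) ⟨le_csSup ⟨u, hub⟩ hy, csSup_le ⟨y, hy⟩ hub⟩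
  exact hmoves ((hle f hf).antisymm (f.symm_apply_le.1 (hle f⁻¹ (K.inv_mem hf))))

theorem exists_apply_lt_of_forall_moves [ConditionallyCompleteLinearOrder α]
    {K : Subgroup (α ≃o α)} {y u : α} (hK : ∀ s ∈ Icc u y, ∃ f ∈ K, f s ≠ s) :
    ∃ f ∈ K, f y < u := by
  obtain ⟨f, hf, h⟩ := exists_lt_apply_of_forall_moves hK
  exact ⟨f⁻¹, K.inv_mem hf, f.symm_apply_lt.2 h⟩

end FixedPoints

/-- `t` copies `f`, supported in `O`, into `d • O` for every frame `d` whose labels on `A` are those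
of `κ`, and is the identity elsewhere. -/
structure Spreads (r : ℤ → ℤˣ) (κ : Frame) (A : Set ℤ) (O : Set ℝ) (f t : ℝ ≃o ℝ) : Prop where
  off : ∀ y ∉ O, f y = y
  apply_smul : ∀ d, SameLabels r A d κ → ∀ y ∈ O, t (d • y) = d • f y
  eq_self : ∀ x, (∀ d, SameLabels r A d κ → ∀ y ∈ O, x ≠ d • y) → t x = x

/-- The translates of `O` by the frames whose labels on `A` are those of `κ` are disjoint. -/
def HasDisjointCopies (r : ℤ → ℤˣ) (κ : Frame) (A : Set ℤ) (O : Set ℝ) : Prop :=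
  ∀ d d', SameLabels r A d κ → SameLabels r A d' κ →
    ∀ y ∈ O, ∀ y' ∈ O, d • y = d' • y' → d = d'

theorem hasDisjointCopies_of_subset_half {O : Set ℝ} (hO : O ⊆ Ioo 0 (1 / 2)) (r : ℤ → ℤˣ)
    (κ : Frame) (A : Set ℤ) : HasDisjointCopies r κ A O :=
  fun _ _ _ _ _ hy _ hy' h ↦ eq_of_smul_mem_Ioo_eq (hO hy) (hO hy') h

namespace Spreads

variable {r : ℤ → ℤˣ} {κ : Frame} {A B : Set ℤ} {O O' : Set ℝ} {f g t s : ℝ ≃o ℝ}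

theorem one (r : ℤ → ℤˣ) (κ : Frame) (A : Set ℤ) (O : Set ℝ) : Spreads r κ A O 1 1 :=
  ⟨fun _ _ ↦ rfl, fun _ _ _ _ ↦ rfl, fun _ _ ↦ rfl⟩

theorem mul (hf : Spreads r κ A O f t) (hg : Spreads r κ A O g s) :
    Spreads r κ A O (f * g) (t * s) where
  off y hy := by rw [RelIso.mul_apply, hg.off y hy, hf.off y hy]
  apply_smul d hd y hy := by
    rw [RelIso.mul_apply, hg.apply_smul d hd y hy,
      hf.apply_smul d hd _ (apply_mem_of_forall_notMem hg.off hy), RelIso.mul_apply]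
  eq_self x hx := by rw [RelIso.mul_apply, hg.eq_self x hx, hf.eq_self x hx]

theorem inv_off (h : Spreads r κ A O f t) : ∀ y ∉ O, f⁻¹ y = y :=
  fun y hy ↦ inv_apply_eq_self (h.off y hy)

theorem inv (h : Spreads r κ A O f t) : Spreads r κ A O f⁻¹ t⁻¹ where
  off := h.inv_off
  apply_smul d hd y hy := by
    refine t.symm_apply_eq.2 ?_
    rw [h.apply_smul d hd _ (apply_mem_of_forall_notMem h.inv_off hy), RelIso.apply_inv_self]
  eq_self x hx := inv_apply_eq_self (h.eq_self x hx)

theorem enlarge (h : Spreads r κ A O f t) (hO : O ⊆ O') (hdisj : HasDisjointCopies r κ A O') :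
    Spreads r κ A O' f t where
  off y hy := h.off y fun hyO ↦ hy (hO hyO)
  apply_smul d hd y hy := by
    by_cases hyO : y ∈ O
    · exact h.apply_smul d hd y hyO
    rw [h.off y hyO]
    refine h.eq_self _ fun d' hd' y' hy' heq ↦ hyO ?_
    obtain rfl := hdisj d d' hd hd' y hy y' (hO hy') heq
    rwa [(smul_left_cancel_iff d).1 heq]
  eq_self x hx := h.eq_self x fun d hd y hy ↦ hx d hd y (hO hy)

theorem conj {δ : Frame} (h : Spreads r (κ * δ) {j | δ • j ∈ A} O f t) :
    Spreads r κ A {x | δ⁻¹ • x ∈ O} (conj δ⁻¹ f) t where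
  off y hy := by rw [conj_apply, h.off _ hy, inv_smul_smul]
  apply_smul d hd y hy := by
    have hd' : SameLabels r {j | δ • j ∈ A} (d * δ) (κ * δ) := by
      rw [sameLabels_mul_right]
      simpa using hd
    have hy' := h.apply_smul _ hd' _ hy
    rw [mul_smul, smul_inv_smul] at hy'
    rw [hy', conj_apply, inv_inv, mul_smul]
  eq_self x hx := by
    refine h.eq_self x fun d hd y hy heq ↦ hx (d * δ⁻¹) ?_ (δ • y) (by simpa using hy) ?_
    · rw [← inv_mul_cancel_right d δ, sameLabels_mul_right] at hd
      simpa using hd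
    · rw [mul_smul, inv_smul_smul, heq]

theorem conj_by (hf : Spreads r κ A O f t) (hBA : B ⊆ A) (hg : Spreads r κ B O' g s)
    (hO : ∀ y, g y ∈ O → y ∈ O') : Spreads r κ A (g ⁻¹' O) (g⁻¹ * f * g) (s⁻¹ * t * s) where
  off y hy := by simp only [RelIso.mul_apply, hf.off _ hy, RelIso.inv_apply_self]
  apply_smul d hd y hy := by
    have hmem : g⁻¹ (f (g y)) ∈ O' :=
      hO _ (by simpa using apply_mem_of_forall_notMem hf.off hy)
    simp only [RelIso.mul_apply]
    rw [hg.apply_smul d (hd.mono hBA) y (hO y hy), hf.apply_smul d hd _ hy]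
    refine s.symm_apply_eq.2 ?_
    rw [hg.apply_smul d (hd.mono hBA) _ hmem, RelIso.apply_inv_self]
  eq_self x hx := by
    simp only [RelIso.mul_apply]
    rw [hf.eq_self (s x), RelIso.inv_apply_self]
    intro d hd y hy heq
    have hmem : g (g⁻¹ y) ∈ O := by rwa [RelIso.apply_inv_self]
    have hs := hg.apply_smul d (hd.mono hBA) _ (hO _ hmem)
    rw [RelIso.apply_inv_self, ← heq] at hs
    exact hx d hd _ hmem (s.injective hs).symm

theorem eq_self_of_not_sameLabels (h : Spreads r κ A O f t) (hO : O ⊆ Ioo 0 (1 / 2)) {d : Frame}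
    (hd : ¬ SameLabels r A d κ) {y : ℝ} (hy : y ∈ O) : t (d • y) = d • y :=
  h.eq_self _ fun _ hd' _ hy' heq ↦ hd (eq_of_smul_mem_Ioo_eq (hO hy) (hO hy') heq ▸ hd')

theorem mapsTo_smul (h : Spreads r κ A O f t) (hO : O ⊆ Ioo 0 (1 / 2)) (d : Frame) :
    MapsTo t ((d • ·) '' O) ((d • ·) '' O) := by
  rintro _ ⟨y, hy, rfl⟩
  by_cases hd : SameLabels r A d κ
  · exact ⟨f y, apply_mem_of_forall_notMem h.off hy, (h.apply_smul d hd y hy).symm⟩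
  · exact ⟨y, hy, (h.eq_self_of_not_sameLabels hO hd hy).symm⟩

-- Where only one of the two label conditions holds, one of the two elements acts trivially.
theorem commutator (hO : O ⊆ Ioo 0 (1 / 2)) (hf : Spreads r κ A O f t)
    (hg : Spreads r κ B O g s) : Spreads r κ (A ∪ B) O ⁅f, g⁆ ⁅t, s⁆ where
  off y hy := commutator_apply_eq_self (mapsTo_singleton.2 (hf.inv_off y hy))
    (forall_eq.2 (hg.off y hy)) rfl
  apply_smul d hd y hy := by
    have hA := hd.mono subset_union_left
    have hB := hd.mono subset_union_right
    have h₁ := apply_mem_of_forall_notMem hg.inv_off hy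
    have h₂ := apply_mem_of_forall_notMem hf.inv_off h₁
    have h₃ := apply_mem_of_forall_notMem hg.off h₂
    simp only [commutatorElement_def, RelIso.mul_apply]
    rw [hg.inv.apply_smul d hB y hy, hf.inv.apply_smul d hA _ h₁, hg.apply_smul d hB _ h₂,
      hf.apply_smul d hA _ h₃]
  eq_self x hx := by
    by_cases hcopy : ∃ d : Frame, x ∈ (d • ·) '' O
    · obtain ⟨d, hxd⟩ := hcopy
      by_cases hB : SameLabels r B d κ
      · have hA : ¬ SameLabels r A d κ := by
          obtain ⟨y, hy, rfl⟩ := hxd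
          exact fun hA ↦ hx d (fun j hj ↦ hj.elim (hA j) (hB j)) y hy rfl
        rw [← commutatorElement_inv]
        refine inv_apply_eq_self (commutator_apply_eq_self (hg.inv.mapsTo_smul hO d) ?_ hxd)
        rintro _ ⟨y, hy, rfl⟩
        exact hf.eq_self_of_not_sameLabels hO hA hy
      · refine commutator_apply_eq_self (hf.inv.mapsTo_smul hO d) ?_ hxd
        rintro _ ⟨y, hy, rfl⟩
        exact hg.eq_self_of_not_sameLabels hO hB hy
    · have hne : ∀ d : Frame, ∀ y ∈ O, x ≠ d • y := fun d y hy heq ↦ hcopy ⟨d, y, hy, heq.symm⟩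
      exact commutator_apply_eq_self (mapsTo_singleton.2 (hf.inv.eq_self x fun d _ ↦ hne d))
        (forall_eq.2 (hg.eq_self x fun d _ ↦ hne d)) rfl

end Spreads

/-- The homeomorphisms supported in `O` that are spread by an element of `G` over the copies of `O`
in the frames whose labels on `A` are those of `κ`. -/
def localGroup (r : ℤ → ℤˣ) (G : Subgroup (ℝ ≃o ℝ)) (κ : Frame) (A : Set ℤ) (O : Set ℝ) :
    Subgroup (ℝ ≃o ℝ) where
  carrier := {f | ∃ t ∈ G, Spreads r κ A O f t}
  mul_mem' := fun ⟨_, ht, hf⟩ ⟨_, hs, hg⟩ ↦ ⟨_, G.mul_mem ht hs, hf.mul hg⟩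
  one_mem' := ⟨1, G.one_mem, Spreads.one r κ A O⟩
  inv_mem' := fun ⟨_, ht, hf⟩ ↦ ⟨_, G.inv_mem ht, hf.inv⟩

/-- The local group of `O` has no fixed point in `O`. -/
def MovesEverywhere (r : ℤ → ℤˣ) (G : Subgroup (ℝ ≃o ℝ)) (κ : Frame) (A : Set ℤ) (O : Set ℝ) :
    Prop :=
  ∀ s ∈ O, ∃ f ∈ localGroup r G κ A O, f s ≠ s

section localGroup

variable {r : ℤ → ℤˣ} {H G : Subgroup (ℝ ≃o ℝ)} {κ : Frame} {A : Set ℤ} {O O' : Set ℝ}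
  {f : ℝ ≃o ℝ}

theorem localGroup_off (h : f ∈ localGroup r G κ A O) : ∀ y ∉ O, f y = y :=
  let ⟨_, _, hf⟩ := h
  hf.off

theorem localGroup_enlarge (h : f ∈ localGroup r G κ A O) (hO : O ⊆ O')
    (hdisj : HasDisjointCopies r κ A O') : f ∈ localGroup r G κ A O' :=
  let ⟨t, ht, hf⟩ := h
  ⟨t, ht, hf.enlarge hO hdisj⟩

theorem localGroup_conj {δ : Frame} (h : f ∈ localGroup r G (κ * δ) {j | δ • j ∈ A} O) :
    conj δ⁻¹ f ∈ localGroup r G κ A {x | δ⁻¹ • x ∈ O} :=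
  let ⟨t, ht, hf⟩ := h
  ⟨t, ht, hf.conj⟩

theorem localGroup_conj_by {B : Set ℤ} {g : ℝ ≃o ℝ} (hf : f ∈ localGroup r G κ A O) (hBA : B ⊆ A)
    (hg : g ∈ localGroup r G κ B O') (hO : ∀ y, g y ∈ O → y ∈ O') :
    g⁻¹ * f * g ∈ localGroup r G κ A (g ⁻¹' O) :=
  let ⟨_, ht, hf⟩ := hf
  let ⟨_, hs, hg⟩ := hg
  ⟨_, G.mul_mem (G.mul_mem (G.inv_mem hs) ht) hs, hf.conj_by hBA hg hO⟩

theorem MovesEverywhere.exists_lt_apply {p q y u : ℝ} (h : MovesEverywhere r G κ A (Ioo p q))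
    (hy : y ∈ Ioo p q) (hu : u ∈ Ioo p q) : ∃ f ∈ localGroup r G κ A (Ioo p q), u < f y :=
  exists_lt_apply_of_forall_moves fun s hs ↦ h s (ordConnected_Ioo.out hy hu hs)

theorem MovesEverywhere.exists_apply_lt {p q y u : ℝ} (h : MovesEverywhere r G κ A (Ioo p q))
    (hy : y ∈ Ioo p q) (hu : u ∈ Ioo p q) : ∃ f ∈ localGroup r G κ A (Ioo p q), f y < u :=
  exists_apply_lt_of_forall_moves fun s hs ↦ h s (ordConnected_Ioo.out hu hy hs)

/-- The conjugate of a homeomorphism of the line by the translation by `c`. -/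
def translateIso (c : ℝ) (ν : ℝ ≃o ℝ) : ℝ ≃o ℝ :=
  OrderIso.addRight c * ν * (OrderIso.addRight c)⁻¹

theorem translateIso_apply (c : ℝ) (ν : ℝ ≃o ℝ) (y : ℝ) : translateIso c ν y = ν (y - c) + c := rfl

theorem IsLabelledCopy.spreads {j : ℤ} {ν g : ℝ ≃o ℝ} (h : IsLabelledCopy r j ν g)
    (hj : j = 0 ∨ j = 1) (hκ : label r κ j = 1)
    (hO : ∀ y ∈ O, y - ((j : ℝ) - 1) / 2 ∈ Icc 0 1)
    (hoff : ∀ y ∉ O, ν (y - ((j : ℝ) - 1) / 2) = y - ((j : ℝ) - 1) / 2) :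
    Spreads r κ {j} O (translateIso (((j : ℝ) - 1) / 2) ν) g where
  off y hy := by rw [translateIso_apply, hoff y hy, sub_add_cancel]
  apply_smul d hd y hy := by
    have hdj : label r d j = 1 := (hd j rfl).trans hκ
    simpa [translateIso_apply] using h d hdj _ (hO y hy)
  eq_self x hx := by
    obtain ⟨f, w, hw, hlabel, rfl, -⟩ := exists_smul_mem_cell r 1 hj x
    rw [one_mul] at hlabel
    have hnot : w + ((j : ℝ) - 1) / 2 ∉ O :=
      fun hmem ↦ hx f (forall_eq.2 (hlabel.trans hκ.symm)) _ hmem rfl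
    have hfix := hoff _ hnot
    rw [add_sub_cancel_right] at hfix
    rw [h f hlabel w hw, hfix]

theorem IsLabelledGroup.movesEverywhere_of_label_eq_one (hG : IsLabelledGroup r H G) {j : ℤ}
    (hj : j = 0 ∨ j = 1) (hκ : label r κ j = 1) {p q : ℝ} (hp : ((j : ℝ) - 1) / 2 ≤ p)
    (hq : q ≤ ((j : ℝ) - 1) / 2 + 1) : MovesEverywhere r G κ {j} (Ioo p q) := by
  rintro s ⟨hps, hsq⟩
  set c : ℝ := ((j : ℝ) - 1) / 2 with hc
  obtain ⟨ν, hν, hleft, hright, hs⟩ := exists_inH_lt_apply (a := p - c) (s := s - c) (b := q - c)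
    (by linarith) (by linarith) (by linarith) (by linarith)
  obtain ⟨g, hg, hcopy⟩ := hG.exists_copy j hj ν ((hG.mem_iff _).2 hν)
  refine ⟨translateIso c ν, ⟨g, hg, hcopy.spreads hj hκ (fun y hy ↦ ?_) fun y hy ↦ ?_⟩, ?_⟩
  · constructor <;> linarith [hy.1, hy.2]
  · rcases not_and_or.1 hy with hy | hy
    · exact hleft _ (by linarith)
    · exact hright _ (by linarith)
  · rw [translateIso_apply]
    linarith

theorem IsLabelledGroup.movesEverywhere (hG : IsLabelledGroup r H G) {j : ℤ} (hj : j = 0 ∨ j = 1)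
    (κ : Frame) {p q : ℝ} (hp : ((j : ℝ) - 1) / 2 ≤ p) (hq : q ≤ ((j : ℝ) - 1) / 2 + 1) :
    MovesEverywhere r G κ {j} (Ioo p q) := by
  rcases Int.units_eq_one_or (label r κ j) with hκ | hκ
  · exact hG.movesEverywhere_of_label_eq_one hj hκ hp hq
  rintro s ⟨hps, hsq⟩
  have hκ' : label r (κ * reflection j) j = 1 := by rw [label_mul_reflection, hκ, neg_neg]
  obtain ⟨f, hf, hfs⟩ := hG.movesEverywhere_of_label_eq_one hj hκ' (p := j - q) (q := j - p)
    (by linarith) (by linarith) (j - s) ⟨by linarith, by linarith⟩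
  have hindex : ({j} : Set ℤ) = {m | reflection j • m ∈ ({j} : Set ℤ)} := by
    ext m
    simp only [mem_singleton_iff, mem_ofPred_eq, reflection_smul_int]
    lia
  have hwindow : {x : ℝ | (reflection j)⁻¹ • x ∈ Ioo ((j : ℝ) - q) (j - p)} = Ioo p q := by
    ext x
    simp [reflection_smul, and_comm]
  rw [hindex] at hf
  refine ⟨conj (reflection j)⁻¹ f, hwindow ▸ localGroup_conj hf, fun h ↦ hfs ?_⟩
  rw [conj_apply, inv_inv, reflection_inv, reflection_smul, reflection_smul] at h
  linarith

theorem IsLabelledGroup.exists_localGroup_apply_mem_half (hG : IsLabelledGroup r H G) {j : ℤ}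
    (hj : j = 0 ∨ j = 1) (κ : Frame) {y : ℝ}
    (hy : y ∈ Ioo (((j : ℝ) - 1) / 2) (((j : ℝ) - 1) / 2 + 1)) :
    ∃ f ∈ localGroup r G κ {j} (Ioo (((j : ℝ) - 1) / 2) (((j : ℝ) - 1) / 2 + 1)),
      f y ∈ Ioo (0 : ℝ) (1 / 2) := by
  have hmoves := hG.movesEverywhere hj κ le_rfl (le_refl (((j : ℝ) - 1) / 2 + 1))
  rcases hj with rfl | rfl
  · obtain ⟨f, hf, h⟩ := hmoves.exists_lt_apply hy (u := 0) (by norm_num)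
    have hmem := apply_mem_of_forall_notMem (localGroup_off hf) hy
    exact ⟨f, hf, h, by norm_num at hmem; linarith⟩
  · obtain ⟨f, hf, h⟩ := hmoves.exists_apply_lt hy (u := 1 / 2) (by norm_num)
    have hmem := apply_mem_of_forall_notMem (localGroup_off hf) hy
    exact ⟨f, hf, by norm_num at hmem; linarith, h⟩

end localGroup

/-- For every frame and every interval inside its half-cell `(0, 1 / 2)`, the local group over the
window `A` moves every point of the interval. -/
def MovesHalfCells (r : ℤ → ℤˣ) (G : Subgroup (ℝ ≃o ℝ)) (A : Set ℤ) : Prop :=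
  ∀ (κ : Frame) (p q : ℝ), 0 ≤ p → q ≤ 1 / 2 → MovesEverywhere r G κ A (Ioo p q)

namespace MovesHalfCells

variable {r : ℤ → ℤˣ} {H G : Subgroup (ℝ ≃o ℝ)} {κ : Frame} {A B : Set ℤ}

theorem singleton (hG : IsLabelledGroup r H G) {j : ℤ} (hj : j = 0 ∨ j = 1) :
    MovesHalfCells r G {j} := by
  intro κ p q hp hq
  apply hG.movesEverywhere hj <;> rcases hj with rfl | rfl <;> push_cast <;> linarith

theorem union (hA : MovesHalfCells r G A) (hB : MovesHalfCells r G B) :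
    MovesHalfCells r G (A ∪ B) := by
  rintro κ p q hp hq s ⟨hps, hsq⟩
  have hO : Ioo p q ⊆ Ioo (0 : ℝ) (1 / 2) := Ioo_subset_Ioo hp hq
  have hleft : (p + s) / 2 ∈ Ioo p q := ⟨by linarith, by linarith⟩
  have hright : (s + q) / 2 ∈ Ioo p q := ⟨by linarith, by linarith⟩
  have hs : s ∈ Ioo ((p + s) / 2) ((s + q) / 2) := ⟨by linarith, by linarith⟩
  obtain ⟨f, ⟨t, ht, hf⟩, hfar⟩ := (hA κ p q hp hq).exists_lt_apply hleft hright
  obtain ⟨g, ⟨u, hu, hg⟩, hgs⟩ :=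
    hB κ _ _ (hp.trans hleft.1.le) (hright.2.le.trans hq) s hs
  have hg' := hg.enlarge (Ioo_subset_Ioo hleft.1.le hright.2.le)
    (hasDisjointCopies_of_subset_half hO r κ B)
  refine ⟨⁅f, g⁆, ⟨⁅t, u⁆, ?_, hf.commutator hO hg'⟩, fun h ↦ hgs ?_⟩
  · exact G.mul_mem (G.mul_mem (G.mul_mem ht hu) (G.inv_mem ht)) (G.inv_mem hu)
  have hout : f⁻¹ (g⁻¹ s) ∉ Ioo ((p + s) / 2) ((s + q) / 2) := by
    have hmem := apply_mem_of_forall_notMem hg.inv_off hs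
    exact fun hmem' ↦ hmem'.1.not_gt (f.symm_apply_lt.2 (hmem.2.trans hfar))
  simp only [commutatorElement_def, RelIso.mul_apply] at h
  rw [hg.off _ hout, RelIso.apply_inv_self] at h
  exact (g.symm_apply_eq.1 h).symm

theorem exists_localGroup_apply_ne (hA : MovesHalfCells r G A) {j : ℤ} (hj : j ∈ A) {p q : ℝ}
    {g : ℝ ≃o ℝ} (hg : g ∈ localGroup r G κ {j} (Ioo p q)) {s : ℝ} (hs : s ∈ Ioo p q)
    (hgs : g s ∈ Ioo 0 (1 / 2)) {a b : ℝ} (hab : s ∈ Ioo a b) :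
    ∃ O ⊆ Ioo a b, ∃ f ∈ localGroup r G κ A O, f s ≠ s := by
  have hmem := apply_mem_of_forall_notMem (localGroup_off hg) hs
  obtain ⟨f, hf, hfs⟩ := hA κ (max (max 0 p) (g a)) (min (min (1 / 2) q) (g b))
    (by simp) (by simp) (g s)
    ⟨max_lt (max_lt hgs.1 hmem.1) (g.strictMono hab.1),
      lt_min (lt_min hgs.2 hmem.2) (g.strictMono hab.2)⟩
  refine ⟨_, fun y hy ↦ ?_, _, localGroup_conj_by hf (singleton_subset_iff.2 hj) hg ?_, ?_⟩
  · exact ⟨g.lt_iff_lt.1 ((le_max_right _ _).trans_lt hy.1),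
      g.lt_iff_lt.1 (hy.2.trans_le (min_le_right _ _))⟩
  · rintro y ⟨hy₁, hy₂⟩
    by_contra hn
    rw [localGroup_off hg y hn] at hy₁ hy₂
    exact hn ⟨((le_max_right _ _).trans (le_max_left _ _)).trans_lt hy₁,
      hy₂.trans_le ((min_le_left _ _).trans (min_le_right _ _))⟩
  · exact fun h ↦ hfs (g.symm_apply_eq.1 h)

theorem reflect (hA : MovesHalfCells r G A) (hG : IsLabelledGroup r H G) {j : ℤ}
    (hj : j = 0 ∨ j = 1) (hjA : j ∈ A) : MovesHalfCells r G {m | 2 * j - m ∈ A} := by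
  rintro κ p q hp hq s ⟨hps, hsq⟩
  have hcell : (j : ℝ) - s ∈ Ioo (((j : ℝ) - 1) / 2) (((j : ℝ) - 1) / 2 + 1) := by
    rcases hj with rfl | rfl <;> constructor <;> push_cast <;> linarith
  obtain ⟨g, hg, hgs⟩ := hG.exists_localGroup_apply_mem_half hj (κ * reflection j) hcell
  obtain ⟨O, hO, f, hf, hfs⟩ := hA.exists_localGroup_apply_ne hjA hg hcell hgs
    (a := j - q) (b := j - p) ⟨by linarith, by linarith⟩
  have hindex : A = {m | reflection j • m ∈ {m | 2 * j - m ∈ A}} := by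
    simp [reflection_smul_int]
  rw [hindex] at hf
  refine ⟨conj (reflection j)⁻¹ f, localGroup_enlarge (localGroup_conj hf) (fun x hx ↦ ?_)
    (hasDisjointCopies_of_subset_half (Ioo_subset_Ioo hp hq) _ _ _), fun h ↦ hfs ?_⟩
  · have hmem := hO hx
    rw [reflection_inv, reflection_smul] at hmem
    exact ⟨by linarith [hmem.2], by linarith [hmem.1]⟩
  · rw [conj_apply, inv_inv, reflection_inv, reflection_smul, reflection_smul] at h
    linarith

theorem Icc_zero_one (hG : IsLabelledGroup r H G) : MovesHalfCells r G (Icc 0 1) := by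
  convert (singleton hG (Or.inl rfl)).union (singleton hG (Or.inr rfl)) using 1
  ext m
  simp only [mem_Icc, mem_union, mem_singleton_iff]
  lia

theorem reflect_Icc (hG : IsLabelledGroup r H G) {a b : ℤ} (h : MovesHalfCells r G (Icc a b))
    {j : ℤ} (hj : j = 0 ∨ j = 1) (hjA : j ∈ Icc a b) :
    MovesHalfCells r G (Icc (min 0 (2 * j - b)) (max 1 (2 * j - a))) := by
  convert (h.reflect hG hj hjA).union (Icc_zero_one hG) using 1
  ext m
  simp only [mem_Icc, mem_union, mem_ofPred_eq] at hjA ⊢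
  lia

theorem Icc_zero (hG : IsLabelledGroup r H G) : ∀ n : ℕ, MovesHalfCells r G (Icc 0 (n + 1))
  | 0 => by simpa using Icc_zero_one hG
  | 1 => by simpa using reflect_Icc hG (Icc_zero_one hG) (Or.inr rfl) (by simp)
  | n + 2 => by
    have h := reflect_Icc hG (Icc_zero hG n) (Or.inl rfl) (by simp; lia)
    convert reflect_Icc hG h (Or.inr rfl) (by simp; lia) using 2 <;> push_cast <;> lia

theorem Icc_le_zero_one (hG : IsLabelledGroup r H G) {a : ℤ} (ha : a ≤ 0) :
    MovesHalfCells r G (Icc a 1) := by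
  rcases ha.eq_or_lt with rfl | ha
  · exact Icc_zero_one hG
  obtain ⟨n, hn⟩ := Int.eq_ofNat_of_zero_le (a := -a - 1) (by lia)
  convert reflect_Icc hG (Icc_zero hG n) (Or.inl rfl) (by simp; lia) using 2 <;> lia

theorem of_ordConnected (hG : IsLabelledGroup r H G) (hA : A.OrdConnected) (hfin : A.Finite)
    (h₀ : 0 ∈ A) (h₁ : 1 ∈ A) : MovesHalfCells r G A := by
  have hle := csInf_le hfin.bddBelow h₀
  obtain ⟨n, hn⟩ := Int.eq_ofNat_of_zero_le (sub_nonneg.2 (le_csSup hfin.bddAbove h₁))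
  have hIcc : A = Icc (sInf A) (sSup A) :=
    Subset.antisymm (fun m hm ↦ ⟨csInf_le hfin.bddBelow hm, le_csSup hfin.bddAbove hm⟩)
      (hA.out (Int.csInf_mem ⟨0, h₀⟩ hfin.bddBelow) (Int.csSup_mem ⟨0, h₀⟩ hfin.bddAbove))
  rw [hIcc]
  convert (Icc_le_zero_one hG hle).union (Icc_zero hG n) using 1
  ext m
  simp only [mem_Icc, mem_union]
  lia

end MovesHalfCells

section Pushing

variable {r : ℤ → ℤˣ} {H G : Subgroup (ℝ ≃o ℝ)} {A : Set ℤ} {p q : ℝ}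

theorem ordConnected_setOf_smul_mem (hA : A.OrdConnected) (δ : Frame) :
    {j | δ • j ∈ A}.OrdConnected := by
  refine ⟨fun x hx y hy z hz ↦ ?_⟩
  simp only [mem_ofPred_eq] at hx hy ⊢
  rcases δ.translation_or_reflection with ⟨-, -, h⟩ | ⟨-, -, h⟩ <;> rw [h] at hx hy ⊢
  · exact hA.out hx hy ⟨by linarith [hz.1], by linarith [hz.2]⟩
  · exact hA.out hy hx ⟨by linarith [hz.2], by linarith [hz.1]⟩

theorem exists_smul_mem_Ioo_of_abs_sub_lt (δ : Frame) {y : ℝ} (hy : δ • y ∈ Ioo p q) :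
    ∃ η > 0, ∀ x ∈ Ioo (y - η) (y + η), δ • x ∈ Ioo p q := by
  obtain ⟨η, hη, hball⟩ := Metric.isOpen_iff.1 (isOpen_Ioo.preimage δ.continuous_smul) y hy
  exact ⟨η, hη, fun x hx ↦ hball (by rwa [Real.ball_eq_Ioo])⟩

theorem IsLabelledGroup.movesEverywhere_of_window (hG : IsLabelledGroup r H G)
    (hA : A.OrdConnected) (hfin : A.Finite)
    (hwindow : ∀ z ∈ Ioo p q, ∀ m : ℤ, |(m : ℝ) - 2 * z| ≤ 2 → m ∈ A)
    (hdisj : HasDisjointCopies r 1 A (Ioo p q)) : MovesEverywhere r G 1 A (Ioo p q) := by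
  intro s hs
  obtain ⟨δ, y, ⟨hy₀, hy₁⟩, rfl⟩ := exists_mem_Icc_smul_eq s
  have hmem (j : ℤ) (hj : j = 0 ∨ j = 1) : δ • j ∈ A := by
    refine hwindow _ hs _ ?_
    rw [abs_smul_sub_two_mul_smul]
    rcases hj with rfl | rfl <;> rw [abs_le] <;> push_cast <;> constructor <;> linarith
  have hmoves : MovesHalfCells r G {j | δ • j ∈ A} :=
    .of_ordConnected hG (ordConnected_setOf_smul_mem hA δ)
      (hfin.preimage (MulAction.injective δ).injOn) (hmem 0 (Or.inl rfl)) (hmem 1 (Or.inr rfl))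
  obtain ⟨η, hη, hball⟩ := exists_smul_mem_Ioo_of_abs_sub_lt δ hs
  obtain ⟨j, hj, hcell⟩ :
      ∃ j : ℤ, (j = 0 ∨ j = 1) ∧ y ∈ Ioo (((j : ℝ) - 1) / 2) (((j : ℝ) - 1) / 2 + 1) := by
    rcases hy₁.lt_or_eq with hy | hy
    · exact ⟨0, Or.inl rfl, by push_cast; linarith, by push_cast; linarith⟩
    · exact ⟨1, Or.inr rfl, by push_cast; linarith, by push_cast; linarith⟩
  obtain ⟨g, hg, hgy⟩ := hG.exists_localGroup_apply_mem_half hj (1 * δ) hcell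
  obtain ⟨O, hO, f, hf, hfy⟩ := hmoves.exists_localGroup_apply_ne (hmem j hj) hg hcell hgy
    (a := y - η) (b := y + η) ⟨by linarith, by linarith⟩
  refine ⟨conj δ⁻¹ f, localGroup_enlarge (localGroup_conj hf) (fun x hx ↦ ?_) hdisj, fun h ↦ ?_⟩
  · simpa using hball _ (hO hx)
  · rw [conj_apply, inv_inv, inv_smul_smul, smul_left_cancel_iff] at h
    exact hfy h

theorem IsLabelledGroup.exists_spreads_lt_apply (hG : IsLabelledGroup r H G)
    (hA : A.OrdConnected) (hfin : A.Finite)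
    (hwindow : ∀ z ∈ Ioo p q, ∀ m : ℤ, |(m : ℝ) - 2 * z| ≤ 2 → m ∈ A)
    (hdisj : HasDisjointCopies r 1 A (Ioo p q)) {y u : ℝ} (hy : y ∈ Ioo p q)
    (hu : u ∈ Ioo p q) : ∃ f, ∃ t ∈ G, Spreads r 1 A (Ioo p q) f t ∧ u < f y := by
  obtain ⟨f, ⟨t, ht, hf⟩, h⟩ :=
    (hG.movesEverywhere_of_window hA hfin hwindow hdisj).exists_lt_apply hy hu
  exact ⟨f, t, ht, hf, h⟩

end Pushing

/-! ### Displacement of gaps -/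

/-- A closed discrete set `X` of points which look like `y` in suitable frames, which meets every
long enough interval, and membership in which is decided by the labels at distance at most `R / 2`.
-/
structure IsLocalPattern (r : ℤ → ℤˣ) (X : Set ℝ) (y : ℝ) (R : ℕ) : Prop where
  base_mem : y ∈ Icc (0 : ℝ) (1 / 2)
  exists_smul_eq : ∀ z ∈ X, ∃ κ : Frame, κ • y = z
  two_le : 2 ≤ R
  mem_smul_iff : ∀ (d : Frame) (z : ℝ),
    SameLabels r {m : ℤ | |(m : ℝ) - 2 * z| ≤ R} d 1 → (z ∈ X ↔ d • z ∈ X)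
  syndetic : ∃ M : ℕ, ∀ u : ℝ, ∃ x ∈ X, u < x ∧ x < u + M

/-- The indices of the half-integers at distance at most `R / 2` from `[p, q]`. -/
def window (R : ℕ) (p q : ℝ) : Set ℤ := Icc ⌈2 * p - R⌉ ⌊2 * q + R⌋

/-- `(p, q)` is a bounded connected component of the complement of `X`. -/
structure IsGap (X : Set ℝ) (p q : ℝ) : Prop where
  left_mem : p ∈ X
  right_mem : q ∈ X
  lt : p < q
  notMem : ∀ z ∈ Ioo p q, z ∉ X

section Windows

variable {R : ℕ} {p q p' q' : ℝ}

theorem mem_window {m : ℤ} : m ∈ window R p q ↔ 2 * p - R ≤ m ∧ (m : ℝ) ≤ 2 * q + R :=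
  and_congr Int.ceil_le Int.le_floor

theorem mem_window_of_abs_sub_le {m : ℤ} {z : ℝ} (hz : z ∈ Icc p q)
    (hm : |(m : ℝ) - 2 * z| ≤ R) : m ∈ window R p q := by
  rw [abs_le] at hm
  exact mem_window.2 ⟨by linarith [hz.1], by linarith [hz.2]⟩

theorem IsGap.eq {X : Set ℝ} {z : ℝ} (h : IsGap X p q) (h' : IsGap X p' q') (hz : z ∈ Ioo p q)
    (hz' : z ∈ Ioo p' q') : p = p' ∧ q = q' := by
  have hp := fun hlt ↦ h.notMem p' ⟨hlt, hz'.1.trans hz.2⟩ h'.left_mem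
  have hp' := fun hlt ↦ h'.notMem p ⟨hlt, hz.1.trans hz'.2⟩ h.left_mem
  have hq := fun hlt ↦ h.notMem q' ⟨hz.1.trans hz'.2, hlt⟩ h'.right_mem
  have hq' := fun hlt ↦ h'.notMem q ⟨hz'.1.trans hz.2, hlt⟩ h.right_mem
  exact ⟨le_antisymm (not_lt.1 hp') (not_lt.1 hp), le_antisymm (not_lt.1 hq) (not_lt.1 hq')⟩

namespace Frame

theorem smul_mem_Icc_min_max_iff (d : Frame) (hpq : p ≤ q) (ε : ℝ) {z : ℝ} :
    d • z ∈ Icc (min (d • p) (d • q) + ε) (max (d • p) (d • q) - ε) ↔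
      z ∈ Icc (p + ε) (q - ε) := by
  rcases d.translation_or_reflection with ⟨-, h, -⟩ | ⟨-, h, -⟩ <;> simp only [h, mem_Icc]
  · rw [min_eq_left (by linarith), max_eq_right (by linarith)]
    constructor <;> rintro ⟨h₁, h₂⟩ <;> constructor <;> linarith
  · rw [min_eq_right (by linarith), max_eq_left (by linarith)]
    constructor <;> rintro ⟨h₁, h₂⟩ <;> constructor <;> linarith

theorem smul_mem_Ioo_min_max_iff (d : Frame) (hpq : p ≤ q) {z : ℝ} :
    d • z ∈ Ioo (min (d • p) (d • q)) (max (d • p) (d • q)) ↔ z ∈ Ioo p q := by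
  rcases d.translation_or_reflection with ⟨-, h, -⟩ | ⟨-, h, -⟩ <;> simp only [h, mem_Ioo]
  · rw [min_eq_left (by linarith), max_eq_right (by linarith)]
    constructor <;> rintro ⟨h₁, h₂⟩ <;> constructor <;> linarith
  · rw [min_eq_right (by linarith), max_eq_left (by linarith)]
    constructor <;> rintro ⟨h₁, h₂⟩ <;> constructor <;> linarith

theorem smul_mem_window_iff (d : Frame) (hpq : p ≤ q) {m : ℤ} :
    d • m ∈ window R (min (d • p) (d • q)) (max (d • p) (d • q)) ↔ m ∈ window R p q := by
  rcases d.translation_or_reflection with ⟨-, h, h'⟩ | ⟨-, h, h'⟩ <;>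
    simp only [h, h', mem_window] <;> push_cast
  · rw [min_eq_left (by linarith), max_eq_right (by linarith)]
    constructor <;> rintro ⟨h₁, h₂⟩ <;> constructor <;> linarith
  · rw [min_eq_right (by linarith), max_eq_left (by linarith)]
    constructor <;> rintro ⟨h₁, h₂⟩ <;> constructor <;> linarith

theorem SameLabels.inv_window {r : ℤ → ℤˣ} {d : Frame} (hd : SameLabels r (window R p q) d 1)
    (hpq : p ≤ q) :
    SameLabels r (window R (min (d • p) (d • q)) (max (d • p) (d • q))) d⁻¹ 1 := by
  have h := (sameLabels_mul_right (d := d⁻¹) (d' := 1) d).1 (by simpa using hd.symm)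
  exact h.mono fun m hm ↦ (d.smul_mem_window_iff hpq).1 (by simpa using hm)

end Frame

end Windows

namespace IsLocalPattern

variable {r : ℤ → ℤˣ} {X : Set ℝ} {y : ℝ} {R : ℕ} {p q p' q' z : ℝ} {d d' : Frame}

theorem mem_smul_iff_of_window (hX : IsLocalPattern r X y R)
    (hd : SameLabels r (window R p q) d 1) (hz : z ∈ Icc p q) : z ∈ X ↔ d • z ∈ X :=
  hX.mem_smul_iff d z (hd.mono fun _ hm ↦ mem_window_of_abs_sub_le hz hm)

theorem isGap_smul (hX : IsLocalPattern r X y R) (h : IsGap X p q)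
    (hd : SameLabels r (window R p q) d 1) :
    IsGap X (min (d • p) (d • q)) (max (d • p) (d • q)) := by
  have hp := (hX.mem_smul_iff_of_window hd (left_mem_Icc.2 h.lt.le)).1 h.left_mem
  have hq := (hX.mem_smul_iff_of_window hd (right_mem_Icc.2 h.lt.le)).1 h.right_mem
  refine ⟨?_, ?_, ?_, fun z hz hzX ↦ ?_⟩
  · rcases min_choice (d • p) (d • q) with e | e <;> rwa [e]
  · rcases max_choice (d • p) (d • q) with e | e <;> rwa [e]
  · exact min_lt_max.2 ((MulAction.injective d).ne h.lt.ne)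
  · obtain ⟨w, rfl⟩ := MulAction.surjective d z
    rw [d.smul_mem_Ioo_min_max_iff h.lt.le] at hz
    exact h.notMem w hz ((hX.mem_smul_iff_of_window hd (Ioo_subset_Icc_self hz)).2 hzX)

theorem eq_min_max (hX : IsLocalPattern r X y R) (h : IsGap X p q)
    (hd : SameLabels r (window R p q) d 1) (h' : IsGap X p' q') (hz : z ∈ Ioo p q)
    (hdz : d • z ∈ Ioo p' q') : p' = min (d • p) (d • q) ∧ q' = max (d • p) (d • q) :=
  h'.eq (hX.isGap_smul h hd) hdz ((d.smul_mem_Ioo_min_max_iff h.lt.le).2 hz)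

theorem sameLabels_mul (hX : IsLocalPattern r X y R) (h : IsGap X p q)
    (hd : SameLabels r (window R p q) d 1) (h' : IsGap X p' q')
    (hd' : SameLabels r (window R p' q') d' 1) (hz : z ∈ Ioo p q) (hdz : d • z ∈ Ioo p' q') :
    SameLabels r (window R p q) (d' * d) 1 := by
  obtain ⟨rfl, rfl⟩ := hX.eq_min_max h hd h' hz hdz
  have hmul : SameLabels r (window R p q) (d' * d) (1 * d) :=
    (sameLabels_mul_right d).2 <| hd'.mono fun m hm ↦ by
      simpa using (d.smul_mem_window_iff h.lt.le).2 hm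
  rw [one_mul] at hmul
  exact hmul.trans hd

-- The reflection of the gap in its centre is excluded, since it changes the sign of the label at
-- the centre.
theorem eq_one_of_smul_mem (hX : IsLocalPattern r X y R) (h : IsGap X p q)
    (hd : SameLabels r (window R p q) d 1) (hz : z ∈ Ioo p q) (hdz : d • z ∈ Ioo p q) : d = 1 := by
  obtain ⟨hp, hq⟩ := hX.eq_min_max h hd h hz hdz
  have hlt := h.lt
  rcases d.translation_or_reflection with ⟨he, hs, -⟩ | ⟨he, hs, hi⟩ <;> rw [hs, hs] at hp hq
  · rw [min_eq_left (by linarith)] at hp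
    have hshift : (d.shift : ℝ) = 0 := by linarith
    exact Frame.ext (by exact_mod_cast hshift) he
  · rw [min_eq_right (by linarith)] at hp
    have hmem : d.shift ∈ window R p q := mem_window.2
      ⟨by linarith [R.cast_nonneg (α := ℝ)], by linarith [R.cast_nonneg (α := ℝ)]⟩
    have hcentre := hd _ hmem
    rw [label_one, label, hi, he, two_mul, add_sub_cancel_right, neg_one_mul] at hcentre
    exact absurd hcentre (units_ne_neg_self _).symm

theorem hasDisjointCopies (hX : IsLocalPattern r X y R) (h : IsGap X p q) :
    HasDisjointCopies r 1 (window R p q) (Ioo p q) := by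
  intro d d' hd hd' z hz z' hz' heq
  have hdz := (d'.smul_mem_Ioo_min_max_iff h.lt.le).2 hz'
  rw [← heq] at hdz
  have hmul := hX.sameLabels_mul h hd (hX.isGap_smul h hd') (hd'.inv_window h.lt.le) hz hdz
  have hz'' : (d'⁻¹ * d) • z ∈ Ioo p q := by rwa [mul_smul, heq, inv_smul_smul]
  exact (inv_mul_eq_one.1 (hX.eq_one_of_smul_mem h hmul hz hz'')).symm

theorem finite_inter_Icc (hX : IsLocalPattern r X y R) (a b : ℝ) : (X ∩ Icc a b).Finite := by
  refine (((finite_Icc (⌊a⌋ - 1) (⌈b⌉ + 1)).prod (univ : Set ℤˣ).toFinite).image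
    fun κ ↦ Frame.mk κ.1 κ.2 • y).subset ?_
  rintro _ ⟨hx, ha, hb⟩
  obtain ⟨κ, rfl⟩ := hX.exists_smul_eq _ hx
  refine ⟨(κ.shift, κ.sign), ⟨?_, trivial⟩, rfl⟩
  obtain ⟨hy₀, hy₁⟩ := hX.base_mem
  have hfloor := Int.floor_le a
  have hceil := Int.le_ceil b
  have hshift : (⌊a⌋ : ℝ) - 1 ≤ κ.shift ∧ (κ.shift : ℝ) ≤ ⌈b⌉ + 1 := by
    rcases κ.translation_or_reflection with ⟨-, h, -⟩ | ⟨-, h, -⟩ <;> rw [h] at ha hb <;>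
      constructor <;> linarith
  exact ⟨by exact_mod_cast hshift.1, by exact_mod_cast hshift.2⟩

theorem exists_isGap (hX : IsLocalPattern r X y R) (hz : z ∉ X) :
    ∃ p q, IsGap X p q ∧ z ∈ Ioo p q := by
  obtain ⟨M, hM⟩ := hX.syndetic
  obtain ⟨x₁, hx₁, h₁, h₁'⟩ := hM (z - M)
  obtain ⟨x₂, hx₂, h₂, h₂'⟩ := hM z
  obtain ⟨p, ⟨hpX, hp⟩, hmax⟩ := exists_max_image _ id (hX.finite_inter_Icc (z - M) z)
    ⟨x₁, hx₁, h₁.le, by linarith⟩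
  obtain ⟨q, ⟨hqX, hq⟩, hmin⟩ := exists_min_image _ id (hX.finite_inter_Icc z (z + M))
    ⟨x₂, hx₂, h₂.le, h₂'.le⟩
  have hpz : p < z := hp.2.lt_of_ne fun e ↦ hz (e ▸ hpX)
  have hzq : z < q := hq.1.lt_of_ne fun e ↦ hz (e ▸ hqX)
  refine ⟨p, q, ⟨hpX, hqX, hpz.trans hzq, fun w hw hwX ↦ ?_⟩, hpz, hzq⟩
  rcases le_total w z with hwz | hzw
  · exact (hmax w ⟨hwX, hp.1.trans hw.1.le, hwz⟩).not_gt hw.1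
  · exact (hmin w ⟨hwX, hzw, hw.2.le.trans hq.2⟩).not_gt hw.2

end IsLocalPattern

/-- An element of `G` which fixes `X` and acts in the same way on all gaps with the same labels. -/
structure IsGapEquivariant (r : ℤ → ℤˣ) (G : Subgroup (ℝ ≃o ℝ)) (X : Set ℝ) (R : ℕ)
    (t : ℝ ≃o ℝ) : Prop where
  mem : t ∈ G
  apply_eq_self : ∀ z ∈ X, t z = z
  apply_smul : ∀ p q, IsGap X p q → ∀ d, SameLabels r (window R p q) d 1 → ∀ z ∈ Ioo p q,
    t (d • z) = d • t z

/-- `t` moves the points of the gap `(p, q)` at distance at least `ε` from its ends to points at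
distance less than `ε` from its ends. -/
def DisplacesGap (ε : ℝ) (t : ℝ ≃o ℝ) (p q : ℝ) : Prop :=
  ∀ z ∈ Icc (p + ε) (q - ε), t z ∉ Icc (p + ε) (q - ε)

theorem IsGap.apply_mem {X : Set ℝ} {p q z : ℝ} {t : ℝ ≃o ℝ} (h : IsGap X p q)
    (ht : ∀ x ∈ X, t x = x) (hz : z ∈ Ioo p q) : t z ∈ Ioo p q := by
  have hp := t.strictMono hz.1
  have hq := t.strictMono hz.2
  rw [ht p h.left_mem] at hp
  rw [ht q h.right_mem] at hq
  exact ⟨hp, hq⟩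

theorem IsGapEquivariant.one (r : ℤ → ℤˣ) (G : Subgroup (ℝ ≃o ℝ)) (X : Set ℝ) (R : ℕ) :
    IsGapEquivariant r G X R 1 :=
  ⟨G.one_mem, fun _ _ ↦ rfl, fun _ _ _ _ _ _ _ ↦ rfl⟩

section Displacement

variable {r : ℤ → ℤˣ} {H G : Subgroup (ℝ ≃o ℝ)} {X : Set ℝ} {y : ℝ} {R : ℕ} {p q p' q' z : ℝ}
  {d : Frame} {f s t : ℝ ≃o ℝ} {ε : ℝ}

theorem IsGapEquivariant.mul (ht : IsGapEquivariant r G X R t) (hs : IsGapEquivariant r G X R s) :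
    IsGapEquivariant r G X R (t * s) where
  mem := G.mul_mem ht.mem hs.mem
  apply_eq_self z hz := by rw [RelIso.mul_apply, hs.apply_eq_self z hz, ht.apply_eq_self z hz]
  apply_smul p q h d hd z hz := by
    rw [RelIso.mul_apply, hs.apply_smul p q h d hd z hz,
      ht.apply_smul p q h d hd _ (h.apply_mem hs.apply_eq_self hz), RelIso.mul_apply]

namespace IsLocalPattern

theorem isGapEquivariant_of_spreads (hX : IsLocalPattern r X y R) (h : IsGap X p q) (ht : t ∈ G)
    (hft : Spreads r 1 (window R p q) (Ioo p q) f t) : IsGapEquivariant r G X R t where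
  mem := ht
  apply_eq_self z hz := hft.eq_self z fun d hd w hw heq ↦ h.notMem w hw <|
    (hX.mem_smul_iff_of_window hd (Ioo_subset_Icc_self hw)).2 (heq ▸ hz)
  apply_smul p' q' h' d' hd' z hz := by
    by_cases hcopy : ∃ d, SameLabels r (window R p q) d 1 ∧ ∃ w ∈ Ioo p q, z = d • w
    · obtain ⟨d, hd, w, hw, rfl⟩ := hcopy
      rw [hft.apply_smul d hd w hw, ← mul_smul, ← mul_smul,
        hft.apply_smul _ (hX.sameLabels_mul h hd h' hd' hw hz) w hw]
    · rw [hft.eq_self z fun d hd w hw heq ↦ hcopy ⟨d, hd, w, hw, heq⟩]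
      refine hft.eq_self _ fun d hd w hw heq ↦ hcopy ⟨d'⁻¹ * d, ?_, w, hw, ?_⟩
      · refine hX.sameLabels_mul h hd (hX.isGap_smul h' hd') (hd'.inv_window h'.lt.le) hw ?_
        rw [← heq]
        exact (d'.smul_mem_Ioo_min_max_iff h'.lt.le).2 hz
      · rw [mul_smul, ← heq, inv_smul_smul]

theorem exists_isGapEquivariant_lt_apply (hX : IsLocalPattern r X y R)
    (hG : IsLabelledGroup r H G) (h : IsGap X p q) {v u : ℝ} (hv : v ∈ Ioo p q)
    (hu : u ∈ Ioo p q) :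
    ∃ s, IsGapEquivariant r G X R s ∧ u < s v ∧
      ∀ z, (∀ d, SameLabels r (window R p q) d 1 → ∀ w ∈ Ioo p q, z ≠ d • w) → s z = z := by
  have hwindow : ∀ z ∈ Ioo p q, ∀ m : ℤ, |(m : ℝ) - 2 * z| ≤ 2 → m ∈ window R p q :=
    fun z hz m hm ↦ mem_window_of_abs_sub_le (Ioo_subset_Icc_self hz)
      (hm.trans (by exact_mod_cast hX.two_le))
  obtain ⟨f, s, hs, hfs, huv⟩ := hG.exists_spreads_lt_apply ordConnected_Icc (finite_Icc _ _)
    hwindow (hX.hasDisjointCopies h) hv hu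
  have hsv := hfs.apply_smul 1 (.refl _ _ _) v hv
  rw [one_smul, one_smul] at hsv
  exact ⟨s, hX.isGapEquivariant_of_spreads h hs hfs, hsv ▸ huv, hfs.eq_self⟩

theorem displacesGap_of_smul_mem (hX : IsLocalPattern r X y R) (hε : 0 < ε)
    (ht : IsGapEquivariant r G X R t) (h : IsGap X p q) (hd : SameLabels r (window R p q) d 1)
    (h' : IsGap X p' q') (hz : z ∈ Ioo p q) (hdz : d • z ∈ Ioo p' q')
    (hdisp : DisplacesGap ε t p' q') : DisplacesGap ε t p q := by
  obtain ⟨rfl, rfl⟩ := hX.eq_min_max h hd h' hz hdz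
  intro w hw htw
  refine hdisp (d • w) ((d.smul_mem_Icc_min_max_iff h.lt.le ε).2 hw) ?_
  rw [ht.apply_smul p q h d hd w ⟨by linarith [hw.1], by linarith [hw.2]⟩]
  exact (d.smul_mem_Icc_min_max_iff h.lt.le ε).2 htw

-- Correct `t` by an element supported in the copies of `(p, q)`. Since `t` is equivariant and does
-- not displace `(p, q)`, none of the gaps that it displaces is such a copy.
theorem exists_displacesGap_insert (hX : IsLocalPattern r X y R) (hG : IsLabelledGroup r H G)
    (hε : 0 < ε) (ht : IsGapEquivariant r G X R t) (h : IsGap X p q) :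
    ∃ t', IsGapEquivariant r G X R t' ∧ DisplacesGap ε t' p q ∧
      ∀ p' q', IsGap X p' q' → DisplacesGap ε t p' q' → DisplacesGap ε t' p' q' := by
  by_cases hdisp : DisplacesGap ε t p q
  · exact ⟨t, ht, hdisp, fun _ _ _ ↦ id⟩
  have hle : p + ε ≤ q - ε := by
    by_contra hlt
    exact hdisp fun z hz ↦ absurd (hz.1.trans hz.2) hlt
  have hu := h.apply_mem (fun x hx ↦ inv_apply_eq_self (ht.apply_eq_self x hx))
    (z := q - ε) ⟨by linarith, by linarith⟩
  obtain ⟨s, hs, hlt, hfix⟩ :=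
    hX.exists_isGapEquivariant_lt_apply hG h (v := p + ε) ⟨by linarith, by linarith⟩ hu
  refine ⟨t * s, ht.mul hs, fun z hz hmem ↦ ?_, fun p' q' h' hdisp' z hz ↦ ?_⟩
  · have hlt' := t.strictMono (hlt.trans_le (s.monotone hz.1))
    rw [RelIso.apply_inv_self] at hlt'
    exact hmem.2.not_gt hlt'
  · have hsz : s z = z := hfix z fun d hd w hw heq ↦
      hdisp (hX.displacesGap_of_smul_mem hε ht h hd h' hw
        (heq ▸ ⟨by linarith [hz.1], by linarith [hz.2]⟩) hdisp')
    rw [RelIso.mul_apply, hsz]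
    exact hdisp' z hz

theorem exists_displacesGap_of_finite (hX : IsLocalPattern r X y R) (hG : IsLabelledGroup r H G)
    (hε : 0 < ε) {Γ : Set (ℝ × ℝ)} (hΓ : Γ.Finite) (hgap : ∀ γ ∈ Γ, IsGap X γ.1 γ.2) :
    ∃ t, IsGapEquivariant r G X R t ∧ ∀ γ ∈ Γ, DisplacesGap ε t γ.1 γ.2 := by
  induction Γ, hΓ using Set.Finite.induction_on with
  | empty => exact ⟨1, .one r G X R, fun _ h ↦ h.elim⟩
  | @insert γ Γ _ _ ih =>
    obtain ⟨t, ht, hdisp⟩ := ih fun γ hγ ↦ hgap γ (mem_insert_of_mem _ hγ)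
    obtain ⟨t', ht', hdispγ, hdisp'⟩ :=
      hX.exists_displacesGap_insert hG hε ht (hgap γ (mem_insert _ _))
    refine ⟨t', ht', forall_mem_insert.2 ⟨hdispγ, fun γ' hγ' ↦ ?_⟩⟩
    exact hdisp' _ _ (hgap γ' (mem_insert_of_mem _ hγ')) (hdisp γ' hγ')

theorem exists_smul_mem_of_sameLabels (hX : IsLocalPattern r X y R) {M : ℕ}
    (hM : ∀ u : ℝ, ∃ x ∈ X, u < x ∧ x < u + M) {κ κ' : Frame} (h : IsGap X (κ • y) q)
    (h' : IsGap X (κ' • y) q') (hsign : κ'.sign = κ.sign)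
    (hsame : SameLabels r (Icc (-(R + 2 * M + 1 : ℕ)) (R + 2 * M + 1 : ℕ)) κ' κ) :
    SameLabels r (window R (κ • y) q) (κ' * κ⁻¹) 1 ∧
      ∃ z ∈ Ioo (κ • y) q, (κ' * κ⁻¹) • z ∈ Ioo (κ' • y) q' := by
  constructor
  · rw [← mul_inv_cancel κ, sameLabels_mul_right]
    refine hsame.mono fun m hm ↦ abs_le.1 ?_
    have hlen : q < κ • y + M := by
      obtain ⟨x, hx, hlt, hlt'⟩ := hM (κ • y)
      by_contra hle
      exact h.notMem x ⟨hlt, by linarith⟩ hx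
    rw [inv_inv] at hm
    obtain ⟨hm₁, hm₂⟩ := mem_window.1 hm
    have hclose : |((κ • m : ℤ) : ℝ) - 2 * κ • y| ≤ R + 2 * M := by
      rw [abs_le]
      constructor <;> linarith
    rw [abs_smul_sub_two_mul_smul, abs_le] at hclose
    obtain ⟨hy₀, hy₁⟩ := hX.base_mem
    have habs : |(m : ℝ)| ≤ (R + 2 * M + 1 : ℕ) := by
      push_cast
      rw [abs_le]
      constructor <;> linarith
    exact_mod_cast habs
  · obtain ⟨w, hw₀, hw⟩ := exists_between (lt_min (sub_pos.2 h.lt) (sub_pos.2 h'.lt))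
    obtain ⟨hw₁, hw₂⟩ := lt_min_iff.1 hw
    refine ⟨κ • y + w, ⟨by linarith, by linarith⟩, ?_⟩
    have htranslation : (κ' * κ⁻¹) • (κ • y + w) = κ' • y + w := by
      have hshift : (κ' * κ⁻¹) • κ • y = κ' • y := by rw [mul_smul, inv_smul_smul]
      have hone : (κ' * κ⁻¹).sign = 1 := by simp [hsign]
      rw [smul_real_def _ (κ • y + w), mul_add, ← add_assoc, ← smul_real_def, hshift, hone]
      simp
    rw [htranslation]
    exact ⟨by linarith, by linarith⟩

theorem exists_finite_representatives (hX : IsLocalPattern r X y R) :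
    ∃ Γ : Set (ℝ × ℝ), Γ.Finite ∧ (∀ γ ∈ Γ, IsGap X γ.1 γ.2) ∧ ∀ p q, IsGap X p q →
      ∃ γ ∈ Γ, ∃ d, SameLabels r (window R p q) d 1 ∧ ∃ z ∈ Ioo p q, d • z ∈ Ioo γ.1 γ.2 := by
  obtain ⟨M, hM⟩ := hX.syndetic
  have hframe (γ : {γ : ℝ × ℝ // IsGap X γ.1 γ.2}) : ∃ κ : Frame, κ • y = γ.1.1 :=
    hX.exists_smul_eq _ γ.2.left_mem
  choose κ hκ using hframe
  set A : Set ℤ := Icc (-(R + 2 * M + 1 : ℕ)) (R + 2 * M + 1 : ℕ)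
  let code γ : (A → ℤˣ) × ℤˣ := (fun j ↦ label r (κ γ) j, (κ γ).sign)
  refine ⟨range fun c ↦ (rangeSplitting code c).1, finite_range _, ?_, fun p q h ↦ ?_⟩
  · rintro _ ⟨c, rfl⟩
    exact (rangeSplitting code c).2
  set γ' := rangeSplitting code ⟨code ⟨(p, q), h⟩, mem_range_self _⟩
  have hcode : code γ' = code ⟨(p, q), h⟩ := apply_rangeSplitting code _
  refine ⟨γ'.1, mem_range_self _, κ γ' * (κ ⟨(p, q), h⟩)⁻¹, ?_⟩
  have h₁ := hκ ⟨(p, q), h⟩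
  have h₂ := hκ γ'
  dsimp only at h₁
  have hmatch := hX.exists_smul_mem_of_sameLabels hM (q := q) (q' := γ'.1.2)
    (h₁.symm ▸ h) (h₂.symm ▸ γ'.2) (congrArg Prod.snd hcode)
    fun j hj ↦ congrFun (congrArg Prod.fst hcode) ⟨j, hj⟩
  rwa [h₁, h₂] at hmatch

theorem exists_displacesGap (hX : IsLocalPattern r X y R) (hG : IsLabelledGroup r H G)
    (hε : 0 < ε) :
    ∃ t, IsGapEquivariant r G X R t ∧ ∀ p q, IsGap X p q → DisplacesGap ε t p q := by
  obtain ⟨Γ, hfin, hgap, hrep⟩ := hX.exists_finite_representatives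
  obtain ⟨t, ht, hdisp⟩ := hX.exists_displacesGap_of_finite hG hε hfin hgap
  refine ⟨t, ht, fun p q h ↦ ?_⟩
  obtain ⟨γ, hγ, d, hd, z, hz, hdz⟩ := hrep p q h
  exact hX.displacesGap_of_smul_mem hε ht h hd (hgap γ hγ) hz hdz (hdisp γ hγ)

end IsLocalPattern

theorem commute_of_eqOn_of_eqOn_compl {a b : ℝ ≃o ℝ} {S : Set ℝ} (ha : ∀ z ∈ S, a z = z)
    (hb : ∀ z ∉ S, b z = z) : Commute a b := by
  ext z
  simp only [RelIso.mul_apply]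
  by_cases hz : z ∈ S
  · rw [ha z hz, ha _ (apply_mem_of_forall_notMem hb hz)]
  · have haz : a z ∈ Sᶜ := apply_mem_of_forall_notMem (fun y hy ↦ ha y (not_not.1 hy)) hz
    rw [hb z hz, hb _ haz]

theorem IsLocalPattern.exists_commute_conj (hX : IsLocalPattern r X y R)
    (hG : IsLabelledGroup r H G) (hε : 0 < ε) :
    ∃ t ∈ G, (∀ x ∈ X, t x = x) ∧ ∀ a b : ℝ ≃o ℝ, (∀ z ∈ Metric.thickening ε X, a z = z) →
      (∀ z ∈ Metric.thickening ε X, b z = z) → Commute a (t * b * t⁻¹) := by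
  obtain ⟨t, ht, hdisp⟩ := hX.exists_displacesGap hG hε
  have hnear {p q z : ℝ} (h : IsGap X p q) (hz : z ∈ Ioo p q)
      (hzε : z ∉ Icc (p + ε) (q - ε)) : z ∈ Metric.thickening ε X := by
    simp only [Metric.mem_thickening_iff, Real.dist_eq, abs_lt]
    by_cases hle : p + ε ≤ z
    · refine ⟨q, h.right_mem, ?_, by linarith [hz.2]⟩
      by_contra! hlt
      exact hzε ⟨hle, by linarith⟩
    · exact ⟨p, h.left_mem, by linarith [hz.1], by linarith⟩
  refine ⟨t⁻¹, G.inv_mem ht.mem, fun x hx ↦ inv_apply_eq_self (ht.apply_eq_self x hx),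
    fun a b ha hb ↦ commute_of_eqOn_of_eqOn_compl ha fun z hz ↦ ?_⟩
  obtain ⟨p, q, h, hzpq⟩ := hX.exists_isGap fun hzX ↦ hz (Metric.self_subset_thickening hε X hzX)
  have hzε : z ∈ Icc (p + ε) (q - ε) := by
    by_contra hzε
    exact hz (hnear h hzpq hzε)
  have hbt := hb (t z) (hnear h (h.apply_mem ht.apply_eq_self hzpq) (hdisp p q h z hzε))
  rw [RelIso.mul_apply, RelIso.mul_apply, inv_inv, hbt, RelIso.inv_apply_self]

end Displacement

section Germs

variable {r : ℤ → ℤˣ} {y : ℝ} {N : ℕ}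

theorem Frame.sameLabels_mul_of_smul_eq {d κ : Frame} {z : ℝ} (hy : y ∈ Icc (0 : ℝ) (1 / 2))
    (hκ : κ • y = z) (hd : SameLabels r {m : ℤ | |(m : ℝ) - 2 * z| ≤ (N + 2 : ℕ)} d 1) :
    SameLabels r (Icc (-N) N) (d * κ) κ := by
  have hmul : SameLabels r (Icc (-N) N) (d * κ) (1 * κ) := by
    refine (sameLabels_mul_right κ).2 (hd.mono fun m hm ↦ ?_)
    obtain ⟨m, rfl⟩ := MulAction.surjective κ m
    rw [mem_ofPred_eq, inv_smul_smul] at hm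
    have habs : |(m : ℝ)| ≤ N := by exact_mod_cast abs_le.2 hm
    rw [abs_le] at habs
    rw [mem_ofPred_eq, ← hκ, abs_smul_sub_two_mul_smul, abs_le]
    push_cast
    constructor <;> linarith [hy.1, hy.2]
  rwa [one_mul] at hmul

theorem IsAperiodicRecurrent.isLocalPattern (hr : IsAperiodicRecurrent r)
    (hy : y ∈ Icc (0 : ℝ) (1 / 2)) (N : ℕ) (κ₀ : Frame) :
    IsLocalPattern r {z | ∃ κ, SameLabels r (Icc (-N) N) κ κ₀ ∧ κ • y = z} y (N + 2) where
  base_mem := hy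
  exists_smul_eq := fun _ ⟨κ, _, hκ⟩ ↦ ⟨κ, hκ⟩
  two_le := Nat.le_add_left 2 N
  mem_smul_iff d z hd := by
    constructor
    · rintro ⟨κ, hκ, hz⟩
      exact ⟨d * κ, (sameLabels_mul_of_smul_eq hy hz hd).trans hκ, by rw [mul_smul, hz]⟩
    · rintro ⟨κ, hκ, hz⟩
      have hz' : (d⁻¹ * κ) • y = z := by rw [mul_smul, hz, inv_smul_smul]
      have hsame := sameLabels_mul_of_smul_eq hy hz' hd
      rw [mul_inv_cancel_left] at hsame
      exact ⟨d⁻¹ * κ, hsame.symm.trans hκ, hz'⟩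
  syndetic := by
    obtain ⟨M, hM⟩ := hr.recurrent N κ₀ 1
    refine ⟨M + 3, fun u ↦ ?_⟩
    obtain ⟨κ, hsign, hle, hle', hsame⟩ := hM (⌊u⌋ + 1)
    refine ⟨κ • y, ⟨κ, hsame, rfl⟩, ?_⟩
    have hfloor := Int.floor_le u
    have hfloor' := Int.lt_floor_add_one u
    have hshift : (⌊u⌋ : ℝ) + 1 ≤ κ.shift := by exact_mod_cast hle
    have hshift' : (κ.shift : ℝ) ≤ ⌊u⌋ + 1 + M := by exact_mod_cast hle'
    rw [smul_real_def, hsign]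
    push_cast
    constructor <;> linarith [hy.1, hy.2]

theorem IsLabelLocal.exists_apply_eq_self {g : ℝ ≃o ℝ} (hg : IsLabelLocal r g) {κ₀ : Frame}
    {ε : ℝ} (hfix : ∀ z, dist z (κ₀ • y) < ε → g z = z) :
    ∃ N : ℕ, ∀ κ, SameLabels r (Icc (-N) N) κ κ₀ → ∀ z, dist z (κ • y) < ε → g z = z := by
  obtain ⟨N, hN⟩ := hg.conj_eq (|y| + ε)
  refine ⟨N, fun κ hκ z hz ↦ ?_⟩
  obtain ⟨w, rfl⟩ := MulAction.surjective κ z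
  rw [Real.dist_eq, abs_smul_sub_smul] at hz
  have hw : |w| ≤ |y| + ε := by linarith [abs_sub_abs_le_abs_sub w y]
  have hκ₀ : g (κ₀ • w) = κ₀ • w := hfix _ (by rwa [Real.dist_eq, abs_smul_sub_smul])
  rw [← smul_conj_apply, hN κ κ₀ hκ w hw, conj_apply, hκ₀, inv_smul_smul]

/-- The group of homeomorphisms with trivial germ at `x`. -/
def germKernel (x : ℝ) : Subgroup (ℝ ≃o ℝ) where
  carrier := {g | ∀ᶠ z in 𝓝 x, g z = z}
  one_mem' := .of_forall fun _ ↦ rfl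
  mul_mem' {g h} hg hh := by
    filter_upwards [hg, hh] with z hgz hhz
    rw [RelIso.mul_apply, hhz, hgz]
  inv_mem' {g} hg := by
    filter_upwards [hg] with z hgz using inv_apply_eq_self hgz

theorem mul_mul_inv_mem_germKernel {x w : ℝ} {g t : ℝ ≃o ℝ} (hg : g ∈ germKernel x)
    (ht : t x = w) : t * g * t⁻¹ ∈ germKernel w := by
  have htendsto : Tendsto (t⁻¹ : ℝ ≃o ℝ) (𝓝 w) (𝓝 x) := by
    rw [← t.symm_apply_eq.2 ht.symm]
    exact (t⁻¹ : ℝ ≃o ℝ).continuous.tendsto w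
  filter_upwards [htendsto.eventually hg] with z hz
  rw [RelIso.mul_apply, RelIso.mul_apply, hz, RelIso.apply_inv_self]

namespace IsLabelledGroup

variable {H G : Subgroup (ℝ ≃o ℝ)}

theorem exists_commute_conj (hG : IsLabelledGroup r H G) {x : ℝ} {g₁ g₂ : ℝ ≃o ℝ} (hg₁ : g₁ ∈ G)
    (hg₂ : g₂ ∈ G) (h₁ : g₁ ∈ germKernel x) (h₂ : g₂ ∈ germKernel x) :
    ∃ t ∈ G, t x = x ∧ ∀ a b, (a = g₁ ∨ a = g₂) → (b = g₁ ∨ b = g₂) →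
      Commute a (t * b * t⁻¹) := by
  obtain ⟨ε, hε, hfix⟩ := Metric.eventually_nhds_iff.1 (Filter.Eventually.and h₁ h₂)
  obtain ⟨κ₀, y, hy, rfl⟩ := exists_mem_Icc_smul_eq x
  obtain ⟨N₁, hN₁⟩ :=
    (hG.isLabelLocal hg₁).exists_apply_eq_self fun z hz ↦ (hfix (y := z) hz).1
  obtain ⟨N₂, hN₂⟩ :=
    (hG.isLabelLocal hg₂).exists_apply_eq_self fun z hz ↦ (hfix (y := z) hz).2
  obtain ⟨t, ht, htX, hcomm⟩ :=
    (hG.labels.isLocalPattern hy (max N₁ N₂) κ₀).exists_commute_conj hG hε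
  refine ⟨t, ht, htX _ ⟨κ₀, .refl _ _ _, rfl⟩, ?_⟩
  suffices ∀ a, (a = g₁ ∨ a = g₂) → ∀ z ∈ Metric.thickening ε _, a z = z from
    fun a b ha hb ↦ hcomm a b (this a ha) (this b hb)
  intro a ha z hz
  obtain ⟨_, ⟨κ, hκ, rfl⟩, hzκ⟩ := Metric.mem_thickening_iff.1 hz
  rcases ha with rfl | rfl
  · exact hN₁ κ (hκ.mono_radius (le_max_left _ _)) z hzκ
  · exact hN₂ κ (hκ.mono_radius (le_max_right _ _)) z hzκ

theorem hasCommutingConjugates_germKernel (hG : IsLabelledGroup r H G) (x : ℝ) :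
    HasCommutingConjugates ((germKernel x).subgroupOf G) := by
  intro a ha b hb
  obtain ⟨t, ht, htx, hcomm⟩ := hG.exists_commute_conj a.2 b.2 ha hb
  have hconj (y : G) (hy : y = a ∨ y = b) : (y : ℝ ≃o ℝ) ∈ germKernel x := by
    rcases hy with rfl | rfl <;> assumption
  refine ⟨⟨t, ht⟩, fun y hy ↦ ⟨mul_mul_inv_mem_germKernel (hconj y hy) htx, fun z hz ↦ ?_⟩⟩
  exact Subtype.ext <|
    hcomm z y (hz.imp (congrArg _) (congrArg _)) (hy.imp (congrArg _) (congrArg _))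

theorem isAdditivePair_of_mem_germKernel (hG : IsLabelledGroup r H G) {E : Type*} [Group E]
    {π : E →* G} {τ : E → ℝ} (hτ : IsCentralQuasimorphism π τ) {x : ℝ} {n k : G}
    (hn : (n : ℝ ≃o ℝ) ∈ germKernel x) (hk : (k : ℝ ≃o ℝ) x = x) : IsAdditivePair π τ n k := by
  refine hτ.isAdditivePair_of_mem_normalizer (hG.hasCommutingConjugates_germKernel x) hn ?_
  refine Subgroup.mem_normalizer_iff.2 fun a ↦
    ⟨fun ha ↦ mul_mul_inv_mem_germKernel ha hk, fun ha ↦ ?_⟩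
  have hconj := mul_mul_inv_mem_germKernel ha (inv_apply_eq_self hk)
  simpa [Subgroup.mem_subgroupOf, mul_assoc] using hconj

end IsLabelledGroup

end Germs

/-! ### Additivity on the whole group -/

namespace Frame

theorem abs_shift_le (d : Frame) (x : ℝ) : |(d.shift : ℝ)| ≤ |d • x| + |x| := by
  have h := d.abs_smul_sub_smul 0 x
  rw [smul_real_def d 0, mul_zero, add_zero, zero_sub, abs_neg] at h
  have := abs_sub_abs_le_abs_sub (d.shift : ℝ) (d • x)
  linarith

theorem abs_smul_int_le (d : Frame) (m : ℤ) : |d • m| ≤ 2 * |d.shift| + |m| := by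
  have h := d.abs_smul_sub_smul_int m 0
  rw [smul_int_def d 0, mul_zero, add_zero, sub_zero] at h
  have := abs_sub_abs_le_abs_sub (d • m) (2 * d.shift)
  rw [abs_mul, abs_two] at this
  linarith

end Frame

section Generation

variable {r : ℤ → ℤˣ}

theorem HasDisjointCopies.mono {κ : Frame} {A B : Set ℤ} {O O' : Set ℝ}
    (h : HasDisjointCopies r κ A O) (hAB : A ⊆ B) (hO : O' ⊆ O) : HasDisjointCopies r κ B O' :=
  fun d d' hd hd' y hy y' hy' ↦ h d d' (hd.mono hAB) (hd'.mono hAB) y (hO hy) y' (hO hy')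

theorem IsAperiodicRecurrent.exists_hasDisjointCopies (hr : IsAperiodicRecurrent r) (C : ℝ) :
    ∃ N : ℕ, HasDisjointCopies r 1 (Icc (-(N : ℤ)) N) (Icc (-C) C) := by
  obtain ⟨B, hB⟩ := exists_nat_ge (2 * C)
  obtain ⟨N, hN⟩ := hr.aperiodic B
  refine ⟨N + 2 * B, fun d d' hd hd' y hy y' hy' h ↦ ?_⟩
  set δ := d'⁻¹ * d with hδ
  have hshift : |δ.shift| ≤ B := by
    have hle := δ.abs_shift_le y
    rw [show δ • y = y' by rw [hδ, mul_smul, h, inv_smul_smul]] at hle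
    have : |(δ.shift : ℝ)| ≤ B := by linarith [abs_le.2 hy, abs_le.2 hy']
    exact_mod_cast this
  have hle : N ≤ N + 2 * B := by omega
  have hlab : SameLabels r (Icc (-(N : ℤ)) N) (d' * δ) (1 * δ) := by
    refine (sameLabels_mul_right δ).2 (hd'.mono fun m hm ↦ abs_le.1 ?_)
    have hm := abs_le.2 (mem_ofPred_eq ▸ hm)
    have := δ.abs_smul_int_le (δ⁻¹ • m)
    rw [smul_inv_smul] at this
    omega
  rw [hδ, mul_inv_cancel_left, ← hδ, one_mul] at hlab
  rcases hN δ (hlab.symm.trans (hd.mono_radius hle)) with h | h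
  · exact (inv_mul_eq_one.1 h).symm
  · omega

variable {H G : Subgroup (ℝ ≃o ℝ)}

theorem IsLabelledCopy.exists_mem_germKernel {j : ℤ} {ν g : ℝ ≃o ℝ} (h : IsLabelledCopy r j ν g)
    (hν : HasEndSlope ν 0) : ∃ a, g ∈ germKernel a := by
  obtain ⟨ε, hε, hslope, -⟩ := hν
  obtain ⟨d, hd⟩ : ∃ d, label r d j = 1 := by
    rcases Int.units_eq_one_or (label r 1 j) with h | h
    · exact ⟨1, h⟩
    · exact ⟨1 * reflection j, by rw [label_mul_reflection, h, neg_neg]⟩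
  set δ := min ε 1
  have hδ : 0 < δ := lt_min hε one_pos
  refine ⟨d • (δ / 2 + ((j : ℝ) - 1) / 2), ?_⟩
  have htendsto := d⁻¹.continuous_smul.tendsto (d • (δ / 2 + ((j : ℝ) - 1) / 2))
  rw [inv_smul_smul] at htendsto
  filter_upwards [htendsto.eventually (Ioo_mem_nhds (a := ((j : ℝ) - 1) / 2)
    (b := δ + ((j : ℝ) - 1) / 2) (by linarith) (by linarith))] with z hz
  obtain ⟨hz₀, hz₁⟩ := hz
  have hgz := h d hd (d⁻¹ • z - ((j : ℝ) - 1) / 2)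
    ⟨by linarith, by linarith [min_le_right ε 1]⟩
  rw [hslope _ ⟨by linarith, by linarith [min_le_left ε 1]⟩] at hgz
  simpa using hgz

namespace IsLabelledGroup

theorem exists_lt_apply_and_forall_eq_self (hG : IsLabelledGroup r H G) {p q C : ℝ}
    (hO : Ioo p q ⊆ Icc (-C) C) {y u : ℝ} (hy : y ∈ Ioo p q) (hu : u ∈ Ioo p q) :
    ∃ t ∈ G, u < t y ∧ ∀ w ∈ Icc (-C) C, w ∉ Ioo p q → t w = w := by
  obtain ⟨N, hN⟩ := hG.labels.exists_hasDisjointCopies C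
  obtain ⟨M, hM⟩ := exists_nat_ge (2 * C + 2)
  have hdisj : HasDisjointCopies r 1 (Icc (-((max N M : ℕ) : ℤ)) (max N M : ℕ)) (Icc (-C) C) :=
    hN.mono (Icc_subset_Icc (by simp) (by simp)) subset_rfl
  have hwindow : ∀ z ∈ Ioo p q, ∀ m : ℤ, |(m : ℝ) - 2 * z| ≤ 2 →
      m ∈ Icc (-((max N M : ℕ) : ℤ)) (max N M : ℕ) := by
    intro z hz m hm
    have hMN : (M : ℝ) ≤ (max N M : ℕ) := by exact_mod_cast le_max_right N M
    have hz := hO hz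
    rw [abs_le] at hm
    have hlow : -((max N M : ℕ) : ℝ) ≤ m := by linarith [hz.1]
    have hupp : (m : ℝ) ≤ (max N M : ℕ) := by linarith [hz.2]
    exact ⟨by exact_mod_cast hlow, by exact_mod_cast hupp⟩
  obtain ⟨f, t, ht, hf, h⟩ := hG.exists_spreads_lt_apply ordConnected_Icc (finite_Icc _ _) hwindow
    (hdisj.mono subset_rfl hO) hy hu
  refine ⟨t, ht, ?_, fun w hw hwO ↦ hf.eq_self w fun d hd z hz hwd ↦ ?_⟩
  · have hty := hf.apply_smul 1 (.refl _ _ _) y hy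
    rw [one_smul, one_smul] at hty
    rwa [hty]
  · obtain rfl := hdisj d 1 hd (.refl _ _ _) z (hO hz) w hw (by rw [one_smul, hwd])
    rw [one_smul] at hwd
    exact hwO (hwd ▸ hz)

/-- The elements of `H` all of whose labelled copies around the index `j` lie in `K`. -/
def copiesIn (hG : IsLabelledGroup r H G) {j : ℤ} (hj : j = 0 ∨ j = 1)
    (K : Subgroup (ℝ ≃o ℝ)) : Subgroup (ℝ ≃o ℝ) where
  carrier := {ν | ν ∈ H ∧ ∀ g, IsLabelledCopy r j ν g → g ∈ K}
  one_mem' := ⟨H.one_mem, fun g hg ↦ hg.unique hj (.one r j) ▸ K.one_mem⟩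
  mul_mem' := by
    rintro ν ν' ⟨hν, hcopies⟩ ⟨hν', hcopies'⟩
    refine ⟨H.mul_mem hν hν', fun g hg ↦ ?_⟩
    obtain ⟨f, -, hf⟩ := hG.exists_copy j hj ν hν
    obtain ⟨f', -, hf'⟩ := hG.exists_copy j hj ν' hν'
    rw [hg.unique hj (hf.mul hf' ((hG.mem_iff _).1 hν').mapsTo_Icc)]
    exact K.mul_mem (hcopies f hf) (hcopies' f' hf')
  inv_mem' := by
    rintro ν ⟨hν, hcopies⟩
    refine ⟨H.inv_mem hν, fun g hg ↦ ?_⟩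
    obtain ⟨f, -, hf⟩ := hG.exists_copy j hj ν hν
    rw [hg.unique hj (hf.inv ((hG.mem_iff _).1 (H.inv_mem hν)).mapsTo_Icc)]
    exact K.inv_mem (hcopies f hf)

theorem le_of_forall_hasEndSlope_zero (hG : IsLabelledGroup r H G) {K : Subgroup (ℝ ≃o ℝ)}
    (h : ∀ j : ℤ, j = 0 ∨ j = 1 → ∀ ν ∈ H, HasEndSlope ν 0 → ∀ g, IsLabelledCopy r j ν g → g ∈ K) :
    G ≤ K := by
  refine hG.le_closure.trans ((Subgroup.closure_le K).2 ?_)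
  rintro g ⟨j, hj, ν, hν, hg⟩
  have hend : endStretch ∈ hG.copiesIn hj K :=
    ⟨(hG.mem_iff _).2 endStretch_inH, fun f hf ↦ h (1 - j) (by omega) midStretch
      ((hG.mem_iff _).2 midStretch_inH) hasEndSlope_midStretch f hf.midStretch_of_endStretch⟩
  obtain ⟨k, ν', rfl, hslope⟩ := ((hG.mem_iff ν).1 hν).exists_eq_mul_endStretch_zpow
  have hν' : ν' ∈ H := by simpa using H.mul_mem hν (H.inv_mem (H.zpow_mem hend.1 k))
  exact (mul_mem (⟨hν', h j hj ν' hν' hslope⟩ : ν' ∈ hG.copiesIn hj K) (zpow_mem hend k)).2 g hg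

section CentralQuasimorphism

variable {E : Type*} [Group E] {π : E →* G} {τ : E → ℝ}

-- Factor `g` as `⁅g, t⁆ * (t * g * t⁻¹)`.
theorem isAdditivePair_of_factorization (hG : IsLabelledGroup r H G)
    (hτ : IsCentralQuasimorphism π τ) {g h t : G} {x x' y : ℝ} (hgx : (g : ℝ ≃o ℝ) x = x)
    (hghx : ((g * h : G) : ℝ ≃o ℝ) x' = x') (hhy : (h : ℝ ≃o ℝ) y = y)
    (htx : (t : ℝ ≃o ℝ) ∈ germKernel x) (htx' : (t : ℝ ≃o ℝ) ∈ germKernel x')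
    (htgx : (t : ℝ ≃o ℝ) ∈ germKernel ((g : ℝ ≃o ℝ)⁻¹ x'))
    (hg : (g : ℝ ≃o ℝ) ∈ germKernel ((t : ℝ ≃o ℝ)⁻¹ y)) : IsAdditivePair π τ g h := by
  have hcomm {w : ℝ} (hw : (t : ℝ ≃o ℝ) ∈ germKernel w)
      (hgw : (t : ℝ ≃o ℝ) ∈ germKernel ((g : ℝ ≃o ℝ)⁻¹ w)) :
      ((⁅g, t⁆ : G) : ℝ ≃o ℝ) ∈ germKernel w :=
    mul_mem (mul_mul_inv_mem_germKernel hgw (RelIso.apply_inv_self _ _)) (inv_mem hw)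
  have hfactor : ⁅g, t⁆ * (t * g * t⁻¹) = g := by rw [commutatorElement_def]; group
  rw [← hfactor]
  refine hτ.isAdditivePair_mul_left ?_ ?_ ?_
  · refine hG.isAdditivePair_of_mem_germKernel hτ (hcomm htx (by rwa [inv_apply_eq_self hgx])) ?_
    simp only [Subgroup.coe_mul, Subgroup.coe_inv, RelIso.mul_apply]
    rw [inv_apply_eq_self htx.self_of_nhds, hgx, htx.self_of_nhds]
  · have hfix := hcomm htx' htgx
    refine hG.isAdditivePair_of_mem_germKernel hτ hfix ?_
    rw [← hfactor, mul_assoc, Subgroup.coe_mul, RelIso.mul_apply] at hghx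
    exact ((⁅g, t⁆ : G) : ℝ ≃o ℝ).injective (hghx.trans hfix.self_of_nhds.symm)
  · exact hG.isAdditivePair_of_mem_germKernel hτ
      (mul_mul_inv_mem_germKernel hg (RelIso.apply_inv_self _ _)) hhy

theorem isAdditivePair_of_mem_germKernel_left (hG : IsLabelledGroup r H G)
    (hτ : IsCentralQuasimorphism π τ) {g h : G} {a : ℝ} (hg : (g : ℝ ≃o ℝ) ∈ germKernel a) :
    IsAdditivePair π τ g h := by
  obtain ⟨p, b, ⟨hpa, hab⟩, hfix⟩ := mem_nhds_iff_exists_Ioo_subset.1 hg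
  obtain ⟨y, hay, hhy⟩ := (hG.isLabelLocal h.2).exists_fixed hG.labels a
  obtain ⟨x, hqx, hgx⟩ := (hG.isLabelLocal g.2).exists_fixed hG.labels (y + 1)
  obtain ⟨D, hD⟩ := (hG.isLabelLocal g.2).bounded
  obtain ⟨x', hqx', hghx⟩ := (hG.isLabelLocal (g * h).2).exists_fixed hG.labels (y + 1 + |D|)
  set x'' := (g : ℝ ≃o ℝ)⁻¹ x' with hx''
  have hqx'' : y + 1 < x'' := by
    have hle := hD x''
    rw [hx'', RelIso.apply_inv_self, ← hx''] at hle
    linarith [le_abs_self (x' - x''), le_abs_self D]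
  obtain ⟨C, hpC, hqC, hxC, hxC', hxC''⟩ : ∃ C, |p| < C ∧ |y + 1| < C ∧ |x| < C ∧ |x'| < C ∧
      |x''| < C := ((eventually_gt_atTop |p|).and <| (eventually_gt_atTop |y + 1|).and <|
    (eventually_gt_atTop |x|).and <| (eventually_gt_atTop |x'|).and <|
    eventually_gt_atTop |x''|).exists
  have hO : Ioo p (y + 1) ⊆ Icc (-C) C := fun z hz ↦
    ⟨by linarith [hz.1, neg_abs_le p], by linarith [hz.2, le_abs_self (y + 1)]⟩
  obtain ⟨t, ht, hlt, hid⟩ := hG.exists_lt_apply_and_forall_eq_self hO (y := a) (u := y)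
    ⟨hpa, by linarith⟩ ⟨by linarith, by linarith⟩
  have hgerm {w : ℝ} (hqw : y + 1 < w) (hw : |w| < C) : t ∈ germKernel w := by
    filter_upwards [eventually_gt_nhds hqw, Icc_mem_nhds (abs_lt.1 hw).1 (abs_lt.1 hw).2]
      with z hqz hz using hid z hz fun hzO ↦ hqz.not_gt hzO.2
  have htp : t p = p := hid p (abs_le.1 hpC.le) fun hzO ↦ hzO.1.false
  have hpy : p < t⁻¹ y := (OrderIso.lt_symm_apply t).2 (by rw [htp]; linarith)
  have hyb : t⁻¹ y < b := ((OrderIso.symm_apply_lt t).2 hlt).trans hab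
  exact hG.isAdditivePair_of_factorization hτ (t := ⟨t, ht⟩) hgx hghx hhy (hgerm hqx hxC)
    (hgerm (by linarith [abs_nonneg D]) hxC') (hgerm hqx'' hxC'')
    (mem_of_superset (Ioo_mem_nhds hpy hyb) hfix)

theorem isAdditivePair (hG : IsLabelledGroup r H G) (hτ : IsCentralQuasimorphism π τ) (g h : G) :
    IsAdditivePair π τ g h := by
  suffices G ≤ hτ.additiveSubgroup.map G.subtype by
    obtain ⟨g', hg', hgg'⟩ := this g.2
    obtain rfl : g' = g := Subtype.ext hgg'
    exact hτ.mem_additiveSubgroup.1 hg' h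
  refine hG.le_of_forall_hasEndSlope_zero fun j hj ν hν hslope g hg ↦ ?_
  obtain ⟨a, ha⟩ := hg.exists_mem_germKernel hslope
  exact ⟨⟨g, hG.mem_of_isLabelledCopy hj hν hg⟩, hτ.mem_additiveSubgroup.2 fun k ↦
    hG.isAdditivePair_of_mem_germKernel_left hτ ha, rfl⟩

end CentralQuasimorphism

end IsLabelledGroup

end Generation

/-! ### Homomorphisms from `H` to abelian groups -/

/-- The common tail of the bumps `bump p ε c`, a translation by `ε` to the left of `c - 2 * ε`. -/
noncomputable def tailMap (ε c : ℝ) : ℝ ≃o ℝ :=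
  supIso 1 (infIso (affineIso 1 (by norm_num) ε) (affineIso (1 / 2) (by norm_num) (c / 2)))

section Tail

variable {p ε c t : ℝ}

theorem tailMap_apply (ε c t : ℝ) : tailMap ε c t = max t (min (t + ε) ((t + c) / 2)) := by
  simp only [tailMap, supIso_apply, infIso_apply, affineIso_apply, RelIso.one_apply]
  ring_nf

theorem bump_eq_tailMap (h : p + ε ≤ t) : bump p ε c t = tailMap ε c t := by
  rw [bump_apply, tailMap_apply, min_eq_right (a := 2 * t - p) (by linarith)]

theorem tailMap_eq_translate (hε : 0 ≤ ε) (h : t ≤ c - 2 * ε) : tailMap ε c t = t + ε := by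
  rw [tailMap_apply, min_eq_left (by linarith), max_eq_right (by linarith)]

theorem tailMap_pow_eq_translate (hε : 0 ≤ ε) (n : ℕ) (h : t + n * ε ≤ c - 2 * ε) :
    (tailMap ε c ^ n) t = t + n * ε := by
  induction n generalizing t with
  | zero => simp
  | succ n ih =>
    have hn : 0 ≤ n * ε := by positivity
    push_cast at h ⊢
    rw [pow_succ, RelIso.mul_apply, tailMap_eq_translate hε (by linarith), ih (by linarith)]
    ring

theorem tailMap_zpow_eq_translate (hε : 0 ≤ ε) (m : ℤ) (h : t ≤ c - 2 * ε)
    (h' : t + m * ε ≤ c - 2 * ε) : (tailMap ε c ^ m) t = t + m * ε := by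
  obtain ⟨n, rfl | rfl⟩ := m.eq_nat_or_neg
  · rw [zpow_natCast]
    exact tailMap_pow_eq_translate hε n h'
  · have hback := tailMap_pow_eq_translate (c := c) (t := t - n * ε) hε n (by linarith)
    push_cast
    rw [sub_add_cancel] at hback
    rw [zpow_neg, zpow_natCast, neg_mul, ← sub_eq_add_neg]
    exact (OrderIso.symm_apply_eq _).2 hback.symm

theorem bump_add_eq_conj (hε : 0 < ε) (hc : p + 4 * ε ≤ c) :
    bump (p + ε) ε c = bump (p - ε) ε c * bump p ε c * (bump (p - ε) ε c)⁻¹ := by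
  rw [eq_mul_inv_iff_mul_eq]
  ext t
  simp only [RelIso.mul_apply]
  rcases le_total t p with htp | hpt
  · have hle : bump (p - ε) ε c t ≤ p + ε := by
      have := (bump (p - ε) ε c).monotone htp
      rwa [bump_eq_translate (t := p) hε.le ⟨by linarith, by linarith⟩] at this
    rw [bump_eq_self_of_le hle, bump_eq_self_of_le htp]
  rw [bump_eq_tailMap (p := p - ε) (by linarith)]
  rcases le_total t (p + ε) with ht | ht
  · rw [bump_eq_expand (p := p) (by linarith) ⟨hpt, ht⟩,
      tailMap_eq_translate hε.le (by linarith),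
      bump_eq_expand (by linarith) ⟨by linarith, by linarith⟩,
      bump_eq_translate hε.le ⟨by linarith, by linarith⟩]
    ring
  · have hle := (tailMap ε c).monotone ht
    rw [tailMap_eq_translate hε.le (by linarith)] at hle
    rw [bump_eq_tailMap (p := p) ht, bump_eq_tailMap (p := p + ε) (by linarith),
      bump_eq_tailMap (p := p - ε) (by linarith)]

end Tail

/-- The number of cells covered by the images of the first `n` cells, when the cell of index `i` is
stretched by the factor `2 ^ d i`. -/
def imageLength (d : ℕ → ℕ) (n : ℕ) : ℕ := ∑ i ∈ Finset.range n, 2 ^ d i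

section ImageLength

variable (d : ℕ → ℕ) (n : ℕ)

@[simp] theorem imageLength_zero : imageLength d 0 = 0 := rfl

theorem imageLength_succ : imageLength d (n + 1) = imageLength d n + 2 ^ d n :=
  Finset.sum_range_succ _ n

@[simp] theorem imageLength_const (k : ℕ) : imageLength (fun _ ↦ k) n = n * 2 ^ k := by
  simp [imageLength]

theorem le_imageLength : n ≤ imageLength d n := by
  simpa [imageLength] using
    Finset.sum_le_sum (s := Finset.range n) fun i _ ↦ Nat.one_le_two_pow (n := d i)

end ImageLength

/-- `g` stretches the `n` consecutive cells of length `ε` to the right of `p` by the factors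
`2 ^ d i`, with the identity on their left and a power of `tailMap ε c` on their right. -/
structure IsStretch (p ε c : ℝ) (d : ℕ → ℕ) (n : ℕ) (g : ℝ ≃o ℝ) : Prop where
  left : ∀ t ≤ p, g t = t
  cell : ∀ i < n, ∀ t ∈ Icc (p + i * ε) (p + (i + 1) * ε),
    g t = p + imageLength d i * ε + 2 ^ d i * (t - p - i * ε)
  tail : ∀ t, p + n * ε ≤ t → g t = (tailMap ε c ^ ((imageLength d n : ℤ) - n)) t

namespace IsStretch

variable {p ε c : ℝ} {d : ℕ → ℕ} {n : ℕ} {g g' : ℝ ≃o ℝ}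

theorem one : IsStretch p ε c d 0 1 := ⟨by simp, by simp, by simp⟩

theorem tail_eq_translate (h : IsStretch p ε c d n g) (hε : 0 ≤ ε) {t : ℝ} (ht : p + n * ε ≤ t)
    (htc : t + (imageLength d n - n) * ε ≤ c - 2 * ε) : g t = t + (imageLength d n - n) * ε := by
  have hle : (n : ℝ) ≤ imageLength d n := by exact_mod_cast le_imageLength d n
  rw [h.tail t ht, tailMap_zpow_eq_translate hε _ ?_ (by push_cast; exact htc)]
  · push_cast; ring
  · nlinarith

theorem mul_of_single {y : ℝ ≃o ℝ} (h : IsStretch p ε c d n g) (hε : 0 ≤ ε)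
    (hy : IsStretch (p + imageLength d n * ε) ε c (fun _ ↦ d n) 1 y)
    (hc : p + imageLength d (n + 1) * ε + 2 * ε ≤ c) : IsStretch p ε c d (n + 1) (y * g) := by
  have hpow : (1 : ℝ) ≤ 2 ^ d n := one_le_pow₀ (by norm_num)
  have hcell : (imageLength d n + 1) * ε ≤ imageLength d (n + 1) * ε := by
    rw [imageLength_succ]; push_cast; gcongr
  have hend : g (p + n * ε) = p + imageLength d n * ε := by
    rw [h.tail_eq_translate hε le_rfl (by linarith)]; ring
  refine ⟨fun t ht ↦ ?_, fun i hi t ht ↦ ?_, fun t ht ↦ ?_⟩ <;> rw [RelIso.mul_apply]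
  · have hlen : 0 ≤ imageLength d n * ε := by positivity
    rw [h.left t ht, hy.left t (by linarith)]
  · rcases Nat.lt_succ_iff_lt_or_eq.1 hi with hi | rfl
    · have hin : ((i : ℝ) + 1) * ε ≤ n * ε := by gcongr; exact_mod_cast hi
      have hle := g.monotone (show t ≤ p + n * ε by linarith [ht.2])
      rw [hend] at hle
      rw [hy.left _ hle, h.cell i hi t ht]
    · obtain ⟨ht₀, ht₁⟩ := ht
      have hy₀ := hy.cell 0 one_pos
      simp only [Nat.cast_zero, zero_mul, add_zero, imageLength_zero, zero_add, one_mul,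
        sub_zero] at hy₀
      rw [h.tail_eq_translate hε ht₀ (by linarith), hy₀ _ ⟨by linarith, by linarith⟩]
      ring
  · push_cast at ht
    have hle := g.monotone ht
    rw [h.tail_eq_translate hε (by linarith) (by linarith)] at hle
    rw [hy.tail _ (by push_cast; linarith), h.tail t (by linarith), ← RelIso.mul_apply, ← zpow_add,
      imageLength_const, imageLength_succ]
    congr 2
    push_cast; ring

theorem mul_bump {k : ℕ} (h : IsStretch p ε c (fun _ ↦ k) 2 g) (hε : 0 ≤ ε)
    (hc : p + 2 ^ (k + 1) * ε + 2 * ε ≤ c) :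
    IsStretch p ε c (fun _ ↦ k + 1) 1 (g * bump p ε c) := by
  have hpow : 2 * ε ≤ 2 ^ (k + 1) * ε := by
    gcongr; exact le_self_pow₀ (by norm_num) k.succ_ne_zero
  refine ⟨fun t ht ↦ ?_, fun i hi t ht ↦ ?_, fun t ht ↦ ?_⟩ <;> rw [RelIso.mul_apply]
  · rw [bump_eq_self_of_le ht, h.left t ht]
  · obtain rfl : i = 0 := by omega
    have h₀ := h.cell 0 two_pos
    have h₁ := h.cell 1 one_lt_two
    simp only [imageLength_const, Nat.cast_zero, zero_mul, add_zero, imageLength_zero, zero_add,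
      one_mul, sub_zero, Nat.cast_one, Nat.cast_pow, Nat.cast_ofNat] at h₀ h₁ ht ⊢
    rw [bump_eq_expand (by linarith) ht]
    rcases le_total (2 * t - p) (p + ε) with hle | hle
    · rw [h₀ _ ⟨by linarith [ht.1], hle⟩]; ring
    · rw [h₁ _ ⟨hle, by linarith [ht.2]⟩]; ring
  · rw [Nat.cast_one, one_mul] at ht
    have hle := (tailMap ε c).monotone ht
    rw [tailMap_eq_translate hε (by linarith)] at hle
    rw [bump_eq_tailMap ht, h.tail _ (by push_cast; linarith), ← RelIso.mul_apply,
      ← zpow_add_one]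
    congr 2
    simp only [imageLength_const]
    push_cast; ring

theorem unique (h : IsStretch p ε c d n g) (h' : IsStretch p ε c d n g') (hε : 0 < ε) :
    g = g' := by
  ext t
  rcases le_total t p with ht | ht
  · rw [h.left t ht, h'.left t ht]
  rcases le_or_gt (p + n * ε) t with htn | htn
  · rw [h.tail t htn, h'.tail t htn]
  have hfloor := Nat.floor_le (div_nonneg (sub_nonneg.2 ht) hε.le)
  have hlt := Nat.lt_floor_add_one ((t - p) / ε)
  have hn : ⌊(t - p) / ε⌋₊ < n :=
    (Nat.floor_lt (div_nonneg (sub_nonneg.2 ht) hε.le)).2 ((div_lt_iff₀ hε).2 (by linarith))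
  rw [le_div_iff₀ hε] at hfloor
  rw [div_lt_iff₀ hε] at hlt
  have hmem : t ∈ Icc (p + ⌊(t - p) / ε⌋₊ * ε) (p + (⌊(t - p) / ε⌋₊ + 1) * ε) :=
    ⟨by linarith, by linarith⟩
  rw [h.cell _ hn t hmem, h'.cell _ hn t hmem]

theorem of_affine {m : ℤ} (hε : 0 < ε) (hleft : ∀ t ≤ p, g t = t)
    (hcell : ∀ i < n, ∃ b, ∀ t ∈ Icc (p + i * ε) (p + (i + 1) * ε), g t = 2 ^ d i * t + b)
    (htail : ∀ t, p + n * ε ≤ t → g t = (tailMap ε c ^ m) t) (hc : p + n * ε + 2 * ε ≤ c)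
    (hc' : p + (n + m) * ε + 2 * ε ≤ c) :
    IsStretch p ε c d n g ∧ (imageLength d n : ℤ) = n + m := by
  have hnode (i : ℕ) (hi : i ≤ n) : g (p + i * ε) = p + imageLength d i * ε := by
    induction i with
    | zero => simpa using hleft p le_rfl
    | succ i ih =>
      obtain ⟨b, hb⟩ := hcell i hi
      have h₀ := hb _ ⟨le_rfl, by linarith⟩
      rw [ih (by omega)] at h₀
      rw [Nat.cast_succ, hb _ ⟨by linarith, le_rfl⟩, imageLength_succ]
      push_cast
      linarith
  have hend := hnode n le_rfl
  rw [htail _ le_rfl, tailMap_zpow_eq_translate hε.le m (by linarith) (by linarith)] at hend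
  have hlen : (imageLength d n : ℝ) = n + m :=
    mul_right_cancel₀ hε.ne' (by linarith)
  have hlen' : (imageLength d n : ℤ) = n + m := by exact_mod_cast hlen
  refine ⟨⟨hleft, fun i hi t ht ↦ ?_, fun t ht ↦ ?_⟩, hlen'⟩
  · obtain ⟨b, hb⟩ := hcell i hi
    have h₀ := hb _ ⟨le_rfl, by linarith⟩
    rw [hnode i hi.le] at h₀
    rw [hb t ht]
    linarith
  · rw [htail t ht, hlen', add_sub_cancel_left]

theorem affine_mul {K : ℕ} {f : ℝ ≃o ℝ} {k : ℕ → ℤ} (hε : 0 < ε)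
    (hg : IsStretch p ε c (fun _ ↦ K) n g) (hc : p + n * (2 ^ K * ε) + 2 * ε ≤ c)
    (hleft : ∀ t ≤ p, f t = t) (hright : ∀ t, p + n * (2 ^ K * ε) ≤ t → f t = t)
    (hk : ∀ i < n, -(K : ℤ) ≤ k i)
    (hcell : ∀ i < n, ∃ b, ∀ t ∈ Icc (p + i * (2 ^ K * ε)) (p + (i + 1) * (2 ^ K * ε)),
      f t = 2 ^ k i * t + b) :
    ∃ d, IsStretch p ε c d n (f * g) ∧ imageLength d n = imageLength (fun _ ↦ K) n := by
  have hpow : (1 : ℝ) ≤ 2 ^ K := one_le_pow₀ (by norm_num)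
  have hshort : n * ε ≤ n * (2 ^ K * ε) := by
    gcongr; exact le_mul_of_one_le_left hε.le hpow
  have hlen : ((imageLength (fun _ ↦ K) n : ℕ) : ℝ) * ε = n * (2 ^ K * ε) := by
    rw [imageLength_const]; push_cast; ring
  have hend : g (p + n * ε) = p + n * (2 ^ K * ε) := by
    rw [hg.tail_eq_translate hε.le le_rfl (by linarith)]; linarith
  have hstretch := of_affine (p := p) (c := c) (n := n) (g := f * g)
    (d := fun i ↦ (k i + K).toNat) (m := imageLength (fun _ ↦ K) n - n) hε
    (fun t ht ↦ ?_) (fun i hi ↦ ?_) (fun t ht ↦ ?_) (by linarith) (by push_cast; linarith)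
  · exact ⟨_, hstretch.1, by omega⟩
  · rw [RelIso.mul_apply, hg.left t ht, hleft t ht]
  · obtain ⟨b, hb⟩ := hcell i hi
    have hexp : (2 : ℝ) ^ (k i + K).toNat = 2 ^ k i * 2 ^ K := by
      rw [← zpow_natCast, ← zpow_natCast, Int.toNat_of_nonneg (by linarith [hk i hi]),
        zpow_add₀ two_ne_zero]
    refine ⟨2 ^ k i * (p + i * (2 ^ K * ε) - 2 ^ K * (p + i * ε)) + b, fun t ht ↦ ?_⟩
    have hgt := hg.cell i hi t ht
    rw [imageLength_const, Nat.cast_mul, Nat.cast_pow, Nat.cast_ofNat, mul_assoc] at hgt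
    have hnonneg : 0 ≤ 2 ^ K * (t - p - i * ε) := mul_nonneg (by positivity) (by linarith [ht.1])
    have hle : 2 ^ K * (t - p - i * ε) ≤ 2 ^ K * ε := by gcongr; linarith [ht.2]
    rw [RelIso.mul_apply, hgt, hb _ ⟨by linarith, by linarith⟩, hexp]
    ring
  · have hle := g.monotone ht
    rw [hend] at hle
    rw [RelIso.mul_apply, hright _ hle, hg.tail t ht]

end IsStretch

/-- The subgroup generated by the pairs `(bump p ε c, 1)`, where `p` ranges over the grid of step
`ε` to the right of `a`: a homomorphism to an abelian group that takes the same value `q` on these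
bumps takes the value `q ^ m` on `g` whenever `(g, m)` lies in this subgroup. -/
def bumpGrading (a ε c : ℝ) : Subgroup ((ℝ ≃o ℝ) × Multiplicative ℤ) :=
  .closure {x | ∃ i : ℕ, a + i * ε + 4 * ε ≤ c ∧ x = (bump (a + i * ε) ε c, .ofAdd 1)}

section Grading

variable {a ε c : ℝ} {d : ℕ → ℕ} {n : ℕ} {g : ℝ ≃o ℝ}

theorem exists_isStretch_single (hε : 0 ≤ ε) (k i : ℕ)
    (hc : a + i * ε + 2 ^ k * ε + 2 * ε ≤ c) :
    ∃ y, IsStretch (a + i * ε) ε c (fun _ ↦ k) 1 y ∧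
      (y, Multiplicative.ofAdd (2 ^ k - 1 : ℤ)) ∈ bumpGrading a ε c := by
  induction k generalizing i with
  | zero =>
    refine ⟨1, ⟨by simp, fun j hj t ht ↦ ?_, by simp⟩, one_mem _⟩
    obtain rfl : j = 0 := by omega
    simp
  | succ k ih =>
    have hpow : ε ≤ 2 ^ k * ε := le_mul_of_one_le_left hε (one_le_pow₀ (by norm_num))
    rw [pow_succ] at hc
    obtain ⟨y₁, hy₁, hmem₁⟩ := ih i (by linarith)
    obtain ⟨y₂, hy₂, hmem₂⟩ := ih (i + 2 ^ k) (by push_cast; linarith)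
    have hmem : (bump (a + i * ε) ε c, Multiplicative.ofAdd (1 : ℤ)) ∈ bumpGrading a ε c :=
      Subgroup.subset_closure ⟨i, by linarith, rfl⟩
    have hy : IsStretch (a + i * ε) ε c (fun _ ↦ k) 2 (y₂ * y₁) := by
      have hstart : a + ((i + 2 ^ k : ℕ) : ℝ) * ε = a + i * ε + 2 ^ k * ε := by push_cast; ring
      exact hy₁.mul_of_single hε (by simpa [← hstart] using hy₂) (by simp; linarith)
    refine ⟨y₂ * y₁ * bump (a + i * ε) ε c, hy.mul_bump hε (by rw [pow_succ]; linarith), ?_⟩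
    convert mul_mem (mul_mem hmem₂ hmem₁) hmem using 1
    rw [Prod.mk_mul_mk, Prod.mk_mul_mk, ← ofAdd_add, ← ofAdd_add, pow_succ]
    ring_nf

theorem exists_isStretch (hε : 0 ≤ ε) (d : ℕ → ℕ) (n : ℕ)
    (hc : a + imageLength d n * ε + 2 * ε ≤ c) :
    ∃ g, IsStretch a ε c d n g ∧
      (g, Multiplicative.ofAdd (imageLength d n - n : ℤ)) ∈ bumpGrading a ε c := by
  induction n with
  | zero => exact ⟨1, .one, one_mem _⟩
  | succ n ih =>
    have hlen := hc
    rw [imageLength_succ, Nat.cast_add, Nat.cast_pow, Nat.cast_ofNat] at hlen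
    have hpow : 0 ≤ 2 ^ d n * ε := by positivity
    obtain ⟨g, hg, hmem⟩ := ih (by linarith)
    obtain ⟨y, hy, hmem'⟩ := exists_isStretch_single hε (d n) (imageLength d n) (a := a) (c := c)
      (by linarith)
    refine ⟨y * g, hg.mul_of_single hε hy hc, ?_⟩
    convert mul_mem hmem' hmem using 1
    rw [Prod.mk_mul_mk, ← ofAdd_add, imageLength_succ]
    push_cast
    ring_nf

theorem IsStretch.mem_bumpGrading (h : IsStretch a ε c d n g) (hε : 0 < ε)
    (hc : a + imageLength d n * ε + 2 * ε ≤ c) :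
    (g, Multiplicative.ofAdd (imageLength d n - n : ℤ)) ∈ bumpGrading a ε c := by
  obtain ⟨g', hg', hmem⟩ := exists_isStretch hε.le d n hc
  rwa [h.unique hg' hε]

end Grading

section Abelian

variable {A : Type*} [CommGroup A] {H : Subgroup (ℝ ≃o ℝ)} {a ε c : ℝ}

theorem map_bump_eq (ψ : H →* A) (hε : 0 < ε)
    (hbump : ∀ i : ℤ, -1 ≤ i → a + i * ε + 4 * ε ≤ c → bump (a + i * ε) ε c ∈ H)
    (h₀ : bump a ε c ∈ H) (i : ℕ) (hi : a + i * ε + 4 * ε ≤ c) :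
    ∃ h : bump (a + i * ε) ε c ∈ H, ψ ⟨_, h⟩ = ψ ⟨_, h₀⟩ := by
  induction i with
  | zero => simp [h₀]
  | succ i ih =>
    push_cast at hi
    obtain ⟨h, hψ⟩ := ih (by linarith)
    have hpred : bump (a + i * ε - ε) ε c ∈ H := by
      have := hbump (i - 1) (by omega) (by push_cast; linarith)
      rwa [show a + ((i - 1 : ℤ) : ℝ) * ε = a + i * ε - ε by push_cast; ring] at this
    have hconj := bump_add_eq_conj hε (show a + i * ε + 4 * ε ≤ c by linarith)
    rw [show a + i * ε + ε = a + ((i + 1 : ℕ) : ℝ) * ε by push_cast; ring] at hconj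
    refine ⟨hconj ▸ mul_mem (mul_mem hpred h) (inv_mem hpred), ?_⟩
    calc ψ ⟨_, _⟩ = ψ (⟨_, hpred⟩ * ⟨_, h⟩ * ⟨_, hpred⟩⁻¹) := congrArg ψ (Subtype.ext hconj)
      _ = ψ ⟨_, h⟩ := by
        rw [map_mul, map_mul, map_inv, mul_comm (ψ ⟨_, hpred⟩), mul_inv_cancel_right]
      _ = ψ ⟨_, h₀⟩ := hψ

theorem exists_map_eq_zpow_of_mem_bumpGrading (ψ : H →* A) (hε : 0 < ε) (hc : a + 4 * ε ≤ c)
    (hbump : ∀ i : ℤ, -1 ≤ i → a + i * ε + 4 * ε ≤ c → bump (a + i * ε) ε c ∈ H) :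
    ∃ q : A, ∀ x ∈ bumpGrading a ε c, ∃ h : x.1 ∈ H, ψ ⟨x.1, h⟩ = q ^ x.2.toAdd := by
  have h₀ : bump a ε c ∈ H := by simpa using hbump 0 (by norm_num) (by simpa using hc)
  refine ⟨ψ ⟨_, h₀⟩, fun x hx ↦ ?_⟩
  induction hx using Subgroup.closure_induction with
  | mem x hx =>
    obtain ⟨i, hi, rfl⟩ := hx
    simpa using map_bump_eq ψ hε hbump h₀ i hi
  | one => exact ⟨H.one_mem, ψ.map_one.trans (zpow_zero _).symm⟩
  | mul x y _ _ hx hy =>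
    obtain ⟨hxH, hx⟩ := hx
    obtain ⟨hyH, hy⟩ := hy
    exact ⟨mul_mem hxH hyH, by
      rw [Prod.snd_mul, toAdd_mul, zpow_add, ← hx, ← hy, ← map_mul]; rfl⟩
  | inv x _ hx =>
    obtain ⟨hxH, hx⟩ := hx
    exact ⟨inv_mem hxH, by rw [Prod.snd_inv, toAdd_inv, zpow_neg, ← hx, ← map_inv]; rfl⟩

theorem map_eq_one_of_affine {K n : ℕ} {f : ℝ ≃o ℝ} {k : ℕ → ℤ} (ψ : H →* A) (hε : 0 < ε)
    (hbump : ∀ i : ℤ, -1 ≤ i → a + i * ε + 4 * ε ≤ c → bump (a + i * ε) ε c ∈ H)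
    (hc₄ : a + 4 * ε ≤ c) (hc : a + n * (2 ^ K * ε) + 2 * ε ≤ c)
    (hleft : ∀ t ≤ a, f t = t) (hright : ∀ t, a + n * (2 ^ K * ε) ≤ t → f t = t)
    (hk : ∀ i < n, -(K : ℤ) ≤ k i)
    (hcell : ∀ i < n, ∃ b, ∀ t ∈ Icc (a + i * (2 ^ K * ε)) (a + (i + 1) * (2 ^ K * ε)),
      f t = 2 ^ k i * t + b)
    (hf : f ∈ H) : ψ ⟨f, hf⟩ = 1 := by
  have hlen : a + imageLength (fun _ ↦ K) n * ε + 2 * ε ≤ c := by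
    rw [imageLength_const]; push_cast; linarith
  obtain ⟨q, hq⟩ := exists_map_eq_zpow_of_mem_bumpGrading ψ hε hc₄ hbump
  obtain ⟨g, hg, hmem⟩ := exists_isStretch hε.le (fun _ ↦ K) n hlen
  obtain ⟨d, hfg, hd⟩ := hg.affine_mul hε hc hleft hright hk hcell
  have hmem' := hfg.mem_bumpGrading hε (hd ▸ hlen)
  rw [hd] at hmem'
  obtain ⟨hgH, hψg⟩ := hq _ hmem
  obtain ⟨_, hψfg⟩ := hq _ hmem'
  rw [← mul_eq_right (b := ψ ⟨g, hgH⟩), ← map_mul, hψg]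
  exact hψfg

theorem exists_eq_intCast_mul_half_pow {m : ℕ} {x : Fin m → ℝ} (hx : ∀ i, IsDyadic (x i)) :
    ∃ M₀ : ℕ, ∀ M ≥ M₀, ∀ i, ∃ z : ℤ, x i = z * (1 / 2) ^ M := by
  choose z b h using hx
  refine ⟨∑ i, b i, fun M hM i ↦ ⟨z i * 2 ^ (M - b i), ?_⟩⟩
  have hb : b i ≤ M :=
    (Finset.single_le_sum (fun _ _ ↦ Nat.zero_le _) (Finset.mem_univ i)).trans hM
  obtain ⟨e, rfl⟩ := Nat.exists_eq_add_of_le hb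
  rw [h i, Nat.add_sub_cancel_left]
  push_cast
  rw [pow_add, one_div, inv_pow, inv_pow]
  field_simp

theorem InThompsonF.exists_forall_isPowTwoAffineOn {f : ℝ ≃o ℝ} (hf : InThompsonF f) :
    ∃ M₀ : ℕ, ∀ M ≥ M₀, ∀ n : ℕ, n < 2 ^ M →
      IsPowTwoAffineOn f (Icc (n * (1 / 2) ^ M) ((n + 1) * (1 / 2) ^ M)) := by
  obtain ⟨-, m, x, hx₀, hx₁, -, hdyadic, haffine⟩ := hf
  obtain ⟨M₀, hM₀⟩ := exists_eq_intCast_mul_half_pow hdyadic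
  refine ⟨M₀, fun M hM n hn ↦ ?_⟩
  have hη : (0 : ℝ) < (1 / 2) ^ M := by positivity
  choose z hz using hM₀ M hM
  have hfirst : z 0 = 0 := by simpa [hx₀, hη.ne'] using hz 0
  have hlast : z (Fin.last m) = 2 ^ M := by
    have h := hz (Fin.last m)
    rw [hx₁, one_div, inv_pow, ← div_eq_mul_inv, eq_div_iff (by positivity), one_mul] at h
    exact_mod_cast h.symm
  obtain ⟨i, hi, hi'⟩ : ∃ i : Fin m, z i.castSucc ≤ n ∧ (n : ℤ) < z i.succ := by
    by_contra! hcontra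
    have hle (i : Fin (m + 1)) : z i ≤ n := by
      induction i using Fin.induction with
      | zero => rw [hfirst]; positivity
      | succ i ih => exact hcontra i ih
    have hn' : (2 ^ M : ℤ) ≤ n := hlast ▸ hle (Fin.last m)
    exact hn.not_ge (by exact_mod_cast hn')
  obtain ⟨k, b, h⟩ := haffine i
  refine ⟨k, b, fun t ht ↦ h t ⟨?_, ?_⟩⟩ <;> rw [hz]
  · refine le_trans ?_ ht.1
    gcongr
    exact_mod_cast hi
  · refine ht.2.trans ?_
    gcongr
    exact_mod_cast hi'

theorem bump_grid_inH {k : ℕ} (ha : IsDyadic a) (hc : IsDyadic c) (h0 : (1 / 2) ^ k < a)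
    (h1 : c < 1) (i : ℤ) (hi : -1 ≤ i) (hic : a + i * (1 / 2) ^ k + 4 * (1 / 2) ^ k ≤ c) :
    InH (bump (a + i * (1 / 2) ^ k) ((1 / 2) ^ k) c) := by
  have hε : (0 : ℝ) < (1 / 2) ^ k := by positivity
  have hi' : -1 * (1 / 2) ^ k ≤ i * (1 / 2 : ℝ) ^ k := by gcongr; exact_mod_cast hi
  exact bump_inH (ha.add ((isDyadic_intCast i).mul (isDyadic_half_pow k))) hc (by linarith) h1
    (by linarith)

theorem map_eq_one_of_isPowTwoAffineOn (hH : ∀ f, f ∈ H ↔ InH f) (ψ : H →* A) {f : ℝ ≃o ℝ} {M : ℕ}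
    (hM : 2 ≤ M) (hleft : ∀ t ≤ (1 / 2) ^ M, f t = t) (hright : ∀ t, 1 - (1 / 2) ^ M ≤ t → f t = t)
    (hcell : ∀ n : ℕ, n < 2 ^ M →
      IsPowTwoAffineOn f (Icc (n * (1 / 2) ^ M) ((n + 1) * (1 / 2) ^ M)))
    (hf : f ∈ H) : ψ ⟨f, hf⟩ = 1 := by
  choose! k b hkb using hcell
  set K : ℕ := 2 + ∑ n ∈ Finset.range (2 ^ M), (k n).natAbs
  have hη₀ : (0 : ℝ) < (1 / 2) ^ M := by positivity
  have hη₁ : (1 / 2 : ℝ) ^ M ≤ 1 / 4 :=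
    (pow_le_pow_of_le_one (by norm_num) (by norm_num) hM).trans (by norm_num)
  have hKε : 2 ^ K * (1 / 2) ^ (M + K) = (1 / 2 : ℝ) ^ M := by
    rw [pow_add _ M, mul_left_comm, ← mul_pow]; norm_num
  have hε : 4 * (1 / 2 : ℝ) ^ (M + K) ≤ (1 / 2) ^ M := by
    rw [← hKε, show (4 : ℝ) = 2 ^ 2 by norm_num]
    gcongr
    · norm_num
    · exact Nat.le_add_right 2 _
  obtain ⟨n, hn⟩ : ∃ n, 2 ^ M = n + 2 :=
    Nat.exists_eq_add_of_le' ((Nat.pow_le_pow_right two_pos hM).trans' (by norm_num))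
  have hnη : n * (1 / 2 : ℝ) ^ M = 1 - 2 * (1 / 2) ^ M := by
    rw [eq_sub_iff_add_eq, ← add_mul, show (n + 2 : ℝ) = 2 ^ M by exact_mod_cast hn.symm,
      ← mul_pow]
    norm_num
  have hc : IsDyadic (1 - (1 / 2) ^ M * (1 / 2)) := by
    simpa using (isDyadic_intCast 1).sub ((isDyadic_half_pow M).mul isDyadic_half)
  refine map_eq_one_of_affine (a := (1 / 2) ^ M) (ε := (1 / 2) ^ (M + K)) (K := K) (n := n)
    (c := 1 - (1 / 2) ^ M * (1 / 2)) (k := fun i ↦ k (i + 1)) ψ (by positivity)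
    (fun i hi hic ↦ (hH _).2 <|
      bump_grid_inH (isDyadic_half_pow M) hc (by linarith) (by linarith) i hi hic)
    (by linarith) (by rw [hKε]; linarith) hleft
    (fun t ht ↦ hright t (by rw [hKε] at ht; linarith)) (fun i hi ↦ ?_) (fun i hi ↦ ?_) hf
  · have := Finset.single_le_sum (f := fun n ↦ (k n).natAbs) (fun _ _ ↦ Nat.zero_le _)
      (Finset.mem_range.2 (show i + 1 < 2 ^ M by omega))
    omega
  · refine ⟨b (i + 1), fun t ht ↦ hkb (i + 1) (by omega) t ?_⟩
    rw [hKε] at ht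
    push_cast
    exact ⟨by linarith [ht.1], by linarith [ht.2]⟩

theorem map_eq_one_of_hasEndSlope_zero (hH : ∀ f, f ∈ H ↔ InH f) (ψ : H →* A) {f : ℝ ≃o ℝ}
    (hf : f ∈ H) (hslope : HasEndSlope f 0) : ψ ⟨f, hf⟩ = 1 := by
  have hfF := ((hH f).1 hf).1
  obtain ⟨M₀, hM₀⟩ := hfF.exists_forall_isPowTwoAffineOn
  obtain ⟨δ, hδ, h₀, h₁⟩ := hslope
  obtain ⟨M₁, hM₁⟩ := exists_half_pow_lt hδ
  have hle : (1 / 2 : ℝ) ^ (M₀ + M₁ + 2) ≤ δ :=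
    (pow_le_pow_of_le_one (by norm_num) (by norm_num) (by omega)).trans hM₁.le
  refine map_eq_one_of_isPowTwoAffineOn hH ψ (M := M₀ + M₁ + 2) (by omega) (fun t ht ↦ ?_)
    (fun t ht ↦ ?_) (hM₀ _ (by omega)) hf
  · rcases le_or_gt 0 t with ht₀ | ht₀
    · simpa using h₀ t ⟨ht₀, ht.trans hle⟩
    · exact hfF.1 t fun h ↦ ht₀.not_ge h.1
  · rcases le_or_gt t 1 with ht₁ | ht₁
    · simpa using h₁ t ⟨by linarith, ht₁⟩
    · exact hfF.1 t fun h ↦ ht₁.not_ge h.2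

end Abelian

/-! ### Vanishing of the second bounded cohomology -/

theorem IsLabelledGroup.map_eq_one {r : ℤ → ℤˣ} {H G : Subgroup (ℝ ≃o ℝ)}
    (hG : IsLabelledGroup r H G) {A : Type*} [CommGroup A] (ψ : G →* A) (g : G) : ψ g = 1 := by
  suffices G ≤ ψ.ker.map G.subtype by
    obtain ⟨g', hg', hgg'⟩ := this g.2
    obtain rfl : g' = g := Subtype.ext hgg'
    exact hg'
  refine hG.le_of_forall_hasEndSlope_zero fun j hj ν hν hslope g hg ↦ ?_
  choose copy hmem hcopy using hG.exists_copy j hj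
  let ψ' : H →* A := .mk' (fun ν ↦ ψ ⟨copy ν ν.2, hmem ν ν.2⟩) fun x y ↦ by
    rw [← map_mul]
    exact congrArg ψ (Subtype.ext ((hcopy _ (x * y).2).unique hj
      ((hcopy _ x.2).mul (hcopy _ y.2) ((hG.mem_iff _).1 y.2).mapsTo_Icc)))
  obtain rfl := hg.unique hj (hcopy ν hν)
  exact ⟨⟨_, hmem ν hν⟩, map_eq_one_of_hasEndSlope_zero hG.mem_iff ψ' hν hslope, rfl⟩

theorem vanishing_second_bounded_cohomology_int_general {ι : Type*} (ρ : ℤ → Letter)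
    (hρ : IsQuasiPeriodic ρ) (H : Subgroup (ℝ ≃o ℝ)) (hH : ∀ f : ℝ ≃o ℝ, f ∈ H ↔ InH f)
    (ν ζ χ : ι → ℝ ≃o ℝ) (hgen : Subgroup.closure (range ν) = H)
    (hζ : ∀ i, IsZeta ρ (ν i) (ζ i)) (hχ : ∀ i, IsChi ρ (ν i) (χ i)) (G : Subgroup (ℝ ≃o ℝ))
    (hG : G = Subgroup.closure (range ζ ∪ range χ)) (ω : G → G → ℤ)
    (hω : IsBounded2CocycleInt ω) : IsCoboundaryOfBoundedInt ω := by
  have hgroup := hρ.isLabelledGroup hH hgen hζ hχ hG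
  have hacyclic : Is2BoundedlyAcyclic G :=
    is2BoundedlyAcyclic_of_forall_isAdditivePair fun _ _ _ hτ ↦ hgroup.isAdditivePair hτ
  exact hacyclic.isCoboundaryOfBoundedInt hgroup.map_eq_one hω

/-- For a quasi-periodic labelling `ρ`, the group `G_ρ` has vanishing
second bounded cohomology with trivial integral coefficients. -/
theorem vanishing_second_bounded_cohomology_int
    (ρ : ℤ → Letter) (hρ : IsQuasiPeriodic ρ)
    (H : Subgroup (ℝ ≃o ℝ)) (hH : ∀ f : ℝ ≃o ℝ, f ∈ H ↔ InH f)
    (ν₁ ν₂ ν₃ : ℝ ≃o ℝ) (hgen : Subgroup.closure {ν₁, ν₂, ν₃} = H)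
    (ζ₁ ζ₂ ζ₃ χ₁ χ₂ χ₃ : ℝ ≃o ℝ)
    (hζ₁ : IsZeta ρ ν₁ ζ₁) (hζ₂ : IsZeta ρ ν₂ ζ₂) (hζ₃ : IsZeta ρ ν₃ ζ₃)
    (hχ₁ : IsChi ρ ν₁ χ₁) (hχ₂ : IsChi ρ ν₂ χ₂) (hχ₃ : IsChi ρ ν₃ χ₃)
    (G : Subgroup (ℝ ≃o ℝ))
    (hG : G = Subgroup.closure {ζ₁, ζ₂, ζ₃, χ₁, χ₂, χ₃})
    (ω : ↥G → ↥G → ℤ) (hω : IsBounded2CocycleInt ω) :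
    IsCoboundaryOfBoundedInt ω := by
  refine vanishing_second_bounded_cohomology_int_general ρ hρ H hH ![ν₁, ν₂, ν₃] ![ζ₁, ζ₂, ζ₃]
    ![χ₁, χ₂, χ₃] ?_ ?_ ?_ G ?_ ω hω
  · simpa only [Matrix.range_cons, Matrix.range_empty, union_empty, singleton_union] using hgen
  · simpa [Fin.forall_fin_succ] using ⟨hζ₁, hζ₂, hζ₃⟩
  · simpa [Fin.forall_fin_succ] using ⟨hχ₁, hχ₂, hχ₃⟩
  · simpa only [Matrix.range_cons, Matrix.range_empty, union_empty, singleton_union,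
      insert_union] using hG
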